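/- arXiv:1203.3995 — 2 statements merged into one kernel-verified Lean document; each statement's English description precedes it below -/
import Mathlib

section
/- Let n ≥ 2 and 1 < m < n. Let u : ℂⁿ → ℝ be a C² function which is globally bounded, has globally bounded gradient (sup_{ℂⁿ} ‖∇u‖ < ∞), is m-subharmonic, and is maximal in the sense that σ_m(λ(H_u(z))) = 0 for every z ∈ ℂⁿ. Then u is constant. -/
open MeasureTheory Metric Complex

noncomputable section

/-- `σ_k(λ)`, the `k`-th elementary symmetric polynomial of `λ ∈ ℝⁿ`. -/
def esymm (n k : ℕ) (lam : Fin n → ℝ) : ℝ :=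
  ∑ s ∈ Finset.univ.powersetCard k, ∏ i ∈ s, lam i

/-- The Gårding cone `Γ_m = {λ ∈ ℝⁿ : σ_1(λ) > 0, …, σ_m(λ) > 0}`. -/
def gardingCone (n m : ℕ) : Set (Fin n → ℝ) :=
  {lam | ∀ k, 1 ≤ k → k ≤ m → 0 < esymm n k lam}

/-- The `j`-th standard basis vector of `ℂⁿ`. -/
def ebasis (n : ℕ) (j : Fin n) : EuclideanSpace ℂ (Fin n) :=
  EuclideanSpace.single j 1

/-- The complex Hessian matrix `(H_u(z))_{jk} = ∂²u/∂z_j∂z̄_k(z)`, expressed through real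
second derivatives: `∂²u/∂z_j∂z̄_k = ¼[(u_{x_jx_k} + u_{y_jy_k}) + i(u_{x_jy_k} - u_{y_jx_k})]`. -/
def complexHessian {n : ℕ} (u : EuclideanSpace ℂ (Fin n) → ℝ)
    (z : EuclideanSpace ℂ (Fin n)) : Matrix (Fin n) (Fin n) ℂ :=
  fun j k =>
    (1 / 4 : ℂ) *
      (((iteratedFDeriv ℝ 2 u z ![ebasis n j, ebasis n k]
          + iteratedFDeriv ℝ 2 u z ![Complex.I • ebasis n j, Complex.I • ebasis n k] : ℝ) : ℂ)
        + Complex.I *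
          ((iteratedFDeriv ℝ 2 u z ![ebasis n j, Complex.I • ebasis n k]
            - iteratedFDeriv ℝ 2 u z ![Complex.I • ebasis n j, ebasis n k] : ℝ) : ℂ))

set_option linter.unusedSectionVars false

section Part1

/-! ## Elementary symmetric sums over finsets -/

/-- elementary symmetric sum over a finset -/
def SS {ι : Type*} (s : Finset ι) (k : ℕ) (x : ι → ℝ) : ℝ :=
  ∑ t ∈ s.powersetCard k, ∏ i ∈ t, x i

section sym
variable {ι : Type*} [DecidableEq ι]

lemma SS_zero (s : Finset ι) (x : ι → ℝ) : SS s 0 x = 1 := by simp [SS]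

lemma SS_one (s : Finset ι) (x : ι → ℝ) : SS s 1 x = ∑ i ∈ s, x i := by
  simp [SS, Finset.powersetCard_one]

lemma SS_empty (k : ℕ) (x : ι → ℝ) : SS (∅ : Finset ι) (k+1) x = 0 := by
  unfold SS
  rw [Finset.powersetCard_eq_empty.2 (by simp), Finset.sum_empty]

lemma SS_insert {s : Finset ι} {i : ι} (hi : i ∉ s) (k : ℕ) (x : ι → ℝ) :
    SS (insert i s) (k+1) x = SS s (k+1) x + x i * SS s k x := by
  unfold SS
  rw [Finset.powersetCard_succ_insert hi, Finset.sum_union]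
  · congr 1
    rw [Finset.sum_image, Finset.mul_sum]
    · refine Finset.sum_congr rfl fun t ht => ?_
      rw [Finset.prod_insert]
      intro h; exact hi ((Finset.mem_powersetCard.1 ht).1 h)
    · intro a ha b hb hab
      have ha' : i ∉ a := fun h => hi ((Finset.mem_powersetCard.1 ha).1 h)
      have hb' : i ∉ b := fun h => hi ((Finset.mem_powersetCard.1 hb).1 h)
      rw [← Finset.erase_insert ha', ← Finset.erase_insert hb', hab]
  · rw [Finset.disjoint_left]
    intro t ht ht2
    obtain ⟨t', -, rfl⟩ := Finset.mem_image.1 ht2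
    exact hi ((Finset.mem_powersetCard.1 ht).1 (Finset.mem_insert_self _ _))

lemma SS_erase {s : Finset ι} {i : ι} (hi : i ∈ s) (k : ℕ) (x : ι → ℝ) :
    SS s (k+1) x = SS (s.erase i) (k+1) x + x i * SS (s.erase i) k x := by
  conv_lhs => rw [← Finset.insert_erase hi]
  exact SS_insert (Finset.notMem_erase i s) k x

lemma SS_euler (s : Finset ι) (k : ℕ) (x : ι → ℝ) :
    ((k:ℝ)+1) * SS s (k+1) x = ∑ i ∈ s, x i * SS (s.erase i) k x := by
  induction s using Finset.induction_on generalizing k with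
  | empty => simp [SS_empty]
  | insert a s ha ih =>
    rw [Finset.sum_insert ha, Finset.erase_insert ha, SS_insert ha]
    have hne : ∀ i ∈ s, (insert a s).erase i = insert a (s.erase i) := by
      intro i hi
      rw [Finset.erase_insert_of_ne]
      rintro rfl; exact ha hi
    cases k with
    | zero =>
      have := ih 0
      simp only [SS_zero] at this ⊢
      push_cast at this ⊢
      linarith
    | succ k =>
      have h1 : ∑ i ∈ s, x i * SS ((insert a s).erase i) (k+1) x
          = ∑ i ∈ s, x i * SS (s.erase i) (k+1) x + x a * ∑ i ∈ s, x i * SS (s.erase i) k x := by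
        rw [Finset.mul_sum, ← Finset.sum_add_distrib]
        refine Finset.sum_congr rfl fun i hi => ?_
        rw [hne i hi, SS_insert (fun h => ha (Finset.mem_of_mem_erase h))]
        ring
      rw [h1, ← ih k, ← ih (k+1)]
      push_cast
      ring

open Polynomial in
lemma splits_derivative_real (p : ℝ[X]) (hp : p.Splits) : (derivative p).Splits := by
  by_cases h0 : derivative p = 0
  · rw [h0]; exact Splits.zero
  rw [splits_iff_card_roots] at hp ⊢
  have h1 := card_roots_le_derivative p
  have h2 := card_roots' (derivative p)
  have h3 := natDegree_derivative_lt (p := p) (by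
    intro h; apply h0; exact derivative_of_natDegree_zero h)
  omega

open Polynomial in
lemma laguerre_prod {s : Multiset ℝ} (t : ℝ) :
    0 ≤ (derivative (s.map (fun a => X - C a)).prod).eval t ^ 2
      - ((s.map (fun a => X - C a)).prod).eval t *
        (derivative (derivative (s.map (fun a => X - C a)).prod)).eval t := by
  induction s using Multiset.induction_on with
  | empty => simp
  | cons a s ih =>
    rw [Multiset.map_cons, Multiset.prod_cons]
    set q := (s.map (fun a => X - C a)).prod
    simp only [derivative_mul, derivative_sub, derivative_X, derivative_C, derivative_add,
      eval_add, eval_mul, eval_sub, eval_X, eval_C, eval_one, eval_zero, sub_zero, one_mul]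
    nlinarith [mul_nonneg (sq_nonneg (t - a)) ih, sq_nonneg (eval t q)]

open Polynomial in
lemma laguerre (p : ℝ[X]) (hp : p.Splits) (t : ℝ) :
    p.eval t * (derivative (derivative p)).eval t ≤ (derivative p).eval t ^ 2 := by
  have h := hp.eq_prod_roots
  have := laguerre_prod (s := p.roots) t
  rw [h]
  simp only [derivative_C_mul, eval_mul, eval_C]
  nlinarith [mul_nonneg (sq_nonneg p.leadingCoeff) this]

open Polynomial in
/-- the generating polynomial -/
def genP (s : Finset ι) (x : ι → ℝ) : ℝ[X] := ∏ i ∈ s, (1 + C (x i) * X)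

open Polynomial in
lemma genP_coeff (s : Finset ι) (x : ι → ℝ) (k : ℕ) : (genP s x).coeff k = SS s k x := by
  induction s using Finset.induction_on generalizing k with
  | empty =>
    cases k with
    | zero => simp [genP, SS]
    | succ k => rw [SS_empty]; simp [genP, coeff_one]
  | insert a s ha ih =>
    have : genP (insert a s) x = genP s x + C (x a) * (X * genP s x) := by
      unfold genP; rw [Finset.prod_insert ha]; ring
    rw [this, coeff_add, coeff_C_mul]
    cases k with
    | zero => simp [ih, SS_zero]
    | succ k => rw [coeff_X_mul, ih, ih, SS_insert ha]

open Polynomial in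
lemma genP_splits (s : Finset ι) (x : ι → ℝ) : (genP s x).Splits := by
  unfold genP
  refine Splits.prod fun i _ => ?_
  apply Splits.of_natDegree_le_one
  compute_degree

open Polynomial in
lemma newton_weak (s : Finset ι) (x : ι → ℝ) (k : ℕ) :
    SS s k x * SS s (k+2) x ≤ SS s (k+1) x ^ 2 := by
  have hs : ∀ k, (derivative^[k] (genP s x)).Splits := by
    intro k
    induction k with
    | zero => exact genP_splits s x
    | succ k ih => rw [Function.iterate_succ_apply']; exact splits_derivative_real _ ih
  have h := laguerre _ (hs k) 0
  rw [← Function.iterate_succ_apply' derivative, ← Function.iterate_succ_apply' derivative] at h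
  simp only [← coeff_zero_eq_eval_zero, coeff_iterate_derivative, zero_add, genP_coeff,
    Nat.descFactorial_self, nsmul_eq_mul, Nat.factorial_succ, Nat.cast_mul] at h
  have hk : (0:ℝ) < (k.factorial : ℝ) := by positivity
  push_cast at h
  by_cases hneg : SS s k x * SS s (k+2) x ≤ 0
  · exact hneg.trans (sq_nonneg _)
  push Not at hneg
  have h2 : ((k:ℝ)+1) * ((k.factorial:ℝ)^2 * ((k:ℝ)+2) * (SS s k x * SS s (k+2) x)) ≤
      ((k:ℝ)+1) * ((k.factorial:ℝ)^2 * ((k:ℝ)+1) * SS s (k+1) x ^ 2) := by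
    have e1 : k + 1 + 1 = k + 2 := rfl
    simp only [Nat.succ_eq_add_one, e1] at h
    push_cast at h
    nlinarith [h]
  have h3 := le_of_mul_le_mul_left h2 (by positivity)
  have h4 : (k.factorial:ℝ)^2 * ((k:ℝ)+1) * (SS s k x * SS s (k+2) x) ≤
      (k.factorial:ℝ)^2 * ((k:ℝ)+1) * SS s (k+1) x ^ 2 := by
    have : (0:ℝ) < (k.factorial:ℝ)^2 * (SS s k x * SS s (k+2) x) := by positivity
    nlinarith
  exact le_of_mul_le_mul_left h4 (by positivity)

/-- positivity of the first `m` symmetric sums -/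
def GG (s : Finset ι) (m : ℕ) (x : ι → ℝ) : Prop := ∀ k ≤ m, 0 < SS s k x

lemma GG_erase {s : Finset ι} {x : ι → ℝ} {i : ι} (hi : i ∈ s) (m : ℕ) (h : GG s (m+1) x) :
    GG (s.erase i) m x := by
  induction m with
  | zero => intro k hk; obtain rfl : k = 0 := by omega
            simp [SS_zero]
  | succ m ih =>
    have ih' := ih (fun k hk => h k (by omega))
    intro k hk
    rcases Nat.lt_or_ge k (m+1) with hlt | hge
    · exact ih' k (by omega)
    obtain rfl : k = m+1 := by omega
    by_contra hneg
    push Not at hneg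
    have h1 := h (m+1) (by omega)
    have h2 := h (m+2) (by omega)
    have h0 := ih' m le_rfl
    rw [SS_erase hi] at h1 h2
    have hN := newton_weak (s.erase i) x m
    set s0 := SS (s.erase i) m x
    set s1 := SS (s.erase i) (m+1) x
    set s2 := SS (s.erase i) (m+2) x
    have hxi : 0 < x i := by
      by_contra hx
      push Not at hx
      nlinarith
    nlinarith [mul_pos h0 h2, mul_nonneg (neg_nonneg.2 hneg) h1.le]

lemma sq_div_super {a b p q Y : ℝ} (hp : 0 < p) (hq : 0 < q) (hY : p + q ≤ Y) :
    (a+b)^2 / Y ≤ a^2/p + b^2/q := by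
  have hpq : 0 < p + q := by positivity
  calc (a+b)^2 / Y ≤ (a+b)^2/(p+q) := by gcongr
    _ ≤ a^2/p + b^2/q := by
      rw [div_add_div _ _ hp.ne' hq.ne', div_le_div_iff₀ hpq (by positivity)]
      nlinarith [sq_nonneg (a*q - b*p)]

lemma quot_formula {s : Finset ι} {x : ι → ℝ} (k : ℕ) (h : GG s (k+1) x) :
    ((k:ℝ)+2) * (SS s (k+2) x / SS s (k+1) x)
      = ∑ i ∈ s, (x i - x i ^2 / (x i + SS (s.erase i) (k+1) x / SS (s.erase i) k x)) := by
  have := SS_euler s (k+1) x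
  push_cast at this
  have e : ((k:ℝ)+2) * SS s (k+2) x = ∑ i ∈ s, x i * SS (s.erase i) (k+1) x := by
    rw [← this]; ring
  rw [← mul_div_assoc, e, Finset.sum_div]
  refine Finset.sum_congr rfl fun i hi => ?_
  have h0 := GG_erase hi k h k le_rfl
  have h1 := h (k+1) le_rfl
  have h2 := SS_erase hi k x
  have h3 : x i + SS (s.erase i) (k+1) x / SS (s.erase i) k x
      = SS s (k+1) x / SS (s.erase i) k x := by
    rw [h2]; field_simp; ring
  rw [h3]
  have h4 : SS (s.erase i) (k+1) x = SS s (k+1) x - x i * SS (s.erase i) k x := by linarith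
  rw [h4]
  field_simp

theorem GG_super (k : ℕ) (s : Finset ι) (x y : ι → ℝ) (hx : GG s k x) (hy : GG s k y) :
    GG s k (x+y) ∧ SS s (k+1) x / SS s k x + SS s (k+1) y / SS s k y
      ≤ SS s (k+1) (x+y) / SS s k (x+y) := by
  induction k generalizing s with
  | zero =>
    refine ⟨fun k hk => ?_, ?_⟩
    · obtain rfl : k = 0 := by omega
      simp [SS_zero]
    · simp [SS_zero, SS_one, Finset.sum_add_distrib]
  | succ k ih =>
    have hx' : GG s k x := fun j hj => hx j (by omega)
    have hy' : GG s k y := fun j hj => hy j (by omega)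
    obtain ⟨i1, i2⟩ := ih s hx' hy'
    have hxy : GG s (k+1) (x+y) := by
      intro j hj
      rcases Nat.lt_or_ge j (k+1) with hlt | hge
      · exact i1 j (by omega)
      obtain rfl : j = k+1 := by omega
      have p0 := i1 k le_rfl
      have : 0 < SS s (k+1) (x+y) / SS s k (x+y) :=
        lt_of_lt_of_le (add_pos (div_pos (hx _ le_rfl) (hx' _ le_rfl))
          (div_pos (hy _ le_rfl) (hy' _ le_rfl))) i2
      exact (div_pos_iff_of_pos_right p0).1 this
    refine ⟨hxy, ?_⟩
    have hpos : (0:ℝ) < (k:ℝ)+2 := by positivity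
    refine le_of_mul_le_mul_left ?_ hpos
    rw [mul_add, quot_formula k hx, quot_formula k hy, quot_formula k hxy,
      ← Finset.sum_add_distrib]
    refine Finset.sum_le_sum fun i hi => ?_
    have hxe := GG_erase hi k hx
    have hye := GG_erase hi k hy
    have key := (ih (s.erase i) hxe hye).2
    have pos : ∀ z : ι → ℝ, GG s (k+1) z →
        0 < z i + SS (s.erase i) (k+1) z / SS (s.erase i) k z := by
      intro z hz
      have h0 := GG_erase hi k hz k le_rfl
      have h1 := hz (k+1) le_rfl
      rw [SS_erase hi] at h1
      have : z i + SS (s.erase i) (k+1) z / SS (s.erase i) k z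
        = (SS (s.erase i) (k+1) z + z i * SS (s.erase i) k z)/ SS (s.erase i) k z := by
        field_simp; ring
      rw [this]; positivity
    have := sq_div_super (a := x i) (b := y i) (pos x hx) (pos y hy)
      (Y := (x+y) i + SS (s.erase i) (k+1) (x+y) / SS (s.erase i) k (x+y))
      (by simp only [Pi.add_apply]; linarith)
    simp only [Pi.add_apply] at this ⊢
    linarith

end sym

/-! ## The Garding cone in `ℝⁿ` -/

lemma SS_univ (n k : ℕ) (x : Fin n → ℝ) : SS Finset.univ k x = esymm n k x := rfl

lemma mem_gardingCone_iff {n m : ℕ} {x : Fin n → ℝ} :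
    x ∈ gardingCone n m ↔ GG Finset.univ m x := by
  constructor
  · intro h k hk
    rcases Nat.eq_zero_or_pos k with rfl | hpos
    · simp [SS_zero]
    · exact h k hpos hk
  · intro h k _ hk
    exact h k hk

lemma gc_add {n m : ℕ} {x y : Fin n → ℝ} (hx : x ∈ gardingCone n m) (hy : y ∈ gardingCone n m) :
    x + y ∈ gardingCone n m := by
  rw [mem_gardingCone_iff] at *
  exact (GG_super m _ x y hx hy).1

lemma esymm_smul (n k : ℕ) (c : ℝ) (x : Fin n → ℝ) : esymm n k (c • x) = c^k * esymm n k x := by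
  unfold esymm
  rw [Finset.mul_sum]
  refine Finset.sum_congr rfl fun t ht => ?_
  simp [Finset.prod_mul_distrib, (Finset.mem_powersetCard.1 ht).2]

lemma gc_smul {n m : ℕ} {x : Fin n → ℝ} (hx : x ∈ gardingCone n m) {c : ℝ} (hc : 0 < c) :
    c • x ∈ gardingCone n m := by
  intro k h1 h2
  rw [esymm_smul]
  exact mul_pos (pow_pos hc k) (hx k h1 h2)

lemma esymm_continuous (n k : ℕ) : Continuous (esymm n k) := by
  unfold esymm
  fun_prop

lemma gc_isOpen (n m : ℕ) : IsOpen (gardingCone n m) := by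
  have : gardingCone n m = ⋂ k ∈ Finset.Icc 1 m, {x | 0 < esymm n k x} := by
    ext x; simp [gardingCone]
  rw [this]
  exact isOpen_biInter_finset fun k _ => isOpen_lt continuous_const (esymm_continuous n k)

lemma gc_convex (n m : ℕ) : Convex ℝ (gardingCone n m) := by
  intro x hx y hy a b ha hb hab
  rcases ha.eq_or_lt with rfl | ha
  · obtain rfl : b = 1 := by linarith
    simpa using hy
  rcases hb.eq_or_lt with rfl | hb
  · obtain rfl : a = 1 := by linarith
    simpa using hx
  exact gc_add (gc_smul hx ha) (gc_smul hy hb)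

open Pointwise in
lemma gc_add_closure {n m : ℕ} {x y : Fin n → ℝ} (hx : x ∈ gardingCone n m)
    (hy : y ∈ closure (gardingCone n m)) : x + y ∈ gardingCone n m := by
  have : x + y ∈ gardingCone n m + closure (gardingCone n m) := Set.add_mem_add hx hy
  rw [(gc_isOpen n m).add_closure] at this
  obtain ⟨a, ha, b, hb, hab⟩ := Set.mem_add.1 this
  rw [← hab]; exact gc_add ha hb

/-- nonnegative vectors with at least `k` nonzero entries -/
lemma esymm_pos_of_nonneg {n k : ℕ} {x : Fin n → ℝ} (hx : ∀ i, 0 ≤ x i)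
    (hc : k ≤ (Finset.univ.filter fun i => x i ≠ 0).card) : 0 < esymm n k x := by
  obtain ⟨t, ht, htc⟩ := Finset.exists_subset_card_eq hc
  refine Finset.sum_pos' (fun t _ => Finset.prod_nonneg fun i _ => hx i) ⟨t, ?_, ?_⟩
  · simp [Finset.mem_powersetCard, htc]
  · refine Finset.prod_pos fun i hi => lt_of_le_of_ne (hx i) ?_
    exact (Finset.mem_filter.1 (ht hi)).2.symm

lemma esymm_perm {n k : ℕ} (x : Fin n → ℝ) (e : Equiv.Perm (Fin n)) :
    esymm n k (x ∘ e) = esymm n k x := by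
  unfold esymm
  refine Finset.sum_bij' (fun t _ => t.map e.toEmbedding) (fun t _ => t.map e.symm.toEmbedding)
    ?_ ?_ ?_ ?_ ?_
  · intro t ht; simpa [Finset.mem_powersetCard] using ht
  · intro t ht; simpa [Finset.mem_powersetCard] using ht
  · intro t ht; simp [Finset.map_map]
  · intro t ht; simp [Finset.map_map]
  · intro t ht; simp [Finset.prod_map]

/-- few nonzero entries and nonnegative symmetric functions force nonnegative entries -/
lemma nonneg_of_esymm {n m : ℕ} {x : Fin n → ℝ} (hx : ∀ k ≤ m, 0 ≤ esymm n k x)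
    (hc : (Finset.univ.filter fun i => x i ≠ 0).card ≤ m) (i : Fin n) : 0 ≤ x i := by
  by_contra hneg
  push Not at hneg
  have hall : ∀ k, 0 ≤ esymm n k x := by
    intro k
    rcases le_or_gt k m with hk | hk
    · exact hx k hk
    · apply le_of_eq
      symm
      refine Finset.sum_eq_zero fun t ht => ?_
      by_contra hne
      have : t ⊆ Finset.univ.filter fun i => x i ≠ 0 := by
        intro j hj
        simp only [Finset.mem_filter, Finset.mem_univ, true_and]
        exact (Finset.prod_ne_zero_iff.1 hne) j hj
      have := Finset.card_le_card this
      rw [(Finset.mem_powersetCard.1 ht).2] at this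
      omega
  have h0 : (genP Finset.univ x).eval (-1 / x i) = 0 := by
    unfold genP
    rw [Polynomial.eval_prod]
    refine Finset.prod_eq_zero (Finset.mem_univ i) ?_
    have := hneg.ne
    simp only [Polynomial.eval_add, Polynomial.eval_one, Polynomial.eval_mul, Polynomial.eval_C,
      Polynomial.eval_X]
    field_simp
    ring
  rw [Polynomial.eval_eq_sum_range, Finset.sum_range_succ'] at h0
  have ht : 0 ≤ -1 / x i := div_nonneg_of_nonpos (by norm_num) hneg.le
  have : 0 ≤ ∑ k ∈ Finset.range (genP Finset.univ x).natDegree,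
      (genP Finset.univ x).coeff (k+1) * (-1 / x i)^(k+1) := by
    refine Finset.sum_nonneg fun k _ => mul_nonneg ?_ (pow_nonneg ht _)
    rw [genP_coeff]; exact hall _
  rw [genP_coeff, SS_zero] at h0
  simp at h0
  linarith

end Part1

section Part2

/-! ## Hermitian matrices -/

/-- symmetric functions of the eigenvalues, through the characteristic polynomial -/
def sig {n : ℕ} (k : ℕ) (A : Matrix (Fin n) (Fin n) ℂ) : ℝ :=
  ((-1)^k * A.charpoly.coeff (n-k)).re

open Polynomial in
lemma sig_of_charpoly {n k : ℕ} (hk : k ≤ n) {A : Matrix (Fin n) (Fin n) ℂ} {d : Fin n → ℝ}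
    (h : A.charpoly = ∏ i, (X - C (d i : ℂ))) : sig k A = esymm n k d := by
  unfold sig
  have h1 : (∏ i, (X - C (d i : ℂ))) = ∏ i, (X + C (-(d i : ℂ))) := by
    simp [sub_eq_add_neg]
  rw [h, h1, Finset.prod_X_add_C_coeff _ _ (by simp)]
  simp only [Finset.card_univ, Fintype.card_fin, Nat.sub_sub_self hk]
  have h2 : ∑ t ∈ Finset.powersetCard k (Finset.univ : Finset (Fin n)), ∏ i ∈ t, (-(d i : ℂ))
      = (-1)^k * ((esymm n k d : ℝ) : ℂ) := by
    unfold esymm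
    push_cast
    rw [Finset.mul_sum]
    refine Finset.sum_congr rfl fun t ht => ?_
    rw [Finset.prod_neg, (Finset.mem_powersetCard.1 ht).2]
  rw [h2, ← mul_assoc, ← mul_pow]
  simp

lemma sig_eq {n k : ℕ} (hk : k ≤ n) {A : Matrix (Fin n) (Fin n) ℂ} (hA : A.IsHermitian) :
    sig k A = esymm n k hA.eigenvalues := sig_of_charpoly hk hA.charpoly_eq

lemma sig_transpose {n k : ℕ} (A : Matrix (Fin n) (Fin n) ℂ) :
    sig k A.transpose = sig k A := by
  unfold sig; rw [Matrix.charpoly_transpose]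

lemma sig_continuous {n k : ℕ} : Continuous (sig (n := n) k) := by
  unfold sig
  refine Complex.continuous_re.comp (continuous_const.mul ?_)
  have : ∀ A : Matrix (Fin n) (Fin n) ℂ, A.charpoly.coeff (n-k) =
      MvPolynomial.eval (fun p : Fin n × Fin n => A p.1 p.2)
        ((Matrix.charpoly.univ ℂ (Fin n)).coeff (n-k)) := by
    intro A
    have := Matrix.charpoly.univ_coeff_eval₂Hom (R := ℂ) (Fin n) (RingHom.id ℂ)
      (fun p : Fin n × Fin n => A p.1 p.2) (n-k)
    rw [MvPolynomial.coe_eval₂Hom] at this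
    rw [MvPolynomial.eval, MvPolynomial.coe_eval₂Hom, this]
    rfl
  simp_rw [this]
  refine (MvPolynomial.continuous_eval _).comp ?_
  fun_prop

lemma sig_add_scalar {n k : ℕ} (hk : k ≤ n) {A : Matrix (Fin n) (Fin n) ℂ} (hA : A.IsHermitian)
    (t : ℝ) : sig k (A + (t:ℂ) • (1 : Matrix (Fin n) (Fin n) ℂ))
      = esymm n k (hA.eigenvalues + fun _ => t) := by
  apply sig_of_charpoly hk
  have h := hA.spectral_theorem
  rw [Unitary.conjStarAlgAut_apply] at h
  set U := hA.eigenvectorUnitary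
  have h1 : A + (t:ℂ) • (1 : Matrix (Fin n) (Fin n) ℂ) =
      (U : Matrix (Fin n) (Fin n) ℂ) * (Matrix.diagonal (fun i => ((hA.eigenvalues i + t : ℝ):ℂ)))
        * (star U : Matrix (Fin n) (Fin n) ℂ) := by
    have h2 : Matrix.diagonal (fun i => ((hA.eigenvalues i + t : ℝ):ℂ)) =
        Matrix.diagonal (RCLike.ofReal ∘ hA.eigenvalues) +
          (t:ℂ) • (1 : Matrix (Fin n) (Fin n) ℂ) := by
      ext i j
      by_cases hij : i = j
      · subst hij; simp
      · simp [hij]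
    rw [h2, mul_add, add_mul, ← h]
    simp
  rw [h1, Matrix.charpoly_mul_comm, ← mul_assoc]
  simp [Matrix.charpoly_diagonal]

/-- Schur-Horn via Birkhoff -/
lemma diag_mem {n m : ℕ} {A : Matrix (Fin n) (Fin n) ℂ} (hA : A.IsHermitian)
    (h : hA.eigenvalues ∈ gardingCone n m)
    (b : OrthonormalBasis (Fin n) ℂ (EuclideanSpace ℂ (Fin n))) :
    (fun i => (star (b i).ofLp ⬝ᵥ A.mulVec (b i).ofLp).re) ∈ gardingCone n m := by
  set v := hA.eigenvectorBasis
  let M : Matrix (Fin n) (Fin n) ℝ := fun i l => ‖inner ℂ (v l) (b i)‖^2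
  have hM : M ∈ doublyStochastic ℝ (Fin n) := by
    rw [mem_doublyStochastic_iff_sum]
    refine ⟨fun i j => by positivity, fun i => ?_, fun l => ?_⟩
    · simp only [M]
      rw [v.sum_sq_norm_inner_right]; simp
    · simp only [M]
      rw [b.sum_sq_norm_inner_left]; simp
  have hq : (fun i => (star (b i).ofLp ⬝ᵥ A.mulVec (b i).ofLp).re) = M.mulVec hA.eigenvalues := by
    ext i
    have e1 : star (b i).ofLp ⬝ᵥ A.mulVec (b i).ofLp
        = inner ℂ (b i) (Matrix.toEuclideanLin A (b i)) := by
      rw [EuclideanSpace.inner_eq_star_dotProduct, dotProduct_comm]; rfl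
    rw [e1, ← v.sum_inner_mul_inner]
    simp only [Matrix.mulVec, dotProduct, M, Complex.re_sum]
    refine Finset.sum_congr rfl fun l _ => ?_
    have hs := Matrix.isSymmetric_toEuclideanLin_iff.mpr hA
    rw [← hs (v l) (b i)]
    have e2 : Matrix.toEuclideanLin A (v l) = ((hA.eigenvalues l : ℝ):ℂ) • v l := by
      apply (WithLp.equiv 2 _).injective
      have := hA.mulVec_eigenvectorBasis l
      simp only [Matrix.toLpLin_apply]
      ext j
      have := congrFun this j
      simpa using this
    rw [e2, inner_smul_left]
    have e3 : inner ℂ (b i) (v l) = (starRingEnd ℂ) (inner ℂ (v l) (b i)) := by simp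
    rw [e3]
    have e4 : (starRingEnd ℂ) (inner ℂ (v l) (b i)) *
        ((starRingEnd ℂ) ((hA.eigenvalues l : ℝ):ℂ) * inner ℂ (v l) (b i))
        = (((‖inner ℂ (v l) (b i)‖^2 * hA.eigenvalues l : ℝ)) : ℂ) := by
      push_cast
      rw [← Complex.conj_mul']
      simp
      ring
    rw [e4, Complex.ofReal_re]
  rw [hq]
  obtain ⟨w, hw0, hw1, hw⟩ := exists_eq_sum_perm_of_mem_doublyStochastic hM
  have : M.mulVec hA.eigenvalues = ∑ σ : Equiv.Perm (Fin n), w σ • (hA.eigenvalues ∘ σ) := by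
    rw [← hw, Matrix.sum_mulVec]
    refine Finset.sum_congr rfl fun σ _ => ?_
    rw [Matrix.smul_mulVec]
    congr 1
    exact Matrix.permMatrix_mulVec _
  rw [this]
  refine (gc_convex n m).sum_mem (fun σ _ => hw0 σ) hw1 fun σ _ => ?_
  intro k h1 h2
  rw [esymm_perm]
  exact h k h1 h2

lemma sig_add_pos {n m : ℕ} (hmn : m ≤ n) {A B : Matrix (Fin n) (Fin n) ℂ}
    (hA : A.IsHermitian) (hB : B.IsHermitian)
    (h1 : ∀ k, 1 ≤ k → k ≤ m → 0 < sig k A) (h2 : ∀ k, 1 ≤ k → k ≤ m → 0 < sig k B) :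
    ∀ k, 1 ≤ k → k ≤ m → 0 < sig k (A+B) := by
  have hA' : hA.eigenvalues ∈ gardingCone n m := fun k a b => by
    rw [← sig_eq (b.trans hmn)]; exact h1 k a b
  have hB' : hB.eigenvalues ∈ gardingCone n m := fun k a b => by
    rw [← sig_eq (b.trans hmn)]; exact h2 k a b
  intro k a b
  rw [sig_eq (b.trans hmn) (hA.add hB)]
  have := gc_add (diag_mem hA hA' (hA.add hB).eigenvectorBasis)
    (diag_mem hB hB' (hA.add hB).eigenvectorBasis)
  have e : (hA.add hB).eigenvalues = (fun i => (star ((hA.add hB).eigenvectorBasis i).ofLp ⬝ᵥ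
      A.mulVec ((hA.add hB).eigenvectorBasis i).ofLp).re) +
      (fun i => (star ((hA.add hB).eigenvectorBasis i).ofLp ⬝ᵥ
      B.mulVec ((hA.add hB).eigenvectorBasis i).ofLp).re) := by
    ext i
    rw [(hA.add hB).eigenvalues_eq]
    simp [Matrix.add_mulVec]
  rw [e]
  exact this k a b

lemma sig_smul {n k : ℕ} (hk : k ≤ n) {A : Matrix (Fin n) (Fin n) ℂ} (hA : A.IsHermitian) (c : ℝ) :
    sig k ((c:ℂ) • A) = c^k * sig k A := by
  rw [sig_eq hk hA, ← esymm_smul]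
  apply sig_of_charpoly hk
  have h := hA.spectral_theorem
  rw [Unitary.conjStarAlgAut_apply] at h
  set U := hA.eigenvectorUnitary
  have h1 : (c:ℂ) • A = (U : Matrix (Fin n) (Fin n) ℂ) *
      (Matrix.diagonal (fun i => (((c • hA.eigenvalues) i : ℝ):ℂ)))
        * (star U : Matrix (Fin n) (Fin n) ℂ) := by
    have h2 : Matrix.diagonal (fun i => (((c • hA.eigenvalues) i : ℝ):ℂ)) =
        (c:ℂ) • Matrix.diagonal (RCLike.ofReal ∘ hA.eigenvalues) := by
      ext i j
      by_cases hij : i = j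
      · subst hij; simp
      · simp [hij]
    rw [h2, mul_smul_comm, smul_mul_assoc, ← h]
  rw [h1, Matrix.charpoly_mul_comm, ← mul_assoc]
  simp [Matrix.charpoly_diagonal]

open scoped ComplexOrder in
/-- positive semidefinite matrices of rank at least `m` -/
lemma sig_pos_of_psd {n m : ℕ} (hmn : m ≤ n) {A : Matrix (Fin n) (Fin n) ℂ} (hA : A.PosSemidef)
    (hr : m ≤ A.rank) : ∀ k, k ≤ m → 0 < sig k A := by
  intro k hk
  rw [sig_eq (hk.trans hmn) hA.1]
  apply esymm_pos_of_nonneg (fun i => hA.eigenvalues_nonneg i)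
  rw [hA.1.rank_eq_card_non_zero_eigs, Fintype.card_subtype] at hr
  omega

open scoped ComplexOrder in
/-- a hermitian matrix of rank at most `m` with nonnegative symmetric functions is psd -/
lemma psd_of_sig_nonneg {n m : ℕ} (hmn : m ≤ n) {A : Matrix (Fin n) (Fin n) ℂ} (hA : A.IsHermitian)
    (hr : A.rank ≤ m) (hs : ∀ k, k ≤ m → 0 ≤ sig k A) : A.PosSemidef := by
  rw [hA.posSemidef_iff_eigenvalues_nonneg]
  intro i
  refine nonneg_of_esymm (m := m) (fun k hk => ?_) ?_ i
  · rw [← sig_eq (hk.trans hmn)]; exact hs k hk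
  · rw [hA.rank_eq_card_non_zero_eigs, Fintype.card_subtype] at hr
    exact hr

end Part2

section Part3

/-- A real inner product space identified with `ℂⁿ`. -/
structure CS (E : Type) [NormedAddCommGroup E] [InnerProductSpace ℝ E] (n : ℕ) where
  J : E →L[ℝ] E
  JJ : ∀ x, J (J x) = - x
  nJ : ∀ x, ‖J x‖ = ‖x‖
  Φ : (Fin n → ℂ) ≃ₗ[ℝ] E
  ΦI : ∀ x, Φ (I • x) = J (Φ x)
  orth : ∀ j k, inner ℝ (Φ (Pi.single j 1)) (Φ (Pi.single k 1)) = if j = k then (1:ℝ) else 0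
  orth' : ∀ j k, inner ℝ (Φ (Pi.single j 1)) (J (Φ (Pi.single k 1))) = (0:ℝ)

variable {E : Type} [NormedAddCommGroup E] [InnerProductSpace ℝ E] {n m : ℕ}

/-- continuous linear maps, with the instances of normed spaces -/
abbrev DL (E F : Type) [NormedAddCommGroup E] [NormedSpace ℝ E]
    [NormedAddCommGroup F] [NormedSpace ℝ F] := E →L[ℝ] F

/-- real bilinear forms on `E`. -/
abbrev BB (E : Type) [NormedAddCommGroup E] [InnerProductSpace ℝ E] := DL E (DL E ℝ)

namespace CS

variable (S : CS E n)

def e (k : Fin n) : E := S.Φ (Pi.single k 1)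

def hh (B : BB E) (η ζ : E) : ℂ :=
  (1/8 : ℂ) * (((B η ζ + B ζ η + B (S.J η) (S.J ζ) + B (S.J ζ) (S.J η) : ℝ) : ℂ)
    + I * ((B (S.J η) ζ + B ζ (S.J η) - B η (S.J ζ) - B (S.J ζ) η : ℝ) : ℂ))

lemma hh_add (B : BB E) (η ζ ξ : E) : S.hh B η (ζ + ξ) = S.hh B η ζ + S.hh B η ξ := by
  unfold hh; simp only [map_add, add_apply]; push_cast; ring

lemma hh_I (B : BB E) (η ζ : E) : S.hh B η (S.J ζ) = I * S.hh B η ζ := by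
  unfold hh
  rw [S.JJ]; simp only [map_neg, neg_apply]; push_cast
  linear_combination (-1/8 * (B (S.J η) ζ + B ζ (S.J η) - B η (S.J ζ) - B (S.J ζ) η : ℂ)) * I_mul_I

lemma hh_real (B : BB E) (η ζ : E) (t : ℝ) : S.hh B η (t • ζ) = t * S.hh B η ζ := by
  unfold hh
  simp only [map_smul, smul_apply, smul_eq_mul]; push_cast; ring

lemma hh_conj (B : BB E) (η ζ : E) : star (S.hh B η ζ) = S.hh B ζ η := by
  unfold hh
  simp only [star_mul', star_add, RCLike.star_def, conj_ofReal, conj_I, map_div₀, map_one, map_ofNat]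
  push_cast; ring

lemma Φ_smul (c : ℂ) (x : Fin n → ℂ) : S.Φ (c • x) = c.re • S.Φ x + c.im • S.J (S.Φ x) := by
  have : c • x = c.re • x + c.im • (I • x) := by
    ext j
    simp only [Pi.smul_apply, Pi.add_apply, smul_eq_mul, real_smul]
    conv_lhs => rw [← re_add_im c]
    ring
  rw [this, map_add, map_smul, map_smul, S.ΦI]

def hL (B : BB E) (η : E) : (Fin n → ℂ) →ₗ[ℂ] ℂ where
  toFun x := S.hh B η (S.Φ x)
  map_add' x y := by rw [map_add, hh_add]
  map_smul' c x := by
    simp only [RingHom.id_apply, smul_eq_mul]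
    rw [Φ_smul, hh_add, hh_real, hh_real, hh_I]
    conv_rhs => rw [← re_add_im c]
    ring

/-- the Hermitian matrix of a real bilinear form -/
def GH (B : BB E) : Matrix (Fin n) (Fin n) ℂ := fun j k => S.hh B (S.e j) (S.e k)

lemma GH_herm (B : BB E) : (S.GH B).IsHermitian := by
  ext j k; exact S.hh_conj B _ _

lemma hL_sum (B : BB E) (η : E) (x : Fin n → ℂ) : S.hh B η (S.Φ x) = ∑ k, x k * S.hh B η (S.e k) := by
  have : S.hh B η (S.Φ x) = S.hL B η x := rfl
  rw [this]
  conv_lhs => rw [← Finset.univ_sum_single x]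
  rw [map_sum]
  refine Finset.sum_congr rfl fun k _ => ?_
  have h2 : Pi.single k (x k) = x k • (Pi.single k 1 : Fin n → ℂ) := by
    rw [← Pi.single_smul]; simp
  rw [h2, map_smul]; rfl

lemma GH_mulVec (B : BB E) (x : Fin n → ℂ) (j : Fin n) :
    (S.GH B).mulVec x j = S.hh B (S.e j) (S.Φ x) := by
  rw [hL_sum]
  simp only [Matrix.mulVec, dotProduct, GH]
  exact Finset.sum_congr rfl fun k _ => mul_comm _ _

lemma GH_quad (B : BB E) (x : Fin n → ℂ) :
    star x ⬝ᵥ (S.GH B).mulVec x = S.hh B (S.Φ x) (S.Φ x) := by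
  rw [← hh_conj, hL_sum, star_sum]
  refine Finset.sum_congr rfl fun k _ => ?_
  rw [GH_mulVec, star_mul', hh_conj]; rfl

/-- the associated quadratic form -/
def qf (B : BB E) (ζ : E) : ℝ := (B ζ ζ + B (S.J ζ) (S.J ζ)) / 4

lemma hh_self (B : BB E) (ζ : E) : S.hh B ζ ζ = (S.qf B ζ : ℂ) := by
  unfold hh qf; push_cast; ring

def Kf (m : ℕ) : Set (BB E) := {B | ∀ k, 1 ≤ k → k ≤ m → 0 < sig k (S.GH B)}

lemma hh_Badd (A B : BB E) (η ζ : E) : S.hh (A + B) η ζ = S.hh A η ζ + S.hh B η ζ := by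
  unfold hh; simp only [add_apply]; push_cast; ring
lemma hh_Bsmul (c : ℝ) (B : BB E) (η ζ : E) : S.hh (c • B) η ζ = c * S.hh B η ζ := by
  unfold hh; simp only [smul_apply, smul_eq_mul]; push_cast; ring

lemma GH_add (A B : BB E) : S.GH (A + B) = S.GH A + S.GH B := by
  ext j k; exact S.hh_Badd _ _ _ _
lemma GH_smul (c : ℝ) (B : BB E) : S.GH (c • B) = (c:ℂ) • S.GH B := by
  ext j k; exact S.hh_Bsmul _ _ _ _

lemma GH_cont : Continuous S.GH := by
  refine continuous_matrix fun j k => ?_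
  unfold GH hh
  fun_prop

lemma K_open : IsOpen (S.Kf m) := by
  have : S.Kf m = ⋂ k ∈ Finset.Icc 1 m, {B | 0 < sig k (S.GH B)} := by
    ext x; simp [Kf]
  rw [this]
  exact isOpen_biInter_finset fun k _ => isOpen_lt continuous_const (sig_continuous.comp S.GH_cont)

lemma K_add (hmn : m ≤ n) {A B : BB E} (hA : A ∈ S.Kf m) (hB : B ∈ S.Kf m) :
    A + B ∈ S.Kf m := by
  show ∀ k, _ → _ → _
  rw [GH_add]
  exact sig_add_pos hmn (S.GH_herm A) (S.GH_herm B) hA hB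

lemma K_smul (hmn : m ≤ n) {c : ℝ} (hc : 0 < c) {A : BB E} (hA : A ∈ S.Kf m) :
    c • A ∈ S.Kf m := by
  intro k h1 h2
  rw [GH_smul, sig_smul (h2.trans hmn) (S.GH_herm A)]
  have := hA k h1 h2
  positivity

lemma K_convex (hmn : m ≤ n) : Convex ℝ (S.Kf m) := by
  intro x hx y hy a b ha hb hab
  rcases ha.eq_or_lt with rfl | ha
  · obtain rfl : b = 1 := by linarith
    simpa using hy
  rcases hb.eq_or_lt with rfl | hb
  · obtain rfl : a = 1 := by linarith
    simpa using hx
  exact S.K_add hmn (S.K_smul hmn ha hx) (S.K_smul hmn hb hy)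

open Pointwise in
lemma K_add_cl (hmn : m ≤ n) {A B : BB E} (hA : A ∈ S.Kf m) (hB : B ∈ closure (S.Kf m)) :
    A + B ∈ S.Kf m := by
  have : A + B ∈ S.Kf m + closure (S.Kf m) := Set.add_mem_add hA hB
  rw [S.K_open.add_closure] at this
  obtain ⟨x, hx, y, hy, h⟩ := this
  rw [← h]; exact S.K_add hmn hx hy

lemma qf_add (A B : BB E) (ζ : E) : S.qf (A+B) ζ = S.qf A ζ + S.qf B ζ := by
  unfold qf; simp only [add_apply]; ring
lemma qf_smul (c : ℝ) (B : BB E) (ζ : E) : S.qf (c • B) ζ = c * S.qf B ζ := by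
  unfold qf; simp only [smul_apply, smul_eq_mul]; ring

open scoped ComplexOrder

lemma GH_psd {B : BB E} (h : ∀ ζ, 0 ≤ S.qf B ζ) : (S.GH B).PosSemidef := by
  refine Matrix.PosSemidef.of_dotProduct_mulVec_nonneg (S.GH_herm B) fun x => ?_
  rw [S.GH_quad B x, hh_self]
  exact_mod_cast h _

lemma rank_ker (A : Matrix (Fin n) (Fin n) ℂ) :
    A.rank + Module.finrank ℂ (LinearMap.ker A.mulVecLin) = n := by
  have := LinearMap.finrank_range_add_finrank_ker A.mulVecLin
  simpa [Matrix.rank] using this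

/-- the complex subspace of `ℂⁿ` corresponding to a `J`-invariant real subspace -/
def cplx (V : Submodule ℝ E) (hV : ∀ x ∈ V, S.J x ∈ V) : Submodule ℂ (Fin n → ℂ) where
  carrier := {x | S.Φ x ∈ V}
  add_mem' {a b} ha hb := by
    show S.Φ (a + b) ∈ V
    rw [map_add]; exact V.add_mem ha hb
  zero_mem' := by show S.Φ 0 ∈ V; rw [map_zero]; exact V.zero_mem
  smul_mem' c x hx := by
    show S.Φ (c • x) ∈ V
    rw [Φ_smul]
    exact V.add_mem (V.smul_mem _ hx) (V.smul_mem _ (hV _ hx))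

lemma cplx_finrank (V : Submodule ℝ E) (hV : ∀ x ∈ V, S.J x ∈ V) :
    Module.finrank ℝ V = 2 * Module.finrank ℂ (S.cplx V hV) := by
  rw [← finrank_real_of_complex]
  have h : (V.comap S.Φ.toLinearMap) = (S.cplx V hV).restrictScalars ℝ := by
    ext x; rfl
  have h1 : Module.finrank ℝ (S.cplx V hV) = Module.finrank ℝ ((S.cplx V hV).restrictScalars ℝ) := rfl
  rw [h1, ← h, ← LinearEquiv.finrank_map_eq S.Φ]
  have h2 : Submodule.map (S.Φ : (Fin n → ℂ) →ₗ[ℝ] E) (V.comap S.Φ.toLinearMap) = V :=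
    Submodule.map_comap_eq_of_surjective S.Φ.surjective V
  rw [h2]

lemma K_of_pos (hmn : m ≤ n) {B : BB E} (h : ∀ ζ, 0 ≤ S.qf B ζ) (W : Submodule ℝ E)
    (hWJ : ∀ x ∈ W, S.J x ∈ W)
    (hW : ∀ ζ ∈ W, ζ ≠ 0 → 0 < S.qf B ζ) (hd : 2 * m ≤ Module.finrank ℝ W) : B ∈ S.Kf m := by
  intro k h1 h2
  refine sig_pos_of_psd hmn (S.GH_psd h) ?_ k h2
  have h3 := rank_ker (S.GH B)
  set N := LinearMap.ker (S.GH B).mulVecLin with hN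
  have h4 : Disjoint (S.cplx W hWJ) N := by
    rw [Submodule.disjoint_def]
    intro x hx hx'
    by_contra hne
    have hp := hW (S.Φ x) hx (by simpa using hne)
    have := S.GH_quad B x
    have hx' : (S.GH B).mulVec x = 0 := hx'
    rw [hx', hh_self] at this
    simp at this
    have : S.qf B (S.Φ x) = 0 := by exact_mod_cast this.symm
    linarith
  have h5 := Submodule.finrank_add_finrank_le_of_disjoint h4
  have h6 := S.cplx_finrank W hWJ
  simp at h5
  omega

lemma finrank_E (S : CS E n) : Module.finrank ℝ E = 2 * n := by
  rw [← LinearEquiv.finrank_eq S.Φ, finrank_real_of_complex]; simp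

/-- the real inner product as a bilinear form -/
def ip (_ : CS E n) : BB E := innerSL ℝ

lemma ip_apply (x y : E) : S.ip x y = inner ℝ x y := rfl

lemma qf_ip (ζ : E) : S.qf S.ip ζ = ‖ζ‖^2 / 2 := by
  unfold qf
  rw [ip_apply, ip_apply, real_inner_self_eq_norm_sq, real_inner_self_eq_norm_sq, S.nJ]
  ring

lemma mem_cl_of_forall {A B : BB E} (h : ∀ t : ℝ, 0 < t → A + t • B ∈ S.Kf m) :
    A ∈ closure (S.Kf m) := by
  have : Filter.Tendsto (fun t : ℝ => A + t • B) (nhdsWithin 0 (Set.Ioi 0)) (nhds A) := by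
    have : Continuous (fun t : ℝ => A + t • B) := by fun_prop
    have h2 := this.tendsto 0
    simp at h2
    exact h2.mono_left nhdsWithin_le_nhds
  refine mem_closure_of_tendsto this ?_
  filter_upwards [self_mem_nhdsWithin] with t ht using h t ht

lemma K_of_pos' (hmn : m ≤ n) {B : BB E} (h : ∀ ζ, ζ ≠ 0 → 0 < S.qf B ζ) : B ∈ S.Kf m := by
  refine S.K_of_pos hmn (fun ζ => ?_) ⊤ (fun _ _ => trivial) (fun ζ _ hz => h ζ hz) ?_
  · by_cases hz : ζ = 0
    · simp [hz, qf]
    · exact (h ζ hz).le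
  · rw [finrank_top, S.finrank_E]; omega

lemma K_cl_of_nonneg (hmn : m ≤ n) {B : BB E} (h : ∀ ζ, 0 ≤ S.qf B ζ) :
    B ∈ closure (S.Kf m) := by
  refine S.mem_cl_of_forall (B := S.ip) fun t ht => ?_
  refine S.K_of_pos' hmn (fun ζ hz => ?_)
  rw [qf_add, qf_smul, qf_ip]; have := h ζ; have := norm_pos_iff.2 hz; positivity

lemma K_ip (hmn : m ≤ n) : S.ip ∈ S.Kf m := by
  refine S.K_of_pos' hmn (fun ζ h => ?_)
  rw [qf_ip]; have := norm_pos_iff.2 h; positivity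

lemma K_cl_zero (hmn : m ≤ n) : (0 : BB E) ∈ closure (S.Kf m) :=
  S.K_cl_of_nonneg hmn fun ζ => by simp [qf]

lemma K_cl_smul (hmn : m ≤ n) {c : ℝ} (hc : 0 ≤ c) {A : BB E}
    (hA : A ∈ closure (S.Kf m)) : c • A ∈ closure (S.Kf m) := by
  rcases hc.eq_or_lt with rfl | hc
  · simpa using S.K_cl_zero hmn
  · exact map_mem_closure (continuous_const_smul c) hA fun x hx => S.K_smul hmn hc hx

lemma K_cl_add (hmn : m ≤ n) {A B : BB E} (hA : A ∈ closure (S.Kf m))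
    (hB : B ∈ closure (S.Kf m)) : A + B ∈ closure (S.Kf m) :=
  map_mem_closure₂ continuous_add hA hB fun _ hx _ hy => S.K_add hmn hx hy

lemma qf_nonneg_of_cl (hmn : m ≤ n) {B : BB E} (hB : B ∈ closure (S.Kf m))
    (V : Submodule ℝ E) (hVJ : ∀ x ∈ V, S.J x ∈ V) (hV : ∀ ζ ∈ V, ∀ η, B ζ η = 0 ∧ B η ζ = 0)
    (hd : 2 * n ≤ Module.finrank ℝ V + 2 * m) (ζ : E) : 0 ≤ S.qf B ζ := by
  have h3 := rank_ker (S.GH B)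
  set N := LinearMap.ker (S.GH B).mulVecLin with hN
  have h4 : S.cplx V hVJ ≤ N := by
    intro x hx
    show (S.GH B).mulVec x = 0
    ext j
    rw [GH_mulVec]
    have hx : S.Φ x ∈ V := hx
    have hI := hVJ _ hx
    simp [hh, hV _ hx, hV _ hI]
  have h5 := Submodule.finrank_mono h4
  have h6 := S.cplx_finrank V hVJ
  have h7 : (S.GH B).PosSemidef := by
    refine psd_of_sig_nonneg hmn (S.GH_herm B) (by omega) fun k hk => ?_
    rcases Nat.eq_zero_or_pos k with rfl | hk0
    · rw [sig_eq (by omega) (S.GH_herm B)]; simp [esymm]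
    · have hcl : IsClosed {B : BB E | 0 ≤ sig k (S.GH B)} :=
        isClosed_le continuous_const (sig_continuous.comp S.GH_cont)
      exact closure_minimal (fun A hA => (hA k hk0 hk).le) hcl hB
  have := h7.dotProduct_mulVec_nonneg (S.Φ.symm ζ)
  rw [GH_quad, hh_self] at this
  simp only [LinearEquiv.apply_symm_apply] at this
  exact_mod_cast this

lemma GH_ip : S.GH S.ip = ((1/2:ℝ):ℂ) • (1 : Matrix (Fin n) (Fin n) ℂ) := by
  have hJ : ∀ x y, inner ℝ (S.J x) (S.J y) = (inner ℝ x y : ℝ) := by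
    intro x y
    exact LinearIsometry.inner_map_map (⟨S.J.toLinearMap, S.nJ⟩ : E →ₗᵢ[ℝ] E) x y
  ext j k
  simp only [GH, hh, ip_apply, hJ, e]
  rw [real_inner_comm (S.Φ (Pi.single k 1)) (S.J (S.Φ (Pi.single j 1))), S.orth', S.orth',
    real_inner_comm _ (S.J (S.Φ (Pi.single k 1))), S.orth', S.orth, S.orth]
  by_cases h : j = k
  · subst h; simp; norm_num
  · simp [h, Ne.symm h]

end CS

/-- second derivative -/
def D2 (f : E → ℝ) (x : E) : BB E := fderiv ℝ (fderiv ℝ f) x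

/-- the data of the hypothesis, for bilinear forms -/
lemma CS.K_of_hess (S : CS E n) (hm : 1 ≤ m) (hmn : m ≤ n) {A : Matrix (Fin n) (Fin n) ℂ} {B : BB E}
    (hA : A = (S.GH B).transpose)
    (h : ∃ h : A.IsHermitian,
      h.eigenvalues ∈ closure (gardingCone n m) ∧ esymm n m h.eigenvalues = 0) :
    B ∈ closure (S.Kf m) ∧ B ∉ S.Kf m := by
  obtain ⟨hH, h1, h2⟩ := h
  constructor
  · refine S.mem_cl_of_forall (B := (2:ℝ) • S.ip) fun t ht k hk1 hkm => ?_
    have : S.GH (B + t • (2:ℝ) • S.ip) = (A + (t:ℂ) • 1).transpose := by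
      rw [CS.GH_add, CS.GH_smul, CS.GH_smul, CS.GH_ip, hA]
      ext j k; simp [Matrix.one_apply, eq_comm]
    rw [this, sig_transpose, sig_add_scalar (hkm.trans hmn) hH, add_comm]
    refine gc_add_closure ?_ h1 k hk1 hkm
    intro l _ hl
    refine esymm_pos_of_nonneg (fun i => ht.le) ?_
    simp [ht.ne']; omega
  · intro hK
    have := hK m hm le_rfl
    rw [← sig_transpose, ← hA, sig_eq hmn hH, h2] at this
    exact lt_irrefl _ this

end Part3

section Part4

section conv
variable {E : Type} [NormedAddCommGroup E] [InnerProductSpace ℝ E] [FiniteDimensional ℝ E]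
  [MeasurableSpace E] [BorelSpace E]
  {F : Type} [NormedAddCommGroup F] [NormedSpace ℝ F] [CompleteSpace F]

/-- convolution -/
def cvv (k : E → ℝ) (f : E → F) (x : E) : F := ∫ y, k y • f (x - y)

lemma cvv_supp {k : E → ℝ} {f : E → F} (h : HasCompactSupport k ∨ HasCompactSupport f) (x₀ : E) :
    ∃ s : Set E, IsCompact s ∧ ∀ x ∈ closedBall x₀ 1, ∀ y ∉ s, k y = 0 ∨ x - y ∉ tsupport f := by
  rcases h with h | h
  · exact ⟨tsupport k, h, fun x _ y hy => Or.inl (image_eq_zero_of_notMem_tsupport hy)⟩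
  · refine ⟨(fun p : E × E => p.1 - p.2) '' (closedBall x₀ 1 ×ˢ tsupport f),
      ((isCompact_closedBall x₀ 1).prod h).image (by fun_prop), fun x hx y hy => Or.inr fun hf => hy ?_⟩
    exact ⟨(x, x - y), ⟨hx, hf⟩, by simp⟩

lemma cvv_zero {k : E → ℝ} {f : E → F} {x y : E} (h : k y = 0 ∨ x - y ∉ tsupport f) :
    k y • f (x - y) = 0 := by
  rcases h with h | h
  · simp [h]
  · rw [image_eq_zero_of_notMem_tsupport h, smul_zero]

lemma cvv_zero' {k : E → ℝ} {f : E → F} {x y : E} (h : k y = 0 ∨ x - y ∉ tsupport f) :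
    k y • fderiv ℝ f (x - y) = 0 := by
  rcases h with h | h
  · simp [h]
  · rw [image_eq_zero_of_notMem_tsupport fun h' => h (tsupport_fderiv_subset ℝ h'), smul_zero]

lemma cvv_integrable {k : E → ℝ} {f : E → F} (h : HasCompactSupport k ∨ HasCompactSupport f)
    (hk : Continuous k) (hf : Continuous f) (x : E) : Integrable (fun y => k y • f (x - y)) := by
  obtain ⟨s, hs, H⟩ := cvv_supp h x
  refine Continuous.integrable_of_hasCompactSupport (by fun_prop) ?_
  exact HasCompactSupport.intro hs fun y hy => cvv_zero (H x (by simp) y hy)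

lemma cvv_continuous {k : E → ℝ} {f : E → F} (h : HasCompactSupport k ∨ HasCompactSupport f)
    (hk : Continuous k) (hf : Continuous f) : Continuous (cvv k f) := by
  rw [continuous_iff_continuousAt]
  intro x₀
  obtain ⟨s, hs, H⟩ := cvv_supp h x₀
  have := continuousOn_integral_of_compact_support (μ := volume) (f := fun x y => k y • f (x - y))
    (s := closedBall x₀ 1) hs
    (by apply Continuous.continuousOn; fun_prop) (fun x y hx hy => cvv_zero (H x hx y hy))
  exact this.continuousAt (closedBall_mem_nhds x₀ one_pos)

lemma cvv_hasFDerivAt {k : E → ℝ} {f : E → F} (h : HasCompactSupport k ∨ HasCompactSupport f)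
    (hk : Continuous k) (hf : ContDiff ℝ 1 f) (x₀ : E) :
    HasFDerivAt (cvv k f) (cvv k (fderiv ℝ f) x₀ : DL E F) x₀ := by
  obtain ⟨s, hs, H⟩ := cvv_supp h x₀
  have hf' : Continuous (fderiv ℝ f) := hf.continuous_fderiv one_ne_zero
  have hc : Continuous (fun p : E × E => k p.2 • fderiv ℝ f (p.1 - p.2)) :=
    (hk.comp continuous_snd).smul (hf'.comp (continuous_fst.sub continuous_snd))
  obtain ⟨C, hC⟩ := ((isCompact_closedBall x₀ 1).prod hs).exists_bound_of_continuousOn hc.continuousOn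
  refine hasFDerivAt_integral_of_dominated_of_fderiv_le (bound := s.indicator fun _ => C)
    (F' := fun x y => k y • fderiv ℝ f (x - y)) (closedBall_mem_nhds x₀ one_pos) ?_ ?_ ?_ ?_ ?_ ?_
  · refine Filter.Eventually.of_forall fun x => ?_
    have : Continuous fun y => k y • f (x - y) := by
      have := hf.continuous; fun_prop
    exact this.aestronglyMeasurable
  · exact cvv_integrable h hk hf.continuous x₀
  · have : Continuous fun y => k y • fderiv ℝ f (x₀ - y) :=
      hk.smul (hf'.comp (continuous_const.sub continuous_id))
    exact this.aestronglyMeasurable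
  · refine Filter.Eventually.of_forall fun y x hx => ?_
    by_cases hy : y ∈ s
    · rw [Set.indicator_of_mem hy]; exact hC (x, y) ⟨hx, hy⟩
    · rw [Set.indicator_of_notMem hy, cvv_zero' (H x hx y hy), norm_zero]
  · rw [integrable_indicator_iff hs.measurableSet]
    exact integrableOn_const hs.measure_lt_top.ne
  · refine Filter.Eventually.of_forall fun y x hx => ?_
    have h1 : HasFDerivAt f (fderiv ℝ f (x - y)) (x - y) :=
      (hf.differentiable one_ne_zero _).hasFDerivAt
    have h2 := h1.comp x ((hasFDerivAt_id x).sub_const y)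
    exact h2.const_smul (k y)

lemma cvv_fderiv {k : E → ℝ} {f : E → F} (h : HasCompactSupport k ∨ HasCompactSupport f)
    (hk : Continuous k) (hf : ContDiff ℝ 1 f) :
    fderiv ℝ (cvv k f) = (cvv k (fderiv ℝ f) : E → DL E F) :=
  funext fun x => (cvv_hasFDerivAt h hk hf x).fderiv

lemma hcs_fderiv {k : E → ℝ} {f : E → F} (h : HasCompactSupport k ∨ HasCompactSupport f) :
    HasCompactSupport k ∨ HasCompactSupport (fderiv ℝ f) :=
  h.imp id fun h => h.fderiv ℝ

lemma cvv_contDiff1 {k : E → ℝ} {f : E → F} (h : HasCompactSupport k ∨ HasCompactSupport f)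
    (hk : Continuous k) (hf : ContDiff ℝ 1 f) : ContDiff ℝ 1 (cvv k f) := by
  rw [contDiff_one_iff_fderiv]
  refine ⟨fun x => (cvv_hasFDerivAt h hk hf x).differentiableAt, ?_⟩
  rw [cvv_fderiv h hk hf]
  exact cvv_continuous (hcs_fderiv h) hk (hf.continuous_fderiv one_ne_zero)

lemma cvv_contDiff2 {k : E → ℝ} {f : E → F} (h : HasCompactSupport k ∨ HasCompactSupport f)
    (hk : Continuous k) (hf : ContDiff ℝ 2 f) : ContDiff ℝ 2 (cvv k f) := by
  have h2 : (2 : WithTop ℕ∞) = 1 + 1 := one_add_one_eq_two.symm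
  have hf1 : ContDiff ℝ 1 f := hf.of_le (by norm_num)
  rw [h2, contDiff_succ_iff_fderiv]
  refine ⟨fun x => (cvv_hasFDerivAt h hk hf1 x).differentiableAt, by simp, ?_⟩
  rw [cvv_fderiv h hk hf1]
  exact cvv_contDiff1 (hcs_fderiv h) hk (hf.fderiv_right (by norm_num))

lemma cvv_D2 {k : E → ℝ} {f : E → ℝ} (h : HasCompactSupport k ∨ HasCompactSupport f)
    (hk : Continuous k) (hf : ContDiff ℝ 2 f) (x : E) : D2 (cvv k f) x = cvv k (D2 f) x := by
  have hf1 : ContDiff ℝ 1 f := hf.of_le (by norm_num)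
  unfold D2
  rw [cvv_fderiv h hk hf1, cvv_fderiv (hcs_fderiv h) hk (hf.fderiv_right (by norm_num))]

lemma D2_continuous {f : E → ℝ} (hf : ContDiff ℝ 2 f) : Continuous (D2 f) := by
  have : ContDiff ℝ 1 (fderiv ℝ f) := hf.fderiv_right (by norm_num)
  exact this.continuous_fderiv one_ne_zero

lemma cvv_comm (k f : E → ℝ) (x : E) : cvv k f x = cvv f k x := by
  unfold cvv
  rw [← integral_sub_left_eq_self _ volume x]
  simp [mul_comm]

/-- closed convex cones are stable under positive convolutions -/
lemma cvv_mem {K : Set F} (hcl : IsClosed K) (hK : Convex ℝ K) (h0 : (0:F) ∈ K)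
    (hs : ∀ c : ℝ, 0 ≤ c → ∀ A ∈ K, c • A ∈ K)
    {k : E → ℝ} {f : E → F} (hc : HasCompactSupport k)
    (hk : Continuous k) (hf : Continuous f) (hk0 : ∀ y, 0 ≤ k y) (x : E) (hfK : ∀ y, f (x - y) ∈ K) :
    cvv k f x ∈ K := by
  set s := tsupport k
  have hs' : IsCompact s := hc
  have h1 : cvv k f x = ∫ y in s, k y • f (x - y) := by
    unfold cvv
    rw [setIntegral_eq_integral_of_forall_compl_eq_zero]
    intro y hy
    rw [image_eq_zero_of_notMem_tsupport hy, zero_smul]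
  by_cases hv : volume s = 0
  · rw [h1, Measure.restrict_eq_zero.2 hv]; simpa using h0
  have hfin : volume s ≠ ⊤ := hs'.measure_lt_top.ne
  have h2 : (⨍ y in s, k y • f (x - y)) ∈ K := by
    refine hK.set_average_mem hcl hv hfin (Filter.Eventually.of_forall fun y => hs _ (hk0 y) _ (hfK y)) ?_
    exact (cvv_integrable (Or.inl hc) hk hf x).integrableOn
  rw [setAverage_eq] at h2
  rw [h1]
  have h3 := hs (volume.real s) (by positivity) _ h2
  rwa [smul_smul, mul_inv_cancel₀, one_smul] at h3
  rw [measureReal_def, ENNReal.toReal_ne_zero]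
  exact ⟨hv, hfin⟩

end conv

end Part4

section Part5

section sol
open Filter Topology
variable {E : Type} [NormedAddCommGroup E] [InnerProductSpace ℝ E] [FiniteDimensional ℝ E]
  [MeasurableSpace E] [BorelSpace E] {n m : ℕ}

lemma CS.cvv_mem_cl (S : CS E n) (hmn : m ≤ n) {k : E → ℝ} {f : E → BB E} (hc : HasCompactSupport k)
    (hk : Continuous k) (hf : Continuous f) (hk0 : ∀ y, 0 ≤ k y) (x : E)
    (hfK : ∀ y, f (x - y) ∈ closure (S.Kf m)) : cvv k f x ∈ closure (S.Kf m) :=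
  cvv_mem isClosed_closure (S.K_convex hmn).closure (S.K_cl_zero hmn)
    (fun _ hc _ hA => S.K_cl_smul hmn hc hA) hc hk hf hk0 x hfK

lemma diff1 {f : E → ℝ} (hf : ContDiff ℝ 2 f) : Differentiable ℝ f :=
  hf.differentiable two_ne_zero
lemma diff2 {f : E → ℝ} (hf : ContDiff ℝ 2 f) : Differentiable ℝ (fderiv ℝ f : E → DL E ℝ) :=
  (hf.fderiv_right (m := 1) (by norm_num)).differentiable one_ne_zero

lemma D2_add {f g : E → ℝ} (hf : ContDiff ℝ 2 f) (hg : ContDiff ℝ 2 g) (x : E) :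
    D2 (fun z => f z + g z) x = D2 f x + D2 g x := by
  unfold D2
  have : fderiv ℝ (fun z => f z + g z) = fun z => (fderiv ℝ f z + fderiv ℝ g z : DL E ℝ) :=
    funext fun z => fderiv_fun_add (diff1 hf z) (diff1 hg z)
  rw [this]; exact fderiv_fun_add (diff2 hf x) (diff2 hg x)

lemma D2_smul {f : E → ℝ} (c : ℝ) (hf : ContDiff ℝ 2 f) (x : E) :
    D2 (fun z => c * f z) x = c • D2 f x := by
  unfold D2
  have : fderiv ℝ (fun z => c * f z) = fun z => (c • fderiv ℝ f z : DL E ℝ) :=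
    funext fun z => fderiv_const_mul (diff1 hf z) c
  rw [this]; exact fderiv_fun_const_smul (diff2 hf x) c

lemma D2_sub {f g : E → ℝ} (hf : ContDiff ℝ 2 f) (hg : ContDiff ℝ 2 g) (x : E) :
    D2 (fun z => f z - g z) x = D2 f x - D2 g x := by
  unfold D2
  have : fderiv ℝ (fun z => f z - g z) = fun z => (fderiv ℝ f z - fderiv ℝ g z : DL E ℝ) :=
    funext fun z => fderiv_fun_sub (diff1 hf z) (diff1 hg z)
  rw [this]; exact fderiv_fun_sub (diff2 hf x) (diff2 hg x)

lemma D2_trans (f : E → ℝ) (a x : E) : D2 (fun z => f (z + a)) x = D2 f (x + a) := by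
  unfold D2
  have : fderiv ℝ (fun z => f (z + a)) = fun z => (fderiv ℝ f (z + a) : DL E ℝ) :=
    funext fun z => fderiv_comp_add_right a
  rw [this]; exact fderiv_comp_add_right a

lemma quad_contDiff (x : E) : ContDiff ℝ 2 (fun z : E => ‖z - x‖^2) := by
  exact (contDiff_id.sub contDiff_const).norm_sq ℝ

lemma D2_quad (S : CS E n) (x z : E) : D2 (fun z : E => ‖z - x‖^2) z = (2:ℝ) • S.ip := by
  unfold D2
  have h1 : fderiv ℝ (fun z : E => ‖z - x‖^2) = fun z => (((2:ℝ) • S.ip : BB E) (z - x) : DL E ℝ) := by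
    funext w
    have h : HasFDerivAt (fun z : E => ‖z - x‖^2) _ w := ((hasFDerivAt_id w).sub_const x).norm_sq
    rw [h.fderiv]
    ext y
    simp [CS.ip_apply]
  rw [h1]
  have h2 := (((2:ℝ) • S.ip : BB E)).hasFDerivAt (x := z - x)
  have h3 := h2.comp z ((hasFDerivAt_id z).sub_const x)
  exact h3.fderiv

/-- second order necessary condition at a local minimum -/
lemma D2_nonneg_of_min {f : E → ℝ} (hf : ContDiff ℝ 2 f) {z : E} (hz : IsLocalMin f z) (ζ : E) :
    0 ≤ D2 f z ζ ζ := by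
  by_contra hneg
  push Not at hneg
  set g : ℝ → ℝ := fun t => f (z + t • ζ) with hg
  have hl : ∀ t : ℝ, HasDerivAt (fun t : ℝ => z + t • ζ) ζ t := fun t => by
    simpa using ((hasDerivAt_id t).smul_const ζ).const_add z
  have h1 : ∀ t, HasDerivAt g (fderiv ℝ f (z + t • ζ) ζ) t := fun t =>
    (diff1 hf (z + t • ζ)).hasFDerivAt.comp_hasDerivAt t (hl t)
  have h1' : deriv g = fun t => (fderiv ℝ f (z + t • ζ) : DL E ℝ) ζ := funext fun t => (h1 t).deriv
  have h2 : HasDerivAt (deriv g) (D2 f z ζ ζ) 0 := by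
    rw [h1']
    have h3 : HasDerivAt (fun t : ℝ => (fderiv ℝ f (z + t • ζ) : DL E ℝ)) (D2 f z ζ) 0 := by
      have h4 : HasFDerivAt (fderiv ℝ f : E → DL E ℝ) (D2 f z) (z + (0:ℝ) • ζ) := by
        rw [zero_smul, add_zero]; exact (diff2 hf z).hasFDerivAt
      exact h4.comp_hasDerivAt 0 (hl 0)
    exact h3.clm_apply (hasDerivAt_const _ ζ) |>.congr_deriv (by simp)
  have hmin : IsLocalMin g 0 := by
    have hc : ContinuousAt (fun t : ℝ => z + t • ζ) 0 := (hl 0).continuousAt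
    have : Tendsto (fun t : ℝ => z + t • ζ) (𝓝 0) (𝓝 z) := by simpa [ContinuousAt] using hc
    have h5 := this.eventually hz
    simpa [IsLocalMin, IsMinFilter, hg] using h5
  have hmax : IsLocalMax g 0 :=
    isLocalMax_of_deriv_deriv_neg (by rw [h2.deriv]; exact hneg) hmin.deriv_eq_zero
      (h1 0).continuousAt
  have hconst : g =ᶠ[𝓝 0] fun _ => g 0 := by
    filter_upwards [hmin, hmax] with t a b using le_antisymm b a
  have h6 : deriv g =ᶠ[𝓝 0] deriv (fun _ => g 0) := hconst.deriv
  have h7 := h6.deriv_eq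
  rw [h2.deriv] at h7
  simp at h7
  linarith

/-- normalised bounded weak solutions of the homogeneous equation -/
structure Sol (S : CS E n) (m : ℕ) (L : ℝ) (u : E → ℝ) : Prop where
  nonneg : ∀ x, 0 ≤ u x
  le_one : ∀ x, u x ≤ 1
  lip : ∀ x y, |u x - u y| ≤ L * ‖x - y‖
  sub : ∀ φ : E → ℝ, ContDiff ℝ 2 φ → HasCompactSupport φ → (∀ y, 0 ≤ φ y) → ∀ x,
    D2 (cvv φ u) x ∈ closure (S.Kf m)
  sup : ∀ (x : E) (r M : ℝ) (h : E → ℝ), 0 < r → ContDiff ℝ 2 h →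
    (∀ z ∈ closedBall x r, D2 h z ∈ S.Kf m) → (∀ z ∈ sphere x r, M ≤ u z - h z) → M ≤ u x - h x

variable {S : CS E n} {L : ℝ} {u : E → ℝ}

lemma cont_of_lip (h : ∀ x y, |u x - u y| ≤ L * ‖x - y‖) : Continuous u := by
  have : LipschitzWith L.toNNReal u := LipschitzWith.of_dist_le_mul fun x y => by
    rw [Real.dist_eq, dist_eq_norm]
    exact (h x y).trans (mul_le_mul_of_nonneg_right (Real.le_coe_toNNReal L) (norm_nonneg _))
  exact this.continuous

lemma Sol.cont (h : Sol S m L u) : Continuous u := cont_of_lip h.lip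

lemma Sol.of_C2 (hmn : m ≤ n) (hu : ContDiff ℝ 2 u) (h0 : ∀ x, 0 ≤ u x) (h1 : ∀ x, u x ≤ 1)
    (hL : ∀ x y, |u x - u y| ≤ L * ‖x - y‖)
    (hK : ∀ z, D2 u z ∈ closure (S.Kf m) ∧ D2 u z ∉ S.Kf m) : Sol S m L u where
  nonneg := h0
  le_one := h1
  lip := hL
  sub φ hφ hc hp x := by
    rw [cvv_D2 (Or.inl hc) hφ.continuous hu]
    exact S.cvv_mem_cl hmn hc hφ.continuous (D2_continuous hu) hp x fun y => (hK _).1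
  sup x r M h hr hh hhK hM := by
    by_contra hlt
    push Not at hlt
    have hc : Continuous fun z => u z - h z := hu.continuous.sub hh.continuous
    obtain ⟨z, hz, hmin⟩ := (isCompact_closedBall x r).exists_isMinOn ⟨x, by simp [hr.le]⟩ hc.continuousOn
    have hzx : u z - h z ≤ u x - h x := hmin (by simp [hr.le])
    have hzb : z ∈ ball x r := by
      rcases (mem_closedBall.1 hz).lt_or_eq with h | h
      · exact h
      · have := hM z h; linarith
    have hloc : IsLocalMin (fun z => u z - h z) z :=
      hmin.isLocalMin (mem_of_superset (isOpen_ball.mem_nhds hzb) ball_subset_closedBall)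
    have hq := D2_nonneg_of_min (hu.sub hh) hloc
    have hcl : D2 (fun z => u z - h z) z ∈ closure (S.Kf m) :=
      S.K_cl_of_nonneg hmn fun ζ => by
        have a := hq ζ
        have b := hq (S.J ζ)
        unfold CS.qf; linarith
    have := S.K_add_cl hmn (hhK z hz) hcl
    rw [D2_sub hu hh, add_sub_cancel] at this
    exact (hK z).2 this

/-- touching from below -/
lemma Sol.touch (hu : Sol S m L u) {h : E → ℝ} (hh : ContDiff ℝ 2 h) {x : E}
    (hmin : ∀ y, u x - h x ≤ u y - h y) : D2 h x ∉ S.Kf m := by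
  intro hK
  have hopen : ∀ᶠ p : ℝ × E in 𝓝 (0, x), D2 h p.2 - p.1 • ((2:ℝ) • S.ip) ∈ S.Kf m := by
    have hc : Continuous fun p : ℝ × E => D2 h p.2 - p.1 • ((2:ℝ) • S.ip) :=
      ((D2_continuous hh).comp continuous_snd).sub (continuous_fst.smul continuous_const)
    apply hc.continuousAt.eventually
    apply S.K_open.mem_nhds
    simpa using hK
  obtain ⟨r, hr, hball⟩ := Metric.eventually_nhds_iff_ball.1 hopen
  set δ := r / 2 with hδ
  have hδ0 : 0 < δ := by positivity
  have hh' : ContDiff ℝ 2 (fun z => δ * ‖z - x‖^2) := contDiff_const.mul (quad_contDiff x)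
  have key := hu.sup x δ (u x - h x + δ * δ^2) (fun z => h z - δ * ‖z - x‖^2) hδ0 (hh.sub hh') ?_ ?_
  · simp at key
    have : 0 < δ^3 := by positivity
    nlinarith
  · intro z hz
    rw [D2_sub hh hh', D2_smul _ (quad_contDiff x), D2_quad S]
    refine hball (δ, z) ?_
    rw [mem_ball, Prod.dist_eq, max_lt_iff]
    refine ⟨?_, ?_⟩
    · rw [Real.dist_eq, sub_zero, abs_of_pos hδ0, hδ]; linarith
    · have := mem_closedBall.1 hz; simp only; linarith
  · intro z hz
    have : ‖z - x‖ = δ := by rw [← dist_eq_norm]; exact hz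
    rw [this]
    have := hmin z
    linarith

lemma cvv_trans (φ : E → ℝ) (u : E → ℝ) (a x : E) :
    cvv φ (fun z => u (z + a)) x = cvv φ u (x + a) := by
  unfold cvv
  refine integral_congr_ae (Eventually.of_forall fun y => ?_)
  simp only; rw [sub_add_eq_add_sub]

lemma Sol.trans (hu : Sol S m L u) (a : E) : Sol S m L (fun z => u (z + a)) where
  nonneg _ := hu.nonneg _
  le_one _ := hu.le_one _
  lip x y := by simpa using hu.lip (x + a) (y + a)
  sub φ h1 h2 h3 x := by
    have : cvv φ (fun z => u (z + a)) = fun x => cvv φ u (x + a) := funext fun x => cvv_trans φ u a x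
    rw [this, D2_trans]
    exact hu.sub φ h1 h2 h3 _
  sup x r M h hr hh hK hM := by
    have := hu.sup (x + a) r M (fun z => h (z + -a)) hr (hh.comp (contDiff_id.add contDiff_const)) ?_ ?_
    · simpa using this
    · intro z hz
      rw [D2_trans]
      refine hK _ ?_
      rw [mem_closedBall, dist_eq_norm] at *
      convert hz using 2; abel
    · intro z hz
      have := hM (z + -a) ?_
      · simpa using this
      · rw [mem_sphere, dist_eq_norm] at *
        convert hz using 2; abel

variable {ι : Type} {l : Filter ι} 

lemma unif_of_lip {ui : ι → E → ℝ} {v : E → ℝ} (hl : ∀ i, ∀ x y, |ui i x - ui i y| ≤ L * ‖x - y‖)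
    (hv : ∀ x y, |v x - v y| ≤ L * ‖x - y‖)
    (ht : ∀ x, Tendsto (fun i => ui i x) l (𝓝 (v x))) {s : Set E} (hs : IsCompact s) {ε : ℝ}
    (hε : 0 < ε) : ∀ᶠ i in l, ∀ y ∈ s, |ui i y - v y| ≤ ε := by
  set r := ε / (3 * (|L| + 1)) with hr
  have hL : 0 < |L| + 1 := by positivity
  have hr0 : 0 < r := by positivity
  obtain ⟨t, -, htf, hcov⟩ := hs.finite_cover_balls hr0
  have h1 : ∀ᶠ i in l, ∀ c ∈ t, |ui i c - v c| ≤ ε / 3 := by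
    rw [eventually_all_finite htf]
    intro c _
    have := (ht c).eventually (Metric.closedBall_mem_nhds (v c) (show 0 < ε / 3 by positivity))
    filter_upwards [this] with i hi
    rwa [Real.dist_eq] at hi
  filter_upwards [h1] with i hi y hy
  obtain ⟨c, hc, hyc⟩ := Set.mem_iUnion₂.1 (hcov hy)
  have h2 : ‖y - c‖ ≤ r := by rw [← dist_eq_norm]; exact (mem_ball.1 hyc).le
  have h3 : L * ‖y - c‖ ≤ ε / 3 := by
    calc L * ‖y - c‖ ≤ (|L| + 1) * r := by
          apply mul_le_mul _ h2 (norm_nonneg _) hL.le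
          linarith [le_abs_self L]
      _ = ε / 3 := by rw [hr]; field_simp
  have a1 := (hl i y c).trans h3
  have a2 := (hv y c).trans h3
  have a3 := hi c hc
  rw [abs_le] at *
  constructor <;> linarith

variable {F : Type} [NormedAddCommGroup F] [NormedSpace ℝ F] [CompleteSpace F]

lemma cvv_tendsto {ui : ι → E → ℝ} {v : E → ℝ} {f : E → F} (hf : Continuous f)
    (hfc : HasCompactSupport f) (hui : ∀ i, Continuous (ui i)) (hv : Continuous v)
    (H : ∀ s : Set E, IsCompact s → ∀ ε > 0, ∀ᶠ i in l, ∀ y ∈ s, |ui i y - v y| ≤ ε) (x : E) :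
    Tendsto (fun i => cvv (ui i) f x) l (𝓝 (cvv v f x)) := by
  obtain ⟨s, hs, hs'⟩ := cvv_supp (k := v) (f := f) (Or.inr hfc) x
  have hfI : Integrable fun y => ‖f (x - y)‖ := by
    have := cvv_integrable (k := fun _ => 1) (Or.inr hfc) continuous_const hf x
    simpa using this.norm
  set C := ∫ y, ‖f (x - y)‖ with hC
  have hC0 : 0 ≤ C := integral_nonneg fun _ => norm_nonneg _
  rw [Metric.tendsto_nhds]
  intro ε hε
  have hcs : IsCompact (Set.image (fun w => x - w) (tsupport f)) := hfc.isCompact.image (by fun_prop)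
  filter_upwards [H _ hcs (ε / (C + 1)) (by positivity)] with i hi
  rw [dist_eq_norm]
  have h1 : cvv (ui i) f x - cvv v f x = ∫ y, (ui i y - v y) • f (x - y) := by
    unfold cvv
    rw [← integral_sub (cvv_integrable (Or.inr hfc) (hui i) hf x) (cvv_integrable (Or.inr hfc) hv hf x)]
    simp [sub_smul]
  rw [h1]
  calc ‖∫ y, (ui i y - v y) • f (x - y)‖ ≤ ∫ y, ε / (C + 1) * ‖f (x - y)‖ := by
        refine norm_integral_le_of_norm_le (hfI.const_mul _) (Eventually.of_forall fun y => ?_)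
        rw [norm_smul, Real.norm_eq_abs]
        by_cases hy : x - y ∈ tsupport f
        · exact mul_le_mul_of_nonneg_right (hi y ⟨x - y, hy, by simp⟩) (norm_nonneg _)
        · rw [image_eq_zero_of_notMem_tsupport hy]; simp
    _ = ε * (C / (C + 1)) := by rw [integral_const_mul]; ring
    _ < ε := by
        have : C / (C + 1) < 1 := by rw [div_lt_one (by positivity)]; linarith
        nlinarith

lemma Sol.limit [l.NeBot] {ui : ι → E → ℝ} {v : E → ℝ} (hs : ∀ i, Sol S m L (ui i))
    (ht : ∀ x, Tendsto (fun i => ui i x) l (𝓝 (v x))) : Sol S m L v := by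
  have hv : ∀ x y, |v x - v y| ≤ L * ‖x - y‖ := fun x y =>
    le_of_tendsto ((ht x).sub (ht y)).abs (Eventually.of_forall fun i => (hs i).lip x y)
  have hvc := cont_of_lip hv
  have hun : ∀ s : Set E, IsCompact s → ∀ ε > 0, ∀ᶠ i in l, ∀ y ∈ s, |ui i y - v y| ≤ ε :=
    fun s hsc ε hε => unif_of_lip (fun i => (hs i).lip) hv ht hsc hε
  refine ⟨fun x => ge_of_tendsto (ht x) (Eventually.of_forall fun i => (hs i).nonneg x),
    fun x => le_of_tendsto (ht x) (Eventually.of_forall fun i => (hs i).le_one x), hv, ?_, ?_⟩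
  · intro φ hφ hc hp x
    have e : ∀ w : E → ℝ, Continuous w → D2 (cvv φ w) x = cvv w (D2 φ) x := fun w hw => by
      have : cvv φ w = cvv w φ := funext fun x => cvv_comm _ _ _
      rw [this, cvv_D2 (Or.inr hc) hw hφ]
    have hD : HasCompactSupport (D2 φ) := (hc.fderiv ℝ).fderiv ℝ
    have := cvv_tendsto (D2_continuous hφ) hD (fun i => (hs i).cont) hvc hun x
    rw [e v hvc]
    refine isClosed_closure.mem_of_tendsto this (Eventually.of_forall fun i => ?_)
    rw [← e _ (hs i).cont]
    exact (hs i).sub φ hφ hc hp x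
  · intro x r M h hr hh hK hM
    refine le_of_forall_pos_le_add fun ε hε => ?_
    have : ∀ᶠ i in l, M - ε ≤ ui i x - h x := by
      filter_upwards [hun (sphere x r) (isCompact_sphere x r) ε hε] with i hi
      refine (hs i).sup x r (M - ε) h hr hh hK fun z hz => ?_
      have := hM z hz
      have := (abs_le.1 (hi z hz)).1
      linarith
    have := ge_of_tendsto ((ht x).sub_const (h x)) this
    linarith

end sol

end Part5

section Part6

section twodim
open Filter Topology

lemma snd_le {g g1 : ℝ → ℝ} {c : ℝ} (h1 : ∀ᶠ t in 𝓝 0, HasDerivAt g (g1 t) t)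
    (h2 : HasDerivAt g1 c 0) (hmax : IsLocalMax g 0) : c ≤ 0 := by
  by_contra hpos
  push Not at hpos
  have h1' : deriv g =ᶠ[𝓝 0] g1 := h1.mono fun t ht => ht.deriv
  have hd : deriv (deriv g) 0 = c := by rw [h1'.deriv_eq, h2.deriv]
  have hmin : IsLocalMin g 0 :=
    isLocalMin_of_deriv_deriv_pos (by rw [hd]; exact hpos) hmax.deriv_eq_zero
      h1.self_of_nhds.continuousAt
  have hconst : g =ᶠ[𝓝 0] fun _ => g 0 := by
    filter_upwards [hmin, hmax] with t a b using le_antisymm b a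
  have h6 : deriv g =ᶠ[𝓝 0] deriv (fun _ => g 0) := hconst.deriv
  have h7 := h6.deriv_eq
  rw [hd] at h7
  simp at h7
  linarith

/-- radial barrier -/
def barr (t : ℝ) : ℝ := Real.log t - t⁻¹

lemma barr_deriv {t : ℝ} (ht : 0 < t) : HasDerivAt barr (t⁻¹ + (t^2)⁻¹) t := by
  have := (Real.hasDerivAt_log ht.ne').fun_sub (hasDerivAt_inv ht.ne')
  exact this.congr_deriv (by rw [sub_neg_eq_add])

lemma barr_line {b d : ℝ} (h : 0 < b^2 + d) :
    (∀ᶠ t in 𝓝 (0:ℝ), HasDerivAt (fun t => barr ((b+t)^2 + d))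
      ((((b+t)^2+d)⁻¹ + (((b+t)^2+d)^2)⁻¹) * (2*(b+t))) t) ∧
    HasDerivAt (fun t : ℝ => (((b+t)^2+d)⁻¹ + (((b+t)^2+d)^2)⁻¹) * (2*(b+t)))
      ((-1/(b^2+d)^2 - 2/(b^2+d)^3) * (4*b^2) + 2*(1/(b^2+d)+1/(b^2+d)^2)) 0 := by
  have hq : ∀ t : ℝ, HasDerivAt (fun t : ℝ => (b+t)^2+d) (2*(b+t)) t := fun t => by
    have := (((hasDerivAt_id t).const_add b).pow 2).add_const d
    simpa using this
  constructor
  · have hc : ContinuousAt (fun t : ℝ => (b+t)^2+d) 0 := by fun_prop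
    have : ∀ᶠ t in 𝓝 (0:ℝ), 0 < (b+t)^2+d := hc.eventually (lt_mem_nhds (by simpa using h))
    filter_upwards [this] with t ht
    exact (barr_deriv ht).comp t (hq t)
  · have hne : (b+0)^2+d ≠ 0 := by simpa using h.ne'
    have hlin : HasDerivAt (fun t : ℝ => 2*(b+t)) 2 0 := by
      simpa using ((hasDerivAt_id (0:ℝ)).const_add b).const_mul 2
    have := (((hq 0).fun_inv hne).fun_add (((hq 0).fun_pow 2).fun_inv (pow_ne_zero 2 hne))).fun_mul hlin
    refine this.congr_deriv ?_
    simp only [add_zero] at *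
    field_simp
    ring

lemma barr_lap {x y : ℝ} (h : 0 < x^2 + y^2) :
    ((-1/(x^2+y^2)^2 - 2/(x^2+y^2)^3) * (4*x^2) + 2*(1/(x^2+y^2)+1/(x^2+y^2)^2)) +
    ((-1/(y^2+x^2)^2 - 2/(y^2+x^2)^3) * (4*y^2) + 2*(1/(y^2+x^2)+1/(y^2+x^2)^2)) < 0 := by
  have e : y^2+x^2 = x^2+y^2 := add_comm _ _
  rw [e]
  have : ((-1/(x^2+y^2)^2 - 2/(x^2+y^2)^3) * (4*x^2) + 2*(1/(x^2+y^2)+1/(x^2+y^2)^2)) +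
    ((-1/(x^2+y^2)^2 - 2/(x^2+y^2)^3) * (4*y^2) + 2*(1/(x^2+y^2)+1/(x^2+y^2)^2))
     = - (4 / (x^2+y^2)^2) := by
    field_simp; ring
  rw [this]
  have : 0 < 4 / (x^2+y^2)^2 := by positivity
  linarith

lemma liouville2D {f : ℂ → ℝ} (hf : Continuous f) {M : ℝ} (hb : ∀ z, f z ≤ M)
    (hΔ : ∀ z, ∃ g1 g2 : ℝ → ℝ, ∃ c1 c2 : ℝ, (∀ t, HasDerivAt (fun t : ℝ => f (z + t)) (g1 t) t) ∧
      HasDerivAt g1 c1 0 ∧ (∀ t, HasDerivAt (fun t : ℝ => f (z + t * I)) (g2 t) t) ∧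
      HasDerivAt g2 c2 0 ∧ 0 ≤ c1 + c2) (p c : ℂ) : f p ≤ f c := by
  by_contra hlt
  push Not at hlt
  set δ := (f p - f c) / 2 with hδ
  have hδ0 : 0 < δ := by rw [hδ]; linarith
  have hpc : p ≠ c := by rintro rfl; exact lt_irrefl _ hlt
  have hpc0 : 0 < dist p c := dist_pos.2 hpc
  obtain ⟨r1, hr1, hr1'⟩ := Metric.continuous_iff.1 hf c δ hδ0
  set r := min (r1/2) (dist p c / 2) with hr
  have hr0 : 0 < r := by positivity
  have hrp : r < dist p c := lt_of_le_of_lt (min_le_right _ _) (by linarith)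
  have hfr : ∀ z, dist z c ≤ r → f z ≤ f c + δ := fun z hz => by
    have := hr1' z (lt_of_le_of_lt (hz.trans (min_le_left _ _)) (by linarith))
    rw [Real.dist_eq, abs_lt] at this
    linarith
  set A := barr (r^2) with hA
  set B := barr ((dist p c)^2) with hB
  obtain ⟨ε, hε, hεAB⟩ : ∃ ε : ℝ, 0 < ε ∧ ε * (B - A) < δ := by
    refine ⟨δ / (2 * (|B - A| + 1)), by positivity, ?_⟩
    rw [div_mul_eq_mul_div, div_lt_iff₀ (by positivity)]
    have := le_abs_self (B - A)
    have := abs_nonneg (B - A)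
    nlinarith
  set G : ℂ → ℝ := fun z => f z - ε * barr ((dist z c)^2) with hG
  obtain ⟨R, hR, hRG⟩ : ∃ R : ℝ, dist p c < R ∧ M - ε * barr (R^2) < G p := by
    have t1 : Tendsto (fun R : ℝ => M - ε * barr (R^2)) atTop atBot := by
      have t2 : Tendsto (fun R : ℝ => barr (R^2)) atTop atTop := by
        have t3 : Tendsto (fun R : ℝ => R^2) atTop atTop := tendsto_pow_atTop two_ne_zero
        have t4 : Tendsto barr atTop atTop := by
          unfold barr
          have := Real.tendsto_log_atTop.atTop_add (tendsto_inv_atTop_zero (𝕜 := ℝ)).neg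
          simpa [sub_eq_add_neg] using this
        exact t4.comp t3
      exact tendsto_atBot_add_const_left _ M ((tendsto_neg_atTop_atBot).comp (t2.const_mul_atTop hε)) |>.congr
        fun x => by simp [sub_eq_add_neg]
    obtain ⟨R, h1, h2⟩ := ((eventually_gt_atTop (dist p c)).and (t1.eventually_lt_atBot (G p))).exists
    exact ⟨R, h1, h2⟩
  set s : Set ℂ := closedBall c R ∩ {z | r ≤ dist z c} with hs
  have hsc : IsCompact s := (isCompact_closedBall c R).inter_right
    (isClosed_le continuous_const (by fun_prop))
  have hGc : ContinuousOn G s := by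
    intro z hz
    have hz0 : 0 < dist z c := lt_of_lt_of_le hr0 hz.2
    have h1 : ContinuousAt (fun z => barr ((dist z c)^2)) z :=
      ContinuousAt.comp (f := fun z => (dist z c)^2) (g := barr)
        (barr_deriv (by positivity)).continuousAt (by fun_prop)
    exact (hf.continuousAt.sub (continuousAt_const.mul h1)).continuousWithinAt
  have hps : p ∈ s := ⟨by simpa using hR.le, hrp.le⟩
  obtain ⟨z, hz, hzmax⟩ := hsc.exists_isMaxOn ⟨p, hps⟩ hGc
  have hzp : G p ≤ G z := hzmax hps
  have hz1 : dist z c < R := by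
    rcases (mem_closedBall.1 hz.1).lt_or_eq with h | h
    · exact h
    · exfalso
      have : G z ≤ M - ε * barr (R^2) := by simp only [hG, h]; linarith [hb z]
      linarith
  have hz2 : r < dist z c := by
    rcases (show r ≤ dist z c from hz.2).lt_or_eq with h | h
    · exact h
    · exfalso
      have h1 : G z ≤ f c + δ - ε * A := by
        simp only [hG, ← h]; rw [← hA]; linarith [hfr z h.ge]
      have h2 : G p = f p - ε * B := rfl
      have h3 : f p = f c + 2 * δ := by rw [hδ]; ring
      nlinarith
  have hloc : IsLocalMax G z := by
    refine hzmax.isLocalMax ?_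
    refine inter_mem (closedBall_mem_nhds_of_mem hz1) ?_
    have : ContinuousAt (fun z => dist z c) z := by fun_prop
    filter_upwards [this.eventually (lt_mem_nhds hz2)] with w hw using le_of_lt hw
  obtain ⟨g1, g2, c1, c2, h1, h1', h2, h2', hc⟩ := hΔ z
  set x := (z - c).re with hx
  set y := (z - c).im with hy
  have hd1 : ∀ t : ℝ, (dist (z + t) c)^2 = (x + t)^2 + y^2 := fun t => by
    rw [dist_eq_norm, ← normSq_eq_norm_sq, normSq_apply]
    simp [hx, hy]; ring
  have hd2 : ∀ t : ℝ, (dist (z + t * I) c)^2 = (y + t)^2 + x^2 := fun t => by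
    rw [dist_eq_norm, ← normSq_eq_norm_sq, normSq_apply]
    simp [hx, hy]; ring
  have hpos : 0 < x^2 + y^2 := by
    have := hd1 0
    simp at this
    rw [← this]; have := hr0.trans hz2; positivity
  obtain ⟨b1, b1'⟩ := barr_line hpos
  obtain ⟨b2, b2'⟩ := barr_line (show 0 < y^2 + x^2 by linarith)
  have k1 := snd_le (g := fun t : ℝ => G (z + t)) (c := c1 - ε * _)
    (g1 := fun t => g1 t - ε * _) ?_ (h1'.fun_sub (b1'.const_mul ε)) ?_
  have k2 := snd_le (g := fun t : ℝ => G (z + t * I)) (c := c2 - ε * _)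
    (g1 := fun t => g2 t - ε * _) ?_ (h2'.fun_sub (b2'.const_mul ε)) ?_
  · have := barr_lap hpos
    nlinarith
  · filter_upwards [b2] with t ht
    have := (h2 t).fun_sub (ht.const_mul ε)
    simp only [hG, hd2]; exact this
  · have hct : Tendsto (fun t : ℝ => z + t * I) (𝓝 0) (𝓝 z) := by
      have : Continuous (fun t : ℝ => z + t * I) := by fun_prop
      simpa using this.tendsto 0
    have := hct.eventually hloc
    simpa [IsLocalMax, IsMaxFilter] using this
  · filter_upwards [b1] with t ht
    have := (h1 t).fun_sub (ht.const_mul ε)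
    simp only [hG, hd1]; exact this
  · have hct : Tendsto (fun t : ℝ => z + t) (𝓝 0) (𝓝 z) := by
      have : Continuous (fun t : ℝ => z + t) := by fun_prop
      simpa using this.tendsto 0
    have := hct.eventually hloc
    simpa [IsLocalMax, IsMaxFilter] using this

end twodim

end Part6

section Part7

section base
open Filter Topology
variable {E : Type} [NormedAddCommGroup E] [InnerProductSpace ℝ E] [FiniteDimensional ℝ E]
  [MeasurableSpace E] [BorelSpace E] {n m : ℕ}
variable {S : CS E n} {L : ℝ} {u : E → ℝ}

/-- mollifiers -/
structure IsMoll (ψ : E → ℝ) (c : E) (r : ℝ) : Prop where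
  smooth : ContDiff ℝ 2 ψ
  comp : HasCompactSupport ψ
  nonneg : ∀ y, 0 ≤ ψ y
  int1 : ∫ y, ψ y = 1
  supp : ∀ y, ψ y ≠ 0 → ‖y - c‖ ≤ r

lemma exists_moll (c : E) {r : ℝ} (hr : 0 < r) : ∃ ψ : E → ℝ, IsMoll ψ c r := by
  let f : ContDiffBump c := ⟨r/2, r, by positivity, by linarith⟩
  refine ⟨f.normed volume, f.contDiff_normed, f.hasCompactSupport_normed, fun y => f.nonneg_normed y,
    f.integral_normed, fun y hy => ?_⟩
  have : y ∈ Function.support (f.normed volume) := hy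
  rw [f.support_normed_eq] at this
  rw [← dist_eq_norm]; exact (mem_ball.1 this).le

lemma IsMoll.integrable {ψ : E → ℝ} {c : E} {r : ℝ} (h : IsMoll ψ c r) : Integrable ψ :=
  h.smooth.continuous.integrable_of_hasCompactSupport h.comp

lemma IsMoll.bounds {ψ : E → ℝ} {c : E} {r : ℝ} (h : IsMoll ψ c r) {f : E → ℝ} (hf : Continuous f)
    {A B : ℝ} {x : E} (hA : ∀ y, ‖y - c‖ ≤ r → A ≤ f (x - y)) (hB : ∀ y, ‖y - c‖ ≤ r → f (x - y) ≤ B) :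
    A ≤ cvv ψ f x ∧ cvv ψ f x ≤ B := by
  have hi := cvv_integrable (Or.inl h.comp) h.smooth.continuous hf x
  have e : ∀ C : ℝ, ∫ y, ψ y * C = C := fun C => by rw [integral_mul_const, h.int1, one_mul]
  constructor
  · rw [← e A]
    refine integral_mono (h.integrable.mul_const _) hi fun y => ?_
    by_cases hy : ψ y = 0
    · simp [hy]
    · exact mul_le_mul_of_nonneg_left (hA y (h.supp y hy)) (h.nonneg y)
  · rw [← e B]
    refine integral_mono hi (h.integrable.mul_const _) fun y => ?_
    by_cases hy : ψ y = 0
    · simp [hy]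
    · exact mul_le_mul_of_nonneg_left (hB y (h.supp y hy)) (h.nonneg y)

lemma IsMoll.near {ψ : E → ℝ} {c : E} {r : ℝ} (h : IsMoll ψ c r)
    (hl : ∀ x y, |u x - u y| ≤ L * ‖x - y‖) (x : E) :
    |cvv ψ u x - u (x - c)| ≤ |L| * r := by
  have hb : ∀ y, ‖y - c‖ ≤ r → |u (x - y) - u (x - c)| ≤ |L| * r := fun y hy => by
    refine (hl _ _).trans ?_
    have : ‖x - y - (x - c)‖ = ‖y - c‖ := by rw [← norm_neg]; congr 1; abel
    rw [this]
    exact mul_le_mul (le_abs_self L) hy (norm_nonneg _) (abs_nonneg _)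
  have := h.bounds (cont_of_lip hl) (x := x) (A := u (x-c) - |L| * r) (B := u (x-c) + |L| * r)
    (fun y hy => by linarith [(abs_le.1 (hb y hy)).1]) (fun y hy => by linarith [(abs_le.1 (hb y hy)).2])
  rw [abs_le]; constructor <;> linarith [this.1, this.2]

lemma cvv_inv {φ : E → ℝ} {v : E} (hv : ∀ x, u (x + v) = u x) (x : E) : cvv φ u (x + v) = cvv φ u x := by
  rw [← cvv_trans]; congr 1; funext z; exact hv z

lemma cvv_smooth {φ : E → ℝ} (hφ : ContDiff ℝ 2 φ) (hc : HasCompactSupport φ) (hu : Continuous u) :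
    ContDiff ℝ 2 (cvv φ u) := by
  have : cvv φ u = cvv u φ := funext fun x => cvv_comm _ _ _
  rw [this]; exact cvv_contDiff2 (Or.inr hc) hu hφ

/-- derivatives along lines -/
lemma line_deriv {f : E → ℝ} (hf : ContDiff ℝ 2 f) (z ζ : E) :
    (∀ t : ℝ, HasDerivAt (fun t : ℝ => f (z + t • ζ)) (fderiv ℝ f (z + t • ζ) ζ) t) ∧
    HasDerivAt (fun t : ℝ => fderiv ℝ f (z + t • ζ) ζ) (D2 f z ζ ζ) 0 := by
  have hl : ∀ t : ℝ, HasDerivAt (fun t : ℝ => z + t • ζ) ζ t := fun t => by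
    simpa using ((hasDerivAt_id t).smul_const ζ).const_add z
  refine ⟨fun t => (diff1 hf (z + t • ζ)).hasFDerivAt.comp_hasDerivAt t (hl t), ?_⟩
  have h3 : HasDerivAt (fun t : ℝ => (fderiv ℝ f (z + t • ζ) : DL E ℝ)) (D2 f z ζ) 0 := by
    have h4 : HasFDerivAt (fderiv ℝ f : E → DL E ℝ) (D2 f z) (z + (0:ℝ) • ζ) := by
      rw [zero_smul, add_zero]; exact (diff2 hf z).hasFDerivAt
    exact h4.comp_hasDerivAt 0 (hl 0)
  exact h3.clm_apply (hasDerivAt_const _ ζ) |>.congr_deriv (by simp)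

lemma fderiv_invar {g : E → ℝ} (hg : Differentiable ℝ g) {ζ : E} (hi : ∀ (t : ℝ) x, g (x + t • ζ) = g x) (x : E) :
    fderiv ℝ g x ζ = 0 := by
  have hl : HasDerivAt (fun t : ℝ => x + t • ζ) ζ 0 := by
    simpa using ((hasDerivAt_id (0:ℝ)).smul_const ζ).const_add x
  have h0 : HasFDerivAt g (fderiv ℝ g x) (x + (0:ℝ) • ζ) := by
    rw [zero_smul, add_zero]; exact (hg x).hasFDerivAt
  have h1 := h0.comp_hasDerivAt 0 hl
  have h2 : HasDerivAt (g ∘ fun t : ℝ => x + t • ζ) 0 0 := by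
    have : (g ∘ fun t : ℝ => x + t • ζ) = fun _ => g x := funext fun t => hi t x
    rw [this]; exact hasDerivAt_const _ _
  exact h1.unique h2

lemma D2_inv {g : E → ℝ} (hg : ContDiff ℝ 2 g) {ζ : E} (hi : ∀ (t : ℝ) x, g (x + t • ζ) = g x) (x η : E) :
    D2 g x ζ η = 0 ∧ D2 g x η ζ = 0 := by
  have h1 : D2 g x η ζ = 0 := by
    have hd : HasFDerivAt (fun y => (fderiv ℝ g y : DL E ℝ) ζ) ((D2 g x).flip ζ) x := by
      have := (diff2 hg x).hasFDerivAt.clm_apply (hasFDerivAt_const ζ x)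
      refine this.congr_fderiv ?_
      ext y; simp [D2]
    have e : (fun y => (fderiv ℝ g y : DL E ℝ) ζ) = fun _ => 0 := funext fun y => fderiv_invar (diff1 hg) hi y
    rw [e] at hd
    have := hd.unique (hasFDerivAt_const _ x)
    exact DFunLike.congr_fun this η
  have hs : IsSymmSndFDerivAt ℝ g x := hg.contDiffAt.isSymmSndFDerivAt (by simp)
  refine ⟨?_, h1⟩
  have := hs.eq ζ η
  exact this.trans h1

theorem base_case (hmn : m ≤ n) (hu : Sol S m L u) (V : Submodule ℝ E) (hVJ : ∀ x ∈ V, S.J x ∈ V)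
    (hV : ∀ v ∈ V, ∀ x, u (x + v) = u x) (hd : 2 * n ≤ Module.finrank ℝ V + 2 * m) (p q : E) : u p ≤ u q := by
  refine le_of_forall_pos_le_add fun ε hε => ?_
  set r := ε / (2 * (|L| + 1)) with hr
  have hr0 : 0 < r := by positivity
  have hrL : |L| * r ≤ ε / 2 := by
    rw [hr, ← mul_div_assoc, div_le_div_iff₀ (by positivity) (by positivity)]
    have := abs_nonneg L
    nlinarith
  obtain ⟨ψ, hψ⟩ := exists_moll (0:E) hr0
  set g := cvv ψ u with hg
  have hgs : ContDiff ℝ 2 g := cvv_smooth hψ.smooth hψ.comp hu.cont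
  have hgi : ∀ v ∈ V, ∀ x, g (x + v) = g x := fun v hv x => cvv_inv (hV v hv) x
  have hq : ∀ x ζ, 0 ≤ S.qf (D2 g x) ζ := fun x ζ =>
    S.qf_nonneg_of_cl hmn (hu.sub ψ hψ.smooth hψ.comp hψ.nonneg x) V hVJ
      (fun ζ hζ η => D2_inv hgs (fun t x => hgi _ (V.smul_mem t hζ) x) x η) hd ζ
  have hg1 : ∀ x, g x ≤ 1 := fun x => (hψ.bounds hu.cont (fun y _ => hu.nonneg _) (fun y _ => hu.le_one _)).2
  set ζ := q - p with hζ
  have key := liouville2D (f := fun z : ℂ => g (p + z.re • ζ + z.im • S.J ζ)) (M := 1)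
    (by have := hgs.continuous; fun_prop) (fun z => hg1 _) ?_ 0 1
  · simp [hζ] at key
    have a := abs_le.1 (hψ.near hu.lip p)
    have b := abs_le.1 (hψ.near hu.lip q)
    simp only [sub_zero] at a b
    linarith [a.1, b.2]
  · intro z
    set x := p + z.re • ζ + z.im • S.J ζ with hx
    obtain ⟨a1, a2⟩ := line_deriv hgs x ζ
    obtain ⟨b1, b2⟩ := line_deriv hgs x (S.J ζ)
    refine ⟨_, _, _, _, fun t => ?_, a2, fun t => ?_, b2, ?_⟩
    · convert a1 t using 3
      simp [hx, add_smul]; abel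
    · convert b1 t using 3
      simp [hx, add_smul]; abel
    · have := hq x ζ
      unfold CS.qf at this
      linarith

end base

end Part7

section Part8

section contact
open Filter Topology
variable {E : Type} [NormedAddCommGroup E] [InnerProductSpace ℝ E] [FiniteDimensional ℝ E]
  [MeasurableSpace E] [BorelSpace E] {n m : ℕ}
variable {S : CS E n} {L : ℝ} {u : E → ℝ}

/-- gradient tensor square -/
def gsq (g : E → ℝ) (z : E) : BB E :=
  ContinuousLinearMap.smulRight (fderiv ℝ g z : DL E ℝ) (fderiv ℝ g z : DL E ℝ)

lemma gsq_apply (g : E → ℝ) (z ζ η : E) : gsq g z ζ η = fderiv ℝ g z ζ * fderiv ℝ g z η := by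
  simp [gsq]

lemma fd_cont {g : E → ℝ} (hg : ContDiff ℝ 2 g) : Continuous (fderiv ℝ g : E → DL E ℝ) :=
  hg.continuous_fderiv two_ne_zero

lemma gsq_cont {g : E → ℝ} (hg : ContDiff ℝ 2 g) : Continuous (gsq g) := by
  have h := fd_cont hg
  unfold gsq
  exact ((ContinuousLinearMap.smulRightL ℝ E (DL E ℝ)).continuous₂).comp (h.prodMk h)

lemma D2_sq {g : E → ℝ} (hg : ContDiff ℝ 2 g) (x : E) :
    D2 (fun z => g z * g z) x = (2 * g x) • D2 g x + (2:ℝ) • gsq g x := by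
  have h1 : fderiv ℝ (fun z => g z * g z) = fun z => ((2 * g z) • fderiv ℝ g z : DL E ℝ) := by
    funext z
    rw [((diff1 hg z).hasFDerivAt.fun_mul (diff1 hg z).hasFDerivAt).fderiv, two_mul, add_smul]
  have h2 : HasFDerivAt (fun z => ((2 * g z) • fderiv ℝ g z : DL E ℝ))
      ((2 * g x) • D2 g x + ContinuousLinearMap.smulRight ((2:ℝ) • fderiv ℝ g x : DL E ℝ) (fderiv ℝ g x : DL E ℝ)) x :=
    ((diff1 hg x).hasFDerivAt.const_mul 2).fun_smul (diff2 hg x).hasFDerivAt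
  unfold D2 at *
  rw [h1, h2.fderiv]
  congr 1
  ext ζ η
  simp [gsq, mul_assoc]

lemma cvv_apply2 {φ : E → ℝ} {T : E → BB E} (hc : HasCompactSupport φ) (hφ : Continuous φ)
    (hT : Continuous T) (x ζ η : E) : cvv φ T x ζ η = ∫ y, φ y * T (x - y) ζ η := by
  have hi := cvv_integrable (Or.inl hc) hφ hT x
  unfold cvv
  have h1 : (∫ y, φ y • T (x - y)) ζ = ∫ y, (φ y • T (x - y)) ζ := ContinuousLinearMap.integral_apply hi ζ
  have hi2 : Integrable fun y => (φ y • T (x - y)) ζ := hi.apply_continuousLinearMap ζ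
  rw [h1]
  have h2 : (∫ y, (φ y • T (x - y)) ζ) η = ∫ y, (φ y • T (x - y)) ζ η := ContinuousLinearMap.integral_apply hi2 η
  rw [h2]
  rfl

/-- local energy -/
def en (S : CS E n) (φ g : E → ℝ) (x ξ : E) : ℝ :=
  ∫ y, φ y * ((fderiv ℝ g (x - y) ξ)^2 + (fderiv ℝ g (x - y) (S.J ξ))^2)

lemma fd_app_cont {g : E → ℝ} (hg : ContDiff ℝ 2 g) (ζ : E) : Continuous fun y => fderiv ℝ g y ζ := by
  have := fd_cont hg
  exact this.clm_apply continuous_const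

lemma en_int {φ g : E → ℝ} (hφ : Continuous φ) (hc : HasCompactSupport φ) (hg : ContDiff ℝ 2 g) (x ξ : E) :
    Integrable fun y => φ y * (fderiv ℝ g (x - y) ξ)^2 := by
  have h := fd_app_cont hg ξ
  refine Continuous.integrable_of_hasCompactSupport ?_ hc.mul_right
  exact hφ.mul ((h.comp (continuous_const.sub continuous_id)).pow 2)

lemma qf_cvv_gsq {φ g : E → ℝ} (hφ : Continuous φ) (hc : HasCompactSupport φ) (hg : ContDiff ℝ 2 g) (x ξ : E) :
    S.qf (cvv φ (gsq g) x) ξ = en S φ g x ξ / 4 := by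
  unfold CS.qf en
  rw [cvv_apply2 hc hφ (gsq_cont hg), cvv_apply2 hc hφ (gsq_cont hg)]
  simp only [gsq_apply]
  congr 1
  rw [← integral_add]
  · congr 1; funext y; ring
  · simpa only [pow_two] using en_int hφ hc hg x ξ
  · simpa only [pow_two] using en_int hφ hc hg x (S.J ξ)

lemma en_J {φ g : E → ℝ} (x ξ : E) : en S φ g x (S.J ξ) = en S φ g x ξ := by
  unfold en
  congr 1; funext y; rw [S.JJ, map_neg]; ring

lemma en_smul {φ g : E → ℝ} (x ξ : E) (t : ℝ) : en S φ g x (t • ξ) = t^2 * en S φ g x ξ := by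
  unfold en
  rw [← integral_const_mul]
  congr 1; funext y; simp only [map_smul, smul_eq_mul]; ring

lemma J_inner (S : CS E n) (x y : E) : inner ℝ (S.J x) (S.J y) = inner ℝ x y := by
  have h := S.nJ (x + y)
  rw [map_add] at h
  have h1 := norm_add_sq_real (S.J x) (S.J y)
  have h2 := norm_add_sq_real x y
  rw [h, S.nJ, S.nJ] at h1
  linarith

lemma J_perp (S : CS E n) {V : Submodule ℝ E} (hVJ : ∀ x ∈ V, S.J x ∈ V) : ∀ x ∈ Vᗮ, S.J x ∈ Vᗮ := by
  intro x hx
  rw [Submodule.mem_orthogonal] at *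
  intro v hv
  have h := J_inner S v (S.J x)
  rw [S.JJ, inner_neg_right, hx _ (hVJ v hv)] at h
  linarith

/-- squared projection onto the orthogonal complement -/
def B0 (S : CS E n) (V : Submodule ℝ E) : BB E :=
  ((ContinuousLinearMap.compL ℝ E E ℝ).flip (Vᗮ.starProjection) : DL E ℝ →L[ℝ] DL E ℝ).comp
    (S.ip.comp Vᗮ.starProjection)

lemma B0_apply (V : Submodule ℝ E) (ζ : E) : B0 S V ζ ζ = ‖Vᗮ.starProjection ζ‖^2 := by
  rw [← real_inner_self_eq_norm_sq, ← S.ip_apply]; rfl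

lemma B0_mem (hmn : m ≤ n) {V : Submodule ℝ E} (hVJ : ∀ x ∈ V, S.J x ∈ V)
    (hd : Module.finrank ℝ V + 2 * m ≤ 2 * n) : B0 S V ∈ S.Kf m := by
  refine S.K_of_pos hmn (fun ζ => ?_) Vᗮ (J_perp S hVJ) (fun ζ hζ h0 => ?_) ?_
  · unfold CS.qf; rw [B0_apply, B0_apply]; positivity
  · unfold CS.qf; rw [B0_apply, B0_apply, Submodule.starProjection_eq_self_iff.2 hζ]
    have := norm_pos_iff.2 h0
    positivity
  · have := V.finrank_add_finrank_orthogonal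
    rw [S.finrank_E] at this
    omega

theorem contact (hmn : m ≤ n) (hu : Sol S m L u) {V : Submodule ℝ E} (hVJ : ∀ x ∈ V, S.J x ∈ V)
    (hd : Module.finrank ℝ V + 2 * m ≤ 2 * n) {g φ τ : E → ℝ} (hg : ContDiff ℝ 2 g)
    (hg0 : ∀ x, 0 ≤ g x) (hgK : ∀ x, D2 g x ∈ closure (S.Kf m)) (hgV : ∀ v ∈ V, ∀ x, g (x + v) = g x)
    (hφ : Continuous φ) (hφc : HasCompactSupport φ) (hφ0 : ∀ y, 0 ≤ φ y)
    (hτ : ContDiff ℝ 2 τ) (hτK : ∀ x, D2 τ x ∈ closure (S.Kf m)) {δ c C : ℝ} (hδ : 0 < δ) (hc : 0 < c) {q : E}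
    (hC : ∀ x, τ x + δ * cvv φ (fun z => g z * g z) x - u x ≤ C)
    (H : ∀ x, τ q + δ * cvv φ (fun z => g z * g z) q - u q ≤ τ x + δ * cvv φ (fun z => g z * g z) x - u x →
      ∀ ξ ∈ Vᗮ, ‖ξ‖ = 1 → c ≤ en S φ g x ξ) : False := by
  set w := cvv φ (fun z => g z * g z) with hw
  have hg2 : ContDiff ℝ 2 fun z => g z * g z := hg.mul hg
  have hws : ContDiff ℝ 2 w := cvv_contDiff2 (Or.inl hφc) hφ hg2
  obtain ⟨ε, hε, hεK⟩ : ∃ ε : ℝ, 0 < ε ∧ (δ * c) • B0 S V - ε • ((2:ℝ) • S.ip) ∈ S.Kf m := by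
    have h0 : (δ * c) • B0 S V ∈ S.Kf m := S.K_smul hmn (by positivity) (B0_mem hmn hVJ hd)
    have hcont : Continuous fun ε : ℝ => (δ * c) • B0 S V - ε • ((2:ℝ) • S.ip) :=
      continuous_const.sub (continuous_id.smul continuous_const)
    have : ∀ᶠ ε : ℝ in 𝓝 0, (δ * c) • B0 S V - ε • ((2:ℝ) • S.ip) ∈ S.Kf m := by
      apply hcont.continuousAt.eventually
      apply S.K_open.mem_nhds
      simpa using h0
    have h2 := (this.filter_mono nhdsWithin_le_nhds).and (self_mem_nhdsWithin (s := Set.Ioi (0:ℝ)))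
    obtain ⟨ε, h3, h4⟩ := h2.exists
    exact ⟨ε, h4, h3⟩
  have hqs : ContDiff ℝ 2 fun z => ε * ‖z - q‖^2 := contDiff_const.mul (quad_contDiff q)
  have hδw : ContDiff ℝ 2 fun z => δ * w z := contDiff_const.mul hws
  have hτw : ContDiff ℝ 2 fun z => τ z + δ * w z := hτ.add hδw
  set h : E → ℝ := fun z => (τ z + δ * w z) - ε * ‖z - q‖^2 with hh
  have hhs : ContDiff ℝ 2 h := hτw.sub hqs
  obtain ⟨x, hx⟩ : ∃ x, ∀ y, u x - h x ≤ u y - h y := by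
    have hcc : Continuous fun y => u y - h y := hu.cont.sub hhs.continuous
    refine hcc.exists_forall_le' q ?_
    set R := (|C - (τ q + δ * w q - u q)|) / ε + 1 with hR
    filter_upwards [(isCompact_closedBall q R).compl_mem_cocompact] with y hy
    have hy' : R < ‖y - q‖ := by
      rw [← dist_eq_norm]; simpa using hy
    have h1 := hC y
    have hA := le_abs_self (C - (τ q + δ * w q - u q))
    have hA0 := abs_nonneg (C - (τ q + δ * w q - u q))
    have hR1 : 1 ≤ R := by rw [hR]; have : 0 ≤ |C - (τ q + δ * w q - u q)| / ε := by positivity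
                           linarith
    have h2 : R ≤ ‖y - q‖^2 := by nlinarith
    have h3 : |C - (τ q + δ * w q - u q)| ≤ ε * ‖y - q‖^2 := by
      have : |C - (τ q + δ * w q - u q)| ≤ ε * R := by rw [hR, mul_add, mul_div_cancel₀ _ hε.ne']; linarith
      nlinarith
    simp only [hh, sub_self, norm_zero]
    norm_num
    linarith
  refine hu.touch hhs hx ?_
  have hxF := hx q
  simp only [hh, sub_self, norm_zero] at hxF
  have hHx := H x (by have : 0 ≤ ε * ‖x - q‖^2 := by positivity
                      linarith)
  rw [D2_sub hτw hqs, D2_add hτ hδw, D2_smul _ hws, D2_smul _ (quad_contDiff q), D2_quad S, hw,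
    cvv_D2 (Or.inl hφc) hφ hg2]
  have hD : cvv φ (D2 fun z => g z * g z) x = cvv φ (fun z => (2 * g z) • D2 g z) x + (2:ℝ) • cvv φ (gsq g) x := by
    have e : (D2 fun z => g z * g z) = fun z => (2 * g z) • D2 g z + (2:ℝ) • gsq g z := funext fun z => D2_sq hg z
    rw [e]
    unfold cvv
    rw [← integral_smul, ← integral_add]
    · congr 1; funext y; rw [smul_add, smul_comm (φ y) (2:ℝ)]
    · exact cvv_integrable (f := fun z => (2 * g z) • D2 g z) (Or.inl hφc) hφ
        ((continuous_const.mul hg.continuous).smul (D2_continuous hg)) x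
    · exact (cvv_integrable (Or.inl hφc) hφ (gsq_cont hg) x).smul (2:ℝ)
  have k1 : cvv φ (fun z => (2 * g z) • D2 g z) x ∈ closure (S.Kf m) :=
    S.cvv_mem_cl hmn hφc hφ ((continuous_const.mul hg.continuous).smul (D2_continuous hg)) hφ0 x
      fun y => S.K_cl_smul hmn (mul_nonneg zero_le_two (hg0 _)) (hgK _)
  have hen : ∀ ζ, c * ‖Vᗮ.starProjection ζ‖^2 ≤ en S φ g x ζ := by
    intro ζ
    have e1 : en S φ g x ζ = en S φ g x (Vᗮ.starProjection ζ) := by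
      have hm : ζ - Vᗮ.starProjection ζ ∈ V := by
        have := Submodule.sub_starProjection_mem_orthogonal (K := Vᗮ) ζ
        rwa [Submodule.orthogonal_orthogonal] at this
      have hz : ∀ v ∈ V, ∀ y, fderiv ℝ g y v = 0 := fun v hv y =>
        fderiv_invar (diff1 hg) (fun t x => hgV _ (V.smul_mem t hv) x) y
      unfold en
      congr 1; funext y
      have z1 := hz _ hm (x - y)
      have z2 := hz _ (hVJ _ hm) (x - y)
      rw [map_sub, sub_eq_zero] at z1
      rw [map_sub, map_sub, sub_eq_zero] at z2
      rw [z1, z2]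
    rw [e1]
    set ξ := Vᗮ.starProjection ζ with hξ
    have hξm : ξ ∈ Vᗮ := Submodule.starProjection_apply_mem _ _
    by_cases h0 : ξ = 0
    · have := en_smul (S := S) (φ := φ) (g := g) x (0:E) 0
      rw [h0]; simp at this ⊢; rw [this]
    · have hn : ‖ξ‖ ≠ 0 := norm_ne_zero_iff.2 h0
      have := hHx (‖ξ‖⁻¹ • ξ) (Submodule.smul_mem _ _ hξm) (by rw [norm_smul, norm_inv, norm_norm, inv_mul_cancel₀ hn])
      rw [en_smul, inv_pow] at this
      have hp : 0 < ‖ξ‖^2 := by positivity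
      calc c * ‖ξ‖^2 ≤ ((‖ξ‖^2)⁻¹ * en S φ g x ξ) * ‖ξ‖^2 := by gcongr
        _ = en S φ g x ξ := by field_simp
  have k2 : (2:ℝ) • cvv φ (gsq g) x + (-c) • B0 S V ∈ closure (S.Kf m) := by
    refine S.K_cl_of_nonneg hmn fun ζ => ?_
    rw [S.qf_add, S.qf_smul, S.qf_smul, qf_cvv_gsq hφ hφc hg]
    unfold CS.qf
    rw [B0_apply, B0_apply]
    have a := hen ζ
    have b := hen (S.J ζ)
    rw [en_J] at b
    linarith
  have k3 : D2 τ x + δ • (cvv φ (fun z => (2 * g z) • D2 g z) x + ((2:ℝ) • cvv φ (gsq g) x + (-c) • B0 S V)) ∈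
      closure (S.Kf m) := S.K_cl_add hmn (hτK x) (S.K_cl_smul hmn hδ.le (S.K_cl_add hmn k1 k2))
  have k4 := S.K_add_cl hmn hεK k3
  convert k4 using 1
  rw [hD]
  module

end contact

end Part8

section Part9

section step
open Filter Topology
variable {E : Type} [NormedAddCommGroup E] [InnerProductSpace ℝ E] [FiniteDimensional ℝ E]
  [MeasurableSpace E] [BorelSpace E] {n m : ℕ}
variable {S : CS E n} {L : ℝ} {u : E → ℝ}

lemma energy_bound {g φ χ : E → ℝ} (hg : ContDiff ℝ 2 g) (hφ : Continuous φ) (hφc : HasCompactSupport φ)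
    (hφ0 : ∀ y, 0 ≤ φ y) (hχ : Continuous χ) (hχc : HasCompactSupport χ) (hχ0 : ∀ y, 0 ≤ χ y)
    (x₀ x η : E) {κ : ℝ} (hκ : 0 < κ) (h : ∀ y, χ y ≠ 0 → 1 ≤ φ (y - x)) :
    |fderiv ℝ (cvv χ g) (x + x₀) η| ≤ (κ * ∫ y, (χ y)^2) + κ⁻¹ * ∫ y, φ y * (fderiv ℝ g (x₀ - y) η)^2 := by
  have hg1 : ContDiff ℝ 1 g := hg.of_le (by norm_num)
  have hi := cvv_integrable (F := DL E ℝ) (Or.inl hχc) hχ (fd_cont hg) (x + x₀)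
  have e : fderiv ℝ (cvv χ g) (x + x₀) η = ∫ y, χ y * fderiv ℝ g (x + x₀ - y) η := by
    rw [cvv_fderiv (Or.inl hχc) hχ hg1]
    unfold cvv
    have h1 : (∫ y, χ y • (fderiv ℝ g (x + x₀ - y) : DL E ℝ)) η = ∫ y, (χ y • (fderiv ℝ g (x + x₀ - y) : DL E ℝ)) η :=
      ContinuousLinearMap.integral_apply hi η
    rw [h1]; rfl
  have i1 : Integrable fun y => (χ y)^2 := by
    refine Continuous.integrable_of_hasCompactSupport (hχ.pow 2) ?_
    simp only [pow_two]; exact hχc.mul_right (f' := χ)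
  have i2 := en_int hφ hφc hg x₀ η
  have i3 : Integrable fun y => φ (y - x) * (fderiv ℝ g (x₀ - (y - x)) η)^2 := i2.comp_sub_right x
  have e3 : ∫ y, φ y * (fderiv ℝ g (x₀ - y) η)^2 = ∫ y, φ (y - x) * (fderiv ℝ g (x₀ - (y - x)) η)^2 :=
    (integral_sub_right_eq_self (fun y => φ y * (fderiv ℝ g (x₀ - y) η)^2) x).symm
  rw [e, e3, ← integral_const_mul, ← integral_const_mul, ← integral_add (i1.const_mul _) (i3.const_mul _)]
  rw [← Real.norm_eq_abs]
  refine norm_integral_le_of_norm_le ((i1.const_mul _).add (i3.const_mul _)) (Eventually.of_forall fun y => ?_)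
  have ex : x₀ - (y - x) = x + x₀ - y := by abel
  simp only [ex]
  set D := fderiv ℝ g (x + x₀ - y) η
  rw [Real.norm_eq_abs, abs_mul, abs_of_nonneg (hχ0 y)]
  by_cases hy : χ y = 0
  · have := hφ0 (y - x)
    rw [hy]; simp; positivity
  · have h1 := h y hy
    have h2 : χ y * |D| ≤ κ * (χ y)^2 + κ⁻¹ * |D|^2 := by
      have h3 : 0 ≤ κ⁻¹ * (κ * χ y - |D|)^2 := by positivity
      have h4 : κ⁻¹ * (κ * χ y - |D|)^2 = κ * (χ y)^2 + κ⁻¹ * |D|^2 - 2 * (χ y * |D|) := by field_simp; ring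
      have := mul_nonneg (hχ0 y) (abs_nonneg D)
      linarith
    rw [sq_abs] at h2
    have h5 : κ⁻¹ * D^2 ≤ κ⁻¹ * (φ (y - x) * D^2) := by
      have : 0 ≤ D^2 := sq_nonneg _
      gcongr
      nlinarith
    linarith

lemma inv_limit {l : Filter ℕ} [l.NeBot] {fi : ℕ → E → ℝ} {v χ : E → ℝ} {ηi : ℕ → E} {η : E}
    (hfi : ∀ i, Continuous (fi i)) (hv : Continuous v)
    (H : ∀ s : Set E, IsCompact s → ∀ ε > 0, ∀ᶠ i in l, ∀ y ∈ s, |fi i y - v y| ≤ ε)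
    (hη : Tendsto ηi l (𝓝 η)) (hχ : ContDiff ℝ 2 χ) (hχc : HasCompactSupport χ) (x : E)
    (hD : Tendsto (fun i => fderiv ℝ (cvv χ (fi i)) x (ηi i)) l (𝓝 0)) : fderiv ℝ (cvv χ v) x η = 0 := by
  have e : ∀ w : E → ℝ, Continuous w → fderiv ℝ (cvv χ w) x = (cvv w (fderiv ℝ χ) x : DL E ℝ) := fun w hw => by
    have : cvv χ w = cvv w χ := funext fun x => cvv_comm _ _ _
    rw [this, cvv_fderiv (Or.inr hχc) hw (hχ.of_le (by norm_num))]
  have h1 : Tendsto (fun i => (cvv (fi i) (fderiv ℝ χ) x : DL E ℝ)) l (𝓝 (cvv v (fderiv ℝ χ) x)) :=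
    cvv_tendsto (F := DL E ℝ) (fd_cont hχ) (hχc.fderiv ℝ) hfi hv H x
  have h2 : Tendsto (fun i => (cvv (fi i) (fderiv ℝ χ) x : DL E ℝ) (ηi i)) l (𝓝 ((cvv v (fderiv ℝ χ) x : DL E ℝ) η)) :=
    ((isBoundedBilinearMap_apply (𝕜 := ℝ) (E := E) (F := ℝ)).continuous.tendsto
      ((cvv v (fderiv ℝ χ) x : DL E ℝ), η)).comp (h1.prodMk_nhds hη)
  rw [e v hv]
  refine tendsto_nhds_unique h2 ?_
  refine hD.congr fun i => ?_
  rw [e _ (hfi i)]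

lemma inv_of_moll {v : E → ℝ} {η : E} (hl : ∀ x y, |v x - v y| ≤ L * ‖x - y‖)
    (H : ∀ r > 0, ∀ χ : E → ℝ, IsMoll χ 0 r → ∀ x, fderiv ℝ (cvv χ v) x η = 0) (x : E) (t : ℝ) :
    v (x + t • η) = v x := by
  have hv := cont_of_lip hl
  have key : ∀ r > 0, |v (x + t • η) - v x| ≤ 2 * |L| * r := by
    intro r hr
    obtain ⟨χ, hχ⟩ := exists_moll (0:E) hr
    have hs := cvv_smooth hχ.smooth hχ.comp hv
    have hc : cvv χ v (x + t • η) = cvv χ v x := by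
      have hd := (line_deriv hs x η).1
      have : ∀ s, HasDerivAt (fun t : ℝ => cvv χ v (x + t • η)) 0 s := fun s => by
        have := hd s; rwa [H r hr χ hχ] at this
      have := is_const_of_deriv_eq_zero (f := fun t : ℝ => cvv χ v (x + t • η))
        (fun s => (this s).differentiableAt) (fun s => (this s).deriv) t 0
      simpa using this
    have a := abs_le.1 (hχ.near hl x)
    have b := abs_le.1 (hχ.near hl (x + t • η))
    rw [hc] at b
    simp only [sub_zero] at a b
    rw [abs_le]; constructor <;> linarith [a.1, a.2, b.1, b.2]
  have h0 : |v (x + t • η) - v x| ≤ 0 := by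
    refine le_of_forall_pos_le_add fun ε hε => ?_
    have := key (ε / (2 * |L| + 1)) (by positivity)
    refine this.trans ?_
    rw [zero_add, mul_div_assoc', div_le_iff₀ (by positivity)]
    nlinarith
  have := abs_nonpos_iff.1 h0
  linarith

lemma exists_big (R : ℝ) (hR : 0 < R) : ∃ φ : E → ℝ, Continuous φ ∧ HasCompactSupport φ ∧ (∀ y, 0 ≤ φ y) ∧
    (∀ y, ‖y‖ ≤ R → 1 ≤ φ y) ∧ 0 < ∫ y, φ y := by
  let f : ContDiffBump (0:E) := ⟨R, R + 1, hR, by linarith⟩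
  refine ⟨f, f.continuous, f.hasCompactSupport, fun y => f.nonneg, fun y hy => ?_, f.integral_pos⟩
  rw [f.one_of_mem_closedBall (by simpa using hy)]

lemma pick (hmn : m ≤ n) (hu : Sol S m L u) {V : Submodule ℝ E} (hVJ : ∀ x ∈ V, S.J x ∈ V)
    (hV : ∀ v ∈ V, ∀ x, u (x + v) = u x)
    (hd : Module.finrank ℝ V + 2 * m ≤ 2 * n) {θ : E → ℝ} {c q : E} {r a : ℝ} (hθ : IsMoll θ c r) (ha : 0 < a)
    (hq : 2 * a ≤ cvv θ u q - u q) (N : ℕ) :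
    ∃ (g φ : E → ℝ) (x ξ : E), ContDiff ℝ 2 g ∧ (∀ z, |g z - u z| ≤ 1 / ((N:ℝ) + 1)) ∧
      Continuous φ ∧ HasCompactSupport φ ∧ (∀ y, 0 ≤ φ y) ∧ (∀ y, ‖y‖ ≤ N + 1 → 1 ≤ φ y) ∧
      a ≤ cvv θ u x - u x ∧ ξ ∈ Vᗮ ∧ ‖ξ‖ = 1 ∧ en S φ g x ξ < (1 / ((N:ℝ) + 1))^2 := by
  have hN : 0 < 1 / ((N:ℝ) + 1) := by positivity
  obtain ⟨ψ, hψ⟩ := exists_moll (0:E) (show 0 < (1 / ((N:ℝ) + 1)) / (|L| + 1) by positivity)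
  set g := cvv ψ u with hg
  have hgs : ContDiff ℝ 2 g := cvv_smooth hψ.smooth hψ.comp hu.cont
  have hgu : ∀ z, |g z - u z| ≤ 1 / ((N:ℝ) + 1) := fun z => by
    have := hψ.near hu.lip z
    rw [sub_zero] at this
    refine this.trans ?_
    rw [mul_div_assoc', div_le_iff₀ (by positivity)]
    nlinarith [abs_nonneg L]
  have hg0 : ∀ x, 0 ≤ g x := fun x => (hψ.bounds hu.cont (fun y _ => hu.nonneg _) (fun y _ => hu.le_one _)).1
  have hg1 : ∀ x, g x ≤ 1 := fun x => (hψ.bounds hu.cont (fun y _ => hu.nonneg _) (fun y _ => hu.le_one _)).2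
  have hτ1 : ∀ x, cvv θ u x ≤ 1 := fun x => (hθ.bounds hu.cont (fun y _ => hu.nonneg _) (fun y _ => hu.le_one _)).2
  obtain ⟨φ, hφ, hφc, hφ0, hφ1, hφi⟩ := exists_big (E := E) ((N:ℝ) + 1) (by positivity)
  have hφI : Integrable φ := hφ.integrable_of_hasCompactSupport hφc
  set w := cvv φ (fun z => g z * g z) with hw
  have hw0 : ∀ x, 0 ≤ w x := fun x => integral_nonneg fun y => mul_nonneg (hφ0 y) (mul_self_nonneg _)
  have hw1 : ∀ x, w x ≤ ∫ y, φ y := fun x => by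
    refine integral_mono (cvv_integrable (Or.inl hφc) hφ (hgs.continuous.mul hgs.continuous) x) hφI fun y => ?_
    have : g (x - y) * g (x - y) ≤ 1 := mul_le_one₀ (hg1 _) (hg0 _) (hg1 _)
    exact mul_le_of_le_one_right (hφ0 y) this
  set δ := a / ∫ y, φ y with hδ
  have hδ0 : 0 < δ := by positivity
  have hδw : ∀ x, δ * w x ≤ a := fun x => by
    calc δ * w x ≤ δ * ∫ y, φ y := by gcongr; exact hw1 x
      _ = a := by rw [hδ]; field_simp
  by_contra hcon
  refine contact hmn hu hVJ hd hgs hg0 (fun x => hu.sub ψ hψ.smooth hψ.comp hψ.nonneg x)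
    (fun v hv x => cvv_inv (hV v hv) x) hφ hφc hφ0 (τ := cvv θ u) (cvv_smooth hθ.smooth hθ.comp hu.cont)
    (fun x => hu.sub θ hθ.smooth hθ.comp hθ.nonneg x) (δ := δ) (c := (1 / ((N:ℝ) + 1))^2) (C := 1 + a) (q := q)
    hδ0 (by positivity) (fun x => ?_) (fun x hx ξ hξ hξ1 => ?_)
  · have := hδw x
    rw [hw] at this
    linarith [hτ1 x, hu.nonneg x]
  · by_contra hlt
    push Not at hlt
    refine hcon ⟨g, φ, x, ξ, hgs, hgu, hφ, hφc, hφ0, hφ1, ?_, hξ, hξ1, hlt⟩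
    have h1 := hδw x
    have h2 := mul_nonneg hδ0.le (hw0 q)
    rw [hw] at h1 h2
    linarith

theorem step (hmn : m ≤ n) (hu : Sol S m L u) {V : Submodule ℝ E} (hVJ : ∀ x ∈ V, S.J x ∈ V)
    (hV : ∀ v ∈ V, ∀ x, u (x + v) = u x)
    (hd : Module.finrank ℝ V + 2 * m ≤ 2 * n) {p q : E} (hpq : u q < u p) :
    ∃ (v : E → ℝ) (ξ : E), Sol S m L v ∧ (∀ w ∈ V, ∀ x, v (x + w) = v x) ∧ ξ ∈ Vᗮ ∧ ξ ≠ 0 ∧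
      (∀ x (t : ℝ), v (x + t • ξ) = v x) ∧ (∀ x (t : ℝ), v (x + t • S.J ξ) = v x) ∧ ∃ p q, v q < v p := by
  set a := (u p - u q) / 4 with ha
  have ha0 : 0 < a := by rw [ha]; linarith
  obtain ⟨θ, hθ⟩ := exists_moll (q - p) (show 0 < 2 * a / (|L| + 1) by positivity)
  have hq : 2 * a ≤ cvv θ u q - u q := by
    have h1 := (abs_le.1 (hθ.near hu.lip q)).1
    have h2 : |L| * (2 * a / (|L| + 1)) ≤ 2 * a := by
      rw [mul_div_assoc', div_le_iff₀ (by positivity)]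
      nlinarith [abs_nonneg L]
    rw [sub_sub_cancel] at h1
    have : u p - u q = 4 * a := by rw [ha]; ring
    linarith
  choose g φ x ξ hgs hgu hφ hφc hφ0 hφ1 hax hξV hξ1 hen using fun N => pick hmn hu hVJ hV hd hθ ha0 hq N
  set l : Filter ℕ := (hyperfilter ℕ : Filter ℕ) with hl
  have hlt : l ≤ atTop := by rw [← Nat.cofinite_eq_atTop]; exact hyperfilter_le_cofinite
  have hinv : Tendsto (fun N : ℕ => 1 / ((N:ℝ) + 1)) l (𝓝 0) :=
    tendsto_one_div_add_atTop_nhds_zero_nat.mono_left hlt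
  have hvex : ∀ z, ∃ y, Tendsto (fun k => u (z + x k)) l (𝓝 y) := fun z => by
    obtain ⟨y, -, hy⟩ := (isCompact_Icc (a := (0:ℝ)) (b := 1)).ultrafilter_le_nhds
      ((hyperfilter ℕ).map (fun k => u (z + x k)))
      (le_principal_iff.2 (Filter.mem_map.2 (univ_mem' fun k => ⟨hu.nonneg _, hu.le_one _⟩)))
    exact ⟨y, hy⟩
  choose v hv using hvex
  obtain ⟨ξ', hξ's, hξ'⟩ : ∃ y ∈ sphere (0:E) 1, Tendsto ξ l (𝓝 y) := by
    obtain ⟨y, h1, hy⟩ := (isCompact_sphere (0:E) 1).ultrafilter_le_nhds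
      ((hyperfilter ℕ).map ξ)
      (le_principal_iff.2 (Filter.mem_map.2 (univ_mem' fun k => by simp [hξ1 k])))
    exact ⟨y, h1, hy⟩
  have hsol : Sol S m L v := Sol.limit (ui := fun k z => u (z + x k)) (fun k => hu.trans (x k)) hv
  have hunif : ∀ s : Set E, IsCompact s → ∀ ε > 0, ∀ᶠ i in l, ∀ y ∈ s, |u (y + x i) - v y| ≤ ε :=
    fun s hsc ε hε => unif_of_lip (ui := fun k z => u (z + x k)) (fun i => (hu.trans (x i)).lip) hsol.lip hv hsc hε
  have hunif' : ∀ s : Set E, IsCompact s → ∀ ε > 0, ∀ᶠ i in l, ∀ y ∈ s, |g i (y + x i) - v y| ≤ ε := by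
    intro s hs ε hε
    filter_upwards [hunif s hs (ε/2) (by positivity), hinv.eventually (gt_mem_nhds (show 0 < ε / 2 by positivity))]
      with i h1 h2 y hy
    have a1 := abs_le.1 (h1 y hy)
    have a2 := abs_le.1 (hgu i (y + x i))
    rw [abs_le]; constructor <;> linarith [a1.1, a1.2, a2.1, a2.2]
  have hdir : ∀ (η : ℕ → E) (η' : E), Tendsto η l (𝓝 η') →
      (∀ i, ∫ y, φ i y * (fderiv ℝ (g i) (x i - y) (η i))^2 ≤ (1 / ((i:ℝ) + 1))^2) →
      ∀ z (t : ℝ), v (z + t • η') = v z := by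
    intro η η' hη hb
    refine inv_of_moll hsol.lip fun r hr χ hχ z => ?_
    refine inv_limit (fi := fun i z => g i (z + x i)) (fun i => (hgs i).continuous.comp (by fun_prop)) hsol.cont hunif'
      hη hχ.smooth hχ.comp z ?_
    have hlim : Tendsto (fun N : ℕ => (1 / ((N:ℝ) + 1)) * ((∫ y, (χ y)^2) + 1)) l (𝓝 0) := by
      simpa using hinv.mul_const ((∫ y, (χ y)^2) + 1)
    refine squeeze_zero_norm' ?_ hlim
    filter_upwards [hlt (eventually_ge_atTop (Nat.ceil (‖z‖ + r)))] with i hi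
    have hi' : ‖z‖ + r ≤ i := (Nat.le_ceil _).trans (by exact_mod_cast hi)
    have e : fderiv ℝ (cvv χ (fun z => g i (z + x i))) z = fderiv ℝ (cvv χ (g i)) (z + x i) := by
      have : cvv χ (fun z => g i (z + x i)) = fun z => cvv χ (g i) (z + x i) := funext fun z => cvv_trans _ _ _ _
      rw [this]; exact fderiv_comp_add_right _
    rw [e, Real.norm_eq_abs]
    have hp : 0 < 1 / ((i:ℝ) + 1) := by positivity
    refine (energy_bound (hgs i) (hφ i) (hφc i) (hφ0 i) hχ.smooth.continuous hχ.comp hχ.nonneg (x i) z (η i)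
      hp (fun y hy => hφ1 i _ ?_)).trans ?_
    · have h1 := hχ.supp y hy
      rw [sub_zero] at h1
      have := norm_sub_le y z
      linarith
    · have := mul_le_mul_of_nonneg_left (hb i) (inv_nonneg.2 hp.le)
      rw [pow_two, inv_mul_cancel_left₀ hp.ne'] at this
      linarith
  refine ⟨v, ξ', hsol, ?_, ?_, ?_, ?_, ?_, ?_⟩
  · intro w hw z
    refine tendsto_nhds_unique (hv (z + w)) ((hv z).congr fun k => ?_)
    rw [add_right_comm, hV w hw]
  · exact Vᗮ.closed_of_finiteDimensional.mem_of_tendsto hξ' (Eventually.of_forall hξV)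
  · rintro rfl; simp at hξ's
  · refine hdir ξ ξ' hξ' fun i => ?_
    refine le_trans ?_ (hen i).le
    refine integral_mono (en_int (hφ i) (hφc i) (hgs i) _ _) ?_ fun y => ?_
    · have := (en_int (hφ i) (hφc i) (hgs i) (x i) (ξ i)).add (en_int (hφ i) (hφc i) (hgs i) (x i) (S.J (ξ i)))
      refine this.congr (Eventually.of_forall fun y => ?_)
      simp only [Pi.add_apply]; ring
    · exact mul_le_mul_of_nonneg_left (le_add_of_nonneg_right (sq_nonneg _)) (hφ0 i y)
  · refine hdir (fun i => S.J (ξ i)) (S.J ξ') ((S.J.continuous.tendsto _).comp hξ') fun i => ?_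
    refine le_trans ?_ (hen i).le
    refine integral_mono (en_int (hφ i) (hφc i) (hgs i) _ _) ?_ fun y => ?_
    · have := (en_int (hφ i) (hφc i) (hgs i) (x i) (ξ i)).add (en_int (hφ i) (hφc i) (hgs i) (x i) (S.J (ξ i)))
      refine this.congr (Eventually.of_forall fun y => ?_)
      simp only [Pi.add_apply]; ring
    · exact mul_le_mul_of_nonneg_left (le_add_of_nonneg_left (sq_nonneg _)) (hφ0 i y)
  · by_contra hcon
    push Not at hcon
    have h1 : cvv θ v 0 ≤ v 0 :=
      (hθ.bounds hsol.cont (A := 0) (B := v 0) (fun y _ => hsol.nonneg _) (fun y _ => hcon _ _)).2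
    have h2 : Tendsto (fun i => cvv (fun z => u (z + x i)) θ 0) l (𝓝 (cvv v θ 0)) :=
      cvv_tendsto hθ.smooth.continuous hθ.comp (fun i => (hu.trans (x i)).cont) hsol.cont hunif 0
    have h3 := ge_of_tendsto (h2.sub (hv 0)) (b := a) (Eventually.of_forall fun i => by
      rw [cvv_comm, cvv_trans, zero_add]; exact hax i)
    rw [cvv_comm] at h3
    linarith

end step

end Part9

section final
open Filter Topology
variable {E : Type} [NormedAddCommGroup E] [InnerProductSpace ℝ E] [FiniteDimensional ℝ E]
  [MeasurableSpace E] [BorelSpace E] {n m : ℕ}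
variable {S : CS E n} {L : ℝ}

theorem Sol.const (hmn : m ≤ n) : ∀ (N : ℕ) (V : Submodule ℝ E) (u : E → ℝ), 2 * n ≤ Module.finrank ℝ V + N →
    Sol S m L u → (∀ x ∈ V, S.J x ∈ V) → (∀ v ∈ V, ∀ x, u (x + v) = u x) → ∀ p q, u p ≤ u q := by
  intro N
  induction N with
  | zero =>
    intro V u hN hu hVJ hV
    exact base_case hmn hu V hVJ hV (by omega)
  | succ N ih =>
    intro V u hN hu hVJ hV p q
    by_cases hd : 2 * n ≤ Module.finrank ℝ V + 2 * m
    · exact base_case hmn hu V hVJ hV hd p q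
    by_contra hlt
    push Not at hlt
    obtain ⟨v, ξ, hv, hvV, hξ, hξ0, h1, h2, p', q', hpq⟩ := step hmn hu hVJ hV (by omega) hlt
    set W : Submodule ℝ E := V ⊔ Submodule.span ℝ {ξ, S.J ξ} with hW
    have hξW : ξ ∈ W := Submodule.mem_sup_right (Submodule.subset_span (by simp))
    have hξV : ξ ∉ V := fun h => hξ0 (by
      have := (Submodule.mem_orthogonal V ξ).1 hξ ξ h
      exact inner_self_eq_zero.1 this)
    have hlt' : V < W := lt_of_le_of_ne le_sup_left fun h => hξV (h ▸ hξW)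
    have hfr := Submodule.finrank_lt_finrank_of_lt hlt'
    have hdec : ∀ x ∈ W, ∃ y ∈ V, ∃ s t : ℝ, x = y + (s • ξ + t • S.J ξ) := by
      intro x hx
      obtain ⟨y, hy, z, hz, rfl⟩ := Submodule.mem_sup.1 hx
      obtain ⟨s, t, rfl⟩ := Submodule.mem_span_pair.1 hz
      exact ⟨y, hy, s, t, rfl⟩
    have := ih W v (by omega) hv ?_ ?_ p' q'
    · linarith
    · intro x hx
      obtain ⟨y, hy, s, t, rfl⟩ := hdec x hx
      rw [map_add, map_add, map_smul, map_smul, S.JJ]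
      refine Submodule.add_mem _ (Submodule.mem_sup_left (hVJ y hy)) (Submodule.mem_sup_right ?_)
      exact Submodule.mem_span_pair.2 ⟨-t, s, by module⟩
    · intro w hw x
      obtain ⟨y, hy, s, t, rfl⟩ := hdec w hw
      rw [← add_assoc, ← add_assoc, h2, h1, hvV y hy]

theorem const_abs (hmn : m ≤ n) {u : E → ℝ} (hu : ContDiff ℝ 2 u) (hb : ∃ M : ℝ, ∀ z, |u z| ≤ M)
    (hg : ∃ C : ℝ, ∀ z, ‖(fderiv ℝ u z : DL E ℝ)‖ ≤ C)
    (hK : ∀ z, D2 u z ∈ closure (S.Kf m) ∧ D2 u z ∉ S.Kf m) : ∀ z w, u z = u w := by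
  obtain ⟨M, hM⟩ := hb
  obtain ⟨C, hC⟩ := hg
  have hM0 : 0 ≤ M := (abs_nonneg _).trans (hM 0)
  set c := (2 * M + 1)⁻¹ with hc
  have hc0 : 0 < c := by positivity
  have hcM : c * (2 * M + 1) = 1 := by rw [hc]; field_simp
  have hcd : ContDiff ℝ 2 fun _ : E => c * M := contDiff_const
  have hcu : ContDiff ℝ 2 fun z => c * u z := contDiff_const.mul hu
  set f : E → ℝ := fun z => c * u z + c * M with hf
  have hD : ∀ z, D2 f z = c • D2 u z := fun z => by
    rw [hf, D2_add hcu hcd, D2_smul _ hu]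
    have : D2 (fun _ : E => c * M) z = 0 := by
      unfold D2
      have : fderiv ℝ (fun _ : E => c * M) = fun _ => (0 : DL E ℝ) := funext fun z => fderiv_const_apply _
      rw [this]; exact fderiv_const_apply _
    rw [this, add_zero]
  have hsol : Sol S m (c * C) f := by
    refine Sol.of_C2 hmn (hcu.add hcd) ?_ ?_ ?_ ?_
    · intro x
      have := (abs_le.1 (hM x)).1
      have : f x = c * (u x + M) := by simp only [hf]; ring
      rw [this]; exact mul_nonneg hc0.le (by linarith)
    · intro x
      have := (abs_le.1 (hM x)).2
      have e : f x = c * (u x + M) := by simp only [hf]; ring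
      rw [e]
      calc c * (u x + M) ≤ c * (2 * M + 1) := mul_le_mul_of_nonneg_left (by linarith) hc0.le
        _ = 1 := hcM
    · intro x y
      have h1 := (convex_univ (𝕜 := ℝ) (E := E)).norm_image_sub_le_of_norm_fderiv_le (𝕜 := ℝ) (f := u) (C := C)
        (fun z _ => diff1 hu z) (fun z _ => hC z) (Set.mem_univ y) (Set.mem_univ x)
      have e : f x - f y = c * (u x - u y) := by simp only [hf]; ring
      rw [e, abs_mul, abs_of_pos hc0, mul_assoc]
      exact mul_le_mul_of_nonneg_left h1 hc0.le
    · intro z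
      rw [hD]
      refine ⟨S.K_cl_smul hmn hc0.le (hK z).1, fun h => (hK z).2 ?_⟩
      have := S.K_smul hmn (inv_pos.2 hc0) h
      rwa [inv_smul_smul₀ hc0.ne'] at this
  have key : ∀ p q, f p ≤ f q := Sol.const hmn (2 * n) ⊥ f (by omega) hsol
    (fun x hx => by rw [(Submodule.mem_bot ℝ).1 hx, map_zero]; exact Submodule.zero_mem _)
    (fun v hv x => by rw [(Submodule.mem_bot ℝ).1 hv, add_zero])
  intro z w
  have h1 := key z w
  have h2 := key w z
  simp only [hf] at h1 h2
  exact mul_left_cancel₀ hc0.ne' (by linarith)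

end final

/-- multiplication by `i` -/
def Jc (n : ℕ) : EuclideanSpace ℂ (Fin n) →L[ℝ] EuclideanSpace ℂ (Fin n) :=
  LinearMap.toContinuousLinearMap
    { toFun := fun x => Complex.I • x
      map_add' := fun x y => smul_add _ x y
      map_smul' := fun c x => smul_comm _ c x }

lemma Jc_apply (n : ℕ) (x : EuclideanSpace ℂ (Fin n)) : Jc n x = Complex.I • x := rfl

/-- the standard complex structure -/
def stdCS (n : ℕ) : CS (EuclideanSpace ℂ (Fin n)) n where
  J := Jc n
  JJ x := by rw [Jc_apply, Jc_apply, smul_smul, I_mul_I, neg_one_smul]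
  nJ x := by rw [Jc_apply, norm_smul, norm_I, one_mul]
  Φ := (WithLp.linearEquiv 2 ℝ (Fin n → ℂ)).symm
  ΦI x := rfl
  orth j k := by
    rw [PiLp.inner_apply]
    simp only [Complex.inner]
    simp
    split_ifs with h
    · subst h
      simp [apply_ite Complex.re]
    · refine Finset.sum_eq_zero fun i _ => ?_
      split_ifs with h1 h2
      · exact absurd (h1.symm.trans h2) h
      · rfl
      · rfl
  orth' j k := by
    rw [PiLp.inner_apply]
    refine Finset.sum_eq_zero fun i _ => ?_
    simp [Complex.inner, Jc_apply]
    split_ifs <;> simp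

lemma hess_eq {n : ℕ} {u : EuclideanSpace ℂ (Fin n) → ℝ} (hu : ContDiff ℝ 2 u) (z : EuclideanSpace ℂ (Fin n)) :
    complexHessian u z = ((stdCS n).GH (D2 u z)).transpose := by
  have hs : IsSymmSndFDerivAt ℝ u z := hu.contDiffAt.isSymmSndFDerivAt (by simp)
  have hsy : ∀ a b, D2 u z a b = D2 u z b a := fun a b => hs.eq a b
  have he : ∀ j, (stdCS n).e j = ebasis n j := fun j => rfl
  have hJ : ∀ x, (stdCS n).J x = Complex.I • x := fun x => rfl
  have hi : ∀ a b, iteratedFDeriv ℝ 2 u z ![a, b] = D2 u z a b := fun a b => by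
    rw [iteratedFDeriv_two_apply]; rfl
  ext j k
  rw [Matrix.transpose_apply]
  unfold complexHessian CS.GH CS.hh
  simp only [he, hJ, hi]
  rw [hsy (ebasis n k) (ebasis n j), hsy (I • ebasis n k) (I • ebasis n j), hsy (I • ebasis n k) (ebasis n j),
    hsy (ebasis n k) (I • ebasis n j)]
  push_cast
  ring

/-- **Liouville theorem for maximal `m`-subharmonic functions** (Dinew–Kołodziej).
A globally bounded `C²` `m`-subharmonic function on `ℂⁿ` (`1 < m < n`) with globally bounded
gradient which is maximal, i.e. `σ_m(λ(H_u(z))) = 0` everywhere, must be constant. -/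
theorem liouville_maximal_m_subharmonic
    (n m : ℕ) (hn : 2 ≤ n) (hm : 1 < m) (hmn : m < n)
    (u : EuclideanSpace ℂ (Fin n) → ℝ)
    (hu : ContDiff ℝ 2 u)
    (hbounded : ∃ M : ℝ, ∀ z, |u z| ≤ M)
    (hgrad : ∃ C : ℝ, ∀ z, ‖fderiv ℝ u z‖ ≤ C)
    (hmsh : ∀ z, ∃ h : (complexHessian u z).IsHermitian,
      h.eigenvalues ∈ closure (gardingCone n m) ∧ esymm n m h.eigenvalues = 0) :
    ∀ z w, u z = u w := by
  exact const_abs (S := stdCS n) hmn.le hu hbounded hgrad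
    fun z => (stdCS n).K_of_hess hm.le hmn.le (hess_eq hu z) (hmsh z)
end
end

section
/- Let n ≥ 2 and let u : ℂⁿ → ℝ be a bounded continuous subharmonic function with a = sup_{ℂⁿ} u. Fix any q > 2n − 2. Then there exist a sequence of points x_k ∈ ℂⁿ \ {0} and radii r_k > 0 with Σ_{k=1}^∞ (r_k/‖x_k‖)^q < ∞ such that u(x) → a as ‖x‖ → ∞ along points x ∈ ℂⁿ \ ⋃_k B(x_k, r_k); that is, for every ε > 0 there is R > 0 such that every x with ‖x‖ > R and x ∉ ⋃_k B(x_k, r_k) satisfies u(x) > a − ε. -/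
open MeasureTheory Metric

noncomputable section

instance (n : ℕ) : MeasurableSpace (EuclideanSpace ℂ (Fin n)) := borel _
instance (n : ℕ) : BorelSpace (EuclideanSpace ℂ (Fin n)) := ⟨rfl⟩

set_option linter.unusedSectionVars false

namespace CartanAux

/-- Second-order Taylor expansion of the cube of the positive part. -/
lemma taylor_pos (X t : ℝ) :
    |(max (X + t) 0) ^ 3 - (max X 0) ^ 3 - 3 * (max X 0) ^ 2 * t - 3 * (max X 0) * t ^ 2|
      ≤ |t| ^ 3 := by
  rcases le_total 0 X with hX | hX
  · rcases le_total 0 (X + t) with h | h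
    · rw [max_eq_left hX, max_eq_left h, ← abs_pow]
      apply le_of_eq; congr 1; ring
    · rw [max_eq_left hX, max_eq_right h]
      have ht : t ≤ 0 := by linarith
      rw [abs_of_nonpos ht]
      have e : (0:ℝ) ^ 3 - X ^ 3 - 3 * X ^ 2 * t - 3 * X * t ^ 2 = (-(X + t)) ^ 3 + t ^ 3 := by ring
      have h1 : (-(X + t)) ^ 3 ≤ (-t) ^ 3 := pow_le_pow_left₀ (by linarith) (by linarith) 3
      have h2 : 0 ≤ (-(X + t)) ^ 3 := pow_nonneg (by linarith) 3
      have e3 : (-t) ^ 3 = - t ^ 3 := by ring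
      rw [e, abs_le]
      constructor <;> nlinarith
  · rcases le_total 0 (X + t) with h | h
    · rw [max_eq_right hX, max_eq_left h]
      have ht : 0 ≤ t := by linarith
      rw [abs_of_nonneg ht]
      have h1 : (X + t) ^ 3 ≤ t ^ 3 := pow_le_pow_left₀ h (by linarith) 3
      have h2 : 0 ≤ (X + t) ^ 3 := pow_nonneg h 3
      rw [abs_le]
      constructor <;> nlinarith
    · rw [max_eq_right hX, max_eq_right h]
      simp

variable {E : Type*} [NormedAddCommGroup E] [InnerProductSpace ℝ E] [FiniteDimensional ℝ E]
  [MeasurableSpace E] [BorelSpace E]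

/-- The truncated paraboloid. -/
def X (z : E) (r : ℝ) (x : E) : ℝ := max (r ^ 2 - ‖x - z‖ ^ 2) 0

/-- The (unnormalised) second moment of a ball. -/
def Q (E : Type*) [NormedAddCommGroup E] [InnerProductSpace ℝ E] [FiniteDimensional ℝ E]
  [MeasurableSpace E] [BorelSpace E] (δ : ℝ) : ℝ := ∫ y in ball (0 : E) δ, ‖y‖ ^ 2

lemma intOn {f : E → ℝ} (hf : Continuous f) (z : E) (r : ℝ) : IntegrableOn f (ball z r) :=
  (hf.continuousOn.integrableOn_compact (isCompact_closedBall z r)).mono_set ball_subset_closedBall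

lemma mp_ball (e : E ≃ₗᵢ[ℝ] E) (f : E → ℝ) (δ : ℝ) :
    ∫ y in ball (0 : E) δ, f (e y) = ∫ y in ball (0 : E) δ, f y := by
  have h := e.measurePreserving.setIntegral_preimage_emb e.toMeasurableEquiv.measurableEmbedding
    f (ball 0 δ)
  have h2 : e ⁻¹' (ball (0 : E) δ) = ball 0 δ := by
    ext y; simp
  rw [h2] at h
  exact h

lemma moment1 (x : E) (δ : ℝ) : ∫ y in ball (0 : E) δ, inner ℝ x y = 0 := by
  have h := mp_ball (LinearIsometryEquiv.neg ℝ (E := E)) (fun y => inner ℝ x y) δ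
  simp only [LinearIsometryEquiv.coe_neg, inner_neg_right, integral_neg] at h
  linarith

lemma moment2_eq (x x' : E) (h : ‖x‖ = ‖x'‖) (δ : ℝ) :
    ∫ y in ball (0 : E) δ, (inner ℝ x y) ^ 2 = ∫ y in ball (0 : E) δ, (inner ℝ x' y) ^ 2 := by
  let e : E ≃ₗᵢ[ℝ] E := (Submodule.span ℝ {x - x'})ᗮ.reflection
  have he : e x = x' := Submodule.reflection_sub h
  rw [← mp_ball e (fun y => (inner ℝ x' y) ^ 2) δ]
  simp only [← he, LinearIsometryEquiv.inner_map_map]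

lemma moment2 (x : E) (δ : ℝ) :
    (Module.finrank ℝ E) * ∫ y in ball (0 : E) δ, (inner ℝ x y) ^ 2 = ‖x‖ ^ 2 * Q E δ := by
  let b := stdOrthonormalBasis ℝ E
  have h1 : ∀ i, ∫ y in ball (0 : E) δ, (inner ℝ x y) ^ 2
      = ‖x‖ ^ 2 * ∫ y in ball (0 : E) δ, (inner ℝ (b i) y) ^ 2 := by
    intro i
    rw [moment2_eq x (‖x‖ • b i) (by simp [norm_smul]) δ, ← integral_const_mul]
    congr 1
    ext y
    rw [inner_smul_left]
    simp
    ring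
  have h2 : Q E δ = ∑ i, ∫ y in ball (0 : E) δ, (inner ℝ (b i) y) ^ 2 := by
    rw [← integral_finsetSum]
    · unfold Q
      congr 1
      ext y
      rw [← b.sum_sq_norm_inner_right y]
      simp
    · intro i _
      apply intOn
      fun_prop
  rw [h2, Finset.mul_sum]
  simp_rw [← h1]
  simp

lemma X_cont (z : E) (r : ℝ) : Continuous (X z r) := by unfold X; fun_prop

lemma X_nonneg (z : E) (r : ℝ) (x : E) : 0 ≤ X z r x := le_max_right _ _

lemma X_le (z : E) (r : ℝ) (x : E) : X z r x ≤ r ^ 2 := by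
  unfold X
  apply max_le _ (sq_nonneg r)
  nlinarith [sq_nonneg ‖x - z‖]

lemma X_zero {z : E} {r : ℝ} {x : E} (hr : 0 ≤ r) (h : r ≤ ‖x - z‖) : X z r x = 0 := by
  unfold X
  apply max_eq_right
  nlinarith

/-- minus the Laplacian of `X ^ 3`, suitably normalised -/
def W (z : E) (r : ℝ) (x : E) : ℝ :=
  3 * X z r x ^ 2 - (12 / (Module.finrank ℝ E : ℝ)) * (X z r x * ‖x - z‖ ^ 2)

lemma W_cont (z : E) (r : ℝ) : Continuous (W z r) := by
  have := X_cont z r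
  unfold W; fun_prop

lemma W_zero {z : E} {r : ℝ} {x : E} (hr : 0 ≤ r) (h : r ≤ ‖x - z‖) : W z r x = 0 := by
  unfold W; rw [X_zero hr h]; simp

def J (v : E → ℝ) (z : E) (r : ℝ) : ℝ := ∫ x, v x * W z r x

def Cst (r : ℝ) : ℝ := (2 * (r + 1) + 1) ^ 3 + 3 * r ^ 2 * (4 * (r + 1) + 1)

lemma taylor_X (z x y : E) (r δ : ℝ) (hr : 0 < r) (h1 : δ ≤ 1)
    (hy : ‖y‖ < δ) (hx : ‖x - z‖ ≤ r + 1) :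
    |X z r x ^ 3 - X z r (x + y) ^ 3
      - (3 * X z r x ^ 2 * (2 * inner ℝ (x - z) y + ‖y‖ ^ 2)
        - 12 * X z r x * (inner ℝ (x - z) y) ^ 2)| ≤ Cst r * δ ^ 3 := by
  have hδ : 0 < δ := lt_of_le_of_lt (norm_nonneg _) hy
  set s : ℝ := inner ℝ (x - z) y with hs
  set ρ := ‖x - z‖ with hρ
  set w := ‖y‖ with hw
  have hw0 : 0 ≤ w := norm_nonneg _
  have hρ0 : 0 ≤ ρ := norm_nonneg _
  have hsw : |s| ≤ ρ * w := abs_real_inner_le_norm _ _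
  have hnorm : ‖x + y - z‖ ^ 2 = ρ ^ 2 + 2 * s + w ^ 2 := by
    rw [show x + y - z = (x - z) + y by abel]
    exact norm_add_sq_real _ _
  have hXe : X z r (x + y) = max ((r ^ 2 - ρ ^ 2) + (-(2 * s + w ^ 2))) 0 := by
    unfold X; rw [hnorm]; congr 1; ring
  have hT := taylor_pos (r ^ 2 - ρ ^ 2) (-(2 * s + w ^ 2))
  rw [← hXe] at hT
  have hXx : X z r x = max (r ^ 2 - ρ ^ 2) 0 := rfl
  rw [← hXx] at hT
  have hX0 := X_nonneg z r x
  have hXl := X_le z r x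
  set A := X z r x
  set B := X z r (x + y)
  have ht : |-(2 * s + w ^ 2)| ≤ (2 * (r + 1) + 1) * δ := by
    rw [abs_neg]
    calc |2 * s + w ^ 2| ≤ |2 * s| + |w ^ 2| := abs_add_le _ _
      _ = 2 * |s| + w ^ 2 := by rw [abs_mul, abs_of_nonneg (sq_nonneg w)]; simp
      _ ≤ 2 * ((r + 1) * δ) + 1 * δ := by
        have : ρ * w ≤ (r + 1) * δ := mul_le_mul hx hy.le hw0 (by linarith)
        have : w ^ 2 ≤ 1 * δ := by nlinarith
        linarith
      _ = _ := by ring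
  have ht3 : |-(2 * s + w ^ 2)| ^ 3 ≤ (2 * (r + 1) + 1) ^ 3 * δ ^ 3 := by
    rw [← mul_pow]
    exact pow_le_pow_left₀ (abs_nonneg _) ht 3
  have hw2 : w ^ 2 ≤ δ ^ 2 := pow_le_pow_left₀ hw0 hy.le 2
  have h4 : |4 * s * w ^ 2 + w ^ 4| ≤ (4 * (r + 1) + 1) * δ ^ 3 := by
    calc |4 * s * w ^ 2 + w ^ 4| ≤ |4 * s * w ^ 2| + |w ^ 4| := abs_add_le _ _
      _ = 4 * |s| * w ^ 2 + w ^ 4 := by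
        rw [abs_mul, abs_mul, abs_of_nonneg (sq_nonneg w), abs_of_nonneg (by positivity : 0 ≤ w ^ 4)]
        simp
      _ ≤ 4 * ((r + 1) * δ) * δ ^ 2 + δ ^ 3 := by
        have a1 : ρ * w ≤ (r + 1) * δ := mul_le_mul hx hy.le hw0 (by linarith)
        have a2 : |s| * w ^ 2 ≤ ((r + 1) * δ) * δ ^ 2 :=
          mul_le_mul (hsw.trans a1) hw2 (sq_nonneg _) (by positivity)
        have a3 : w ^ 4 ≤ δ ^ 3 := by
          calc w ^ 4 ≤ δ ^ 4 := pow_le_pow_left₀ hw0 hy.le 4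
            _ = δ ^ 3 * δ := by ring
            _ ≤ δ ^ 3 * 1 := by gcongr
            _ = _ := by ring
        linarith
      _ = _ := by ring
  have h5 : |3 * A * (4 * s * w ^ 2 + w ^ 4)| ≤ 3 * r ^ 2 * ((4 * (r + 1) + 1) * δ ^ 3) := by
    rw [abs_mul, abs_of_nonneg (by positivity : 0 ≤ 3 * A)]
    apply mul_le_mul _ h4 (abs_nonneg _) (by positivity)
    linarith
  have e : A ^ 3 - B ^ 3 - (3 * A ^ 2 * (2 * s + w ^ 2) - 12 * A * s ^ 2)
     = -(B ^ 3 - A ^ 3 - 3 * A ^ 2 * (-(2 * s + w ^ 2)) - 3 * A * (-(2 * s + w ^ 2)) ^ 2)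
       - 3 * A * (4 * s * w ^ 2 + w ^ 4) := by ring
  rw [e]
  refine (abs_sub _ _).trans ?_
  rw [abs_neg]
  unfold Cst
  linarith

lemma taylor_int (hm : 0 < Module.finrank ℝ E) (z x : E) (r δ : ℝ) (hr : 0 < r) (h1 : δ ≤ 1) (hx : ‖x - z‖ ≤ r + 1) :
    |(∫ y in ball (0 : E) δ, (X z r x ^ 3 - X z r (x + y) ^ 3)) - Q E δ * W z r x|
      ≤ Cst r * δ ^ 3 * volume.real (ball (0 : E) δ) := by
  have hc := X_cont z r
  have i1 : IntegrableOn (fun y => X z r x ^ 3 - X z r (x + y) ^ 3) (ball (0 : E) δ) :=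
    intOn (by fun_prop) _ _
  have i2 : IntegrableOn (fun y => (3 * X z r x ^ 2 * (2 * inner ℝ (x - z) y + ‖y‖ ^ 2)
        - 12 * X z r x * (inner ℝ (x - z) y) ^ 2)) (ball (0 : E) δ) :=
    intOn (by fun_prop) _ _
  have e : ∫ y in ball (0 : E) δ, (3 * X z r x ^ 2 * (2 * inner ℝ (x - z) y + ‖y‖ ^ 2)
        - 12 * X z r x * (inner ℝ (x - z) y) ^ 2) = Q E δ * W z r x := by
    rw [integral_sub (intOn (by fun_prop) _ _) (intOn (by fun_prop) _ _), integral_const_mul,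
      integral_const_mul, integral_add (intOn (by fun_prop) _ _) (intOn (by fun_prop) _ _),
      integral_const_mul, moment1]
    have h2 := moment2 (x - z) δ
    have hm' : (Module.finrank ℝ E : ℝ) ≠ 0 := by positivity
    have h3 : ∫ y in ball (0 : E) δ, (inner ℝ (x - z) y) ^ 2
      = ‖x - z‖ ^ 2 * Q E δ / (Module.finrank ℝ E : ℝ) := by
      rw [← h2]; field_simp
    rw [h3]
    unfold W
    change 3 * X z r x ^ 2 * (2 * 0 + Q E δ) - _ = _
    ring
  rw [← e, ← integral_sub i1 i2]
  have := norm_setIntegral_le_of_norm_le_const (μ := volume) (s := ball (0 : E) δ)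
    (f := fun y => (X z r x ^ 3 - X z r (x + y) ^ 3) - (3 * X z r x ^ 2 * (2 * inner ℝ (x - z) y + ‖y‖ ^ 2)
        - 12 * X z r x * (inner ℝ (x - z) y) ^ 2)) (C := Cst r * δ ^ 3) measure_ball_lt_top ?_
  · exact this
  · intro y hy
    exact taylor_X z x y r δ hr h1 (by simpa using hy) hx

lemma int_prod {F : E × E → ℝ} (hF : Continuous F) (z : E) (R δ : ℝ) (hδ : δ ≤ 1)
    (h0 : ∀ x y, ‖y‖ < 1 → R < ‖x - z‖ → F (x, y) = 0) :
    Integrable F ((volume : Measure E).prod (volume.restrict (ball (0 : E) δ))) := by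
  have hcomp : IsCompact (closedBall z R ×ˢ closedBall (0 : E) 1) :=
    (isCompact_closedBall _ _).prod (isCompact_closedBall _ _)
  have h1 : IntegrableOn F (closedBall z R ×ˢ closedBall (0 : E) 1)
      ((volume : Measure E).prod volume) := hF.continuousOn.integrableOn_compact hcomp
  have h2 : IntegrableOn F (Set.univ ×ˢ ball (0 : E) δ) ((volume : Measure E).prod volume) := by
    apply h1.of_forall_sdiff_eq_zero (MeasurableSet.univ.prod measurableSet_ball)
    rintro ⟨x, y⟩ ⟨⟨-, hy⟩, hn⟩
    have hy' : ‖y‖ < δ := by simpa using hy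
    apply h0 x y (by linarith)
    by_contra hcon
    apply hn
    refine ⟨?_, ?_⟩
    · simp [dist_eq_norm]; linarith
    · simp; linarith
  unfold IntegrableOn at h2
  rwa [← Measure.prod_restrict, Measure.restrict_univ] at h2

lemma int_cpt {F : E → ℝ} (hF : Continuous F) (z : E) (R : ℝ)
    (h0 : ∀ x, R < ‖x - z‖ → F x = 0) : Integrable F := by
  have h1 : IntegrableOn F (closedBall z R) :=
    hF.continuousOn.integrableOn_compact (isCompact_closedBall _ _)
  rw [← integrableOn_univ]
  apply h1.of_forall_sdiff_eq_zero MeasurableSet.univ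
  rintro x ⟨-, hn⟩
  apply h0
  simpa [dist_eq_norm] using hn

lemma swap (v : E → ℝ) (hv : Continuous v) (z : E) (r δ : ℝ) (hr : 0 < r) (h1 : δ ≤ 1) :
    ∫ x, v x * (∫ y in ball (0 : E) δ, (X z r x ^ 3 - X z r (x + y) ^ 3))
      = ∫ x, X z r x ^ 3 * (∫ y in ball (0 : E) δ, (v x - v (x - y))) := by
  have hc := X_cont z r
  have I1 : Integrable (Function.uncurry fun (x y : E) => v x * (X z r x ^ 3 - X z r (x + y) ^ 3))
      ((volume : Measure E).prod (volume.restrict (ball (0 : E) δ))) := by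
    apply int_prod (by unfold Function.uncurry; fun_prop) z (r + 1) δ h1
    intro x y hy hx
    have : ‖x - z‖ ≤ ‖x + y - z‖ + ‖y‖ := by
      have := norm_sub_le (x + y - z) y
      rwa [show x + y - z - y = x - z by abel] at this
    simp only [Function.uncurry]
    rw [X_zero hr.le (by linarith), X_zero hr.le (by linarith)]; simp
  have I2 : Integrable (Function.uncurry fun (x y : E) => X z r x ^ 3 * (v x - v (x - y)))
      ((volume : Measure E).prod (volume.restrict (ball (0 : E) δ))) := by
    apply int_prod (by unfold Function.uncurry; fun_prop) z (r + 1) δ h1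
    intro x y hy hx
    simp only [Function.uncurry]
    rw [X_zero hr.le (by linarith)]; simp
  simp_rw [← integral_const_mul]
  rw [integral_integral_swap I1, integral_integral_swap I2]
  congr 1
  ext y
  have j0 : Integrable (fun x => v x * X z r x ^ 3) := by
    apply int_cpt (by fun_prop) z r
    intro x hx
    rw [X_zero hr.le hx.le]; simp
  have j2 : Integrable (fun x => v (x - y) * X z r x ^ 3) := by
    apply int_cpt (by fun_prop) z r
    intro x hx
    rw [X_zero hr.le hx.le]; simp
  have j1 : Integrable (fun x => v x * X z r (x + y) ^ 3) := by
    have := j2.comp_add_right y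
    simpa using this
  have e : ∫ x, v x * X z r (x + y) ^ 3 = ∫ x, v (x - y) * X z r x ^ 3 := by
    rw [← integral_add_right_eq_self (fun x => v (x - y) * X z r x ^ 3) y]
    simp
  calc ∫ x, v x * (X z r x ^ 3 - X z r (x + y) ^ 3)
      = ∫ x, (v x * X z r x ^ 3 - v x * X z r (x + y) ^ 3) := by congr 1; ext x; ring
    _ = ∫ x, (v x * X z r x ^ 3 - v (x - y) * X z r x ^ 3) := by
      rw [integral_sub j0 j1, integral_sub j0 j2, e]
    _ = _ := by congr 1; ext x; ring

lemma Q_scale (δ : ℝ) (hδ : 0 < δ) :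
    Q E δ = δ ^ (Module.finrank ℝ E + 2) * Q E 1 := by
  have h := Measure.setIntegral_comp_smul_of_pos (volume : Measure E) (fun y : E => ‖y‖ ^ 2)
    (ball 0 1) hδ
  rw [_root_.smul_ball hδ.ne', smul_zero] at h
  simp only [norm_smul, mul_pow, integral_const_mul, smul_eq_mul, Real.norm_eq_abs, sq_abs,
    abs_of_pos hδ, mul_one] at h
  change δ ^ 2 * Q E 1 = _ * Q E δ at h
  have : δ ^ Module.finrank ℝ E ≠ 0 := by positivity
  field_simp at h
  rw [← h]; ring

lemma V_scale (δ : ℝ) (hδ : 0 < δ) :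
    volume.real (ball (0 : E) δ) = δ ^ (Module.finrank ℝ E) * volume.real (ball (0 : E) 1) := by
  unfold Measure.real
  rw [Measure.addHaar_ball_of_pos _ _ hδ]
  simp [ENNReal.toReal_mul, hδ.le]

lemma Q_pos (hm : 0 < Module.finrank ℝ E) : 0 < Q E 1 := by
  have : Nontrivial E := Module.nontrivial_of_finrank_pos hm
  unfold Q
  rw [setIntegral_pos_iff_support_of_nonneg_ae]
  · have hs : (Function.support fun y : E => ‖y‖ ^ 2) = {0}ᶜ := by
      ext y; simp
    rw [hs, Set.inter_comm]
    apply IsOpen.measure_pos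
    · exact isOpen_ball.inter isOpen_compl_singleton
    · obtain ⟨y, hy⟩ := exists_norm_eq E (c := 1/2) (by norm_num)
      refine ⟨y, ?_, ?_⟩
      · simp [hy]; norm_num
      · intro h
        simp only [Set.mem_singleton_iff] at h
        rw [h] at hy; norm_num at hy
  · exact Filter.Eventually.of_forall fun y => by positivity
  · exact intOn (by fun_prop) _ _

/-- Main estimate. -/
lemma est (hm : 0 < Module.finrank ℝ E) (v : E → ℝ) (hv : Continuous v) (M : ℝ)
    (hM : ∀ x, |v x| ≤ M) (z : E) (r δ : ℝ) (hr : 0 < r) (h1 : δ ≤ 1) (hδ : 0 < δ) :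
    |(∫ x, X z r x ^ 3 * (∫ y in ball (0 : E) δ, (v x - v (x - y)))) - Q E δ * J v z r|
      ≤ (M * (Cst r * δ ^ 3 * volume.real (ball (0 : E) δ))) *
        volume.real (closedBall z (r + 1)) := by
  rw [← swap v hv z r δ hr h1]
  have hM0 : 0 ≤ M := (abs_nonneg _).trans (hM 0)
  have hc := X_cont z r
  have hW := W_cont z r
  have hzero : ∀ x, r + 1 < ‖x - z‖ →
      v x * (∫ y in ball (0 : E) δ, (X z r x ^ 3 - X z r (x + y) ^ 3)) = 0 := by
    intro x hx
    have : ∫ y in ball (0 : E) δ, (X z r x ^ 3 - X z r (x + y) ^ 3) = 0 := by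
      apply setIntegral_eq_zero_of_forall_eq_zero
      intro y hy
      have hy : ‖y‖ < δ := by simpa using hy
      have : ‖x - z‖ ≤ ‖x + y - z‖ + ‖y‖ := by
        have := norm_sub_le (x + y - z) y
        rwa [show x + y - z - y = x - z by abel] at this
      rw [X_zero hr.le (by linarith), X_zero hr.le (by linarith)]; simp
    rw [this, mul_zero]
  have hcK : Continuous fun x => ∫ y in ball (0 : E) δ, (X z r x ^ 3 - X z r (x + y) ^ 3) := by
    have : IsFiniteMeasure ((volume : Measure E).restrict (ball (0 : E) δ)) :=
      ⟨by simpa using measure_ball_lt_top⟩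
    apply continuous_of_dominated (bound := fun _ => 2 * r ^ 6)
    · intro x; exact Continuous.aestronglyMeasurable (by fun_prop)
    · intro x
      refine Filter.Eventually.of_forall fun y => ?_
      have a1 := pow_le_pow_left₀ (X_nonneg z r x) (X_le z r x) 3
      have a2 := pow_le_pow_left₀ (X_nonneg z r (x+y)) (X_le z r (x+y)) 3
      have a3 := pow_nonneg (X_nonneg z r x) 3
      have a4 := pow_nonneg (X_nonneg z r (x + y)) 3
      rw [Real.norm_eq_abs, abs_le]
      constructor <;> nlinarith
    · exact integrable_const _
    · refine Filter.Eventually.of_forall fun y => ?_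
      fun_prop
  have j1 : Integrable fun x => v x * (∫ y in ball (0 : E) δ, (X z r x ^ 3 - X z r (x + y) ^ 3)) :=
    int_cpt (by fun_prop) z (r + 1) hzero
  have j2 : Integrable fun x => Q E δ * (v x * W z r x) := by
    apply int_cpt (by fun_prop) z r
    intro x hx
    rw [W_zero hr.le hx.le]; simp
  unfold J
  rw [← integral_const_mul, ← integral_sub j1 j2]
  rw [← setIntegral_eq_integral_of_forall_compl_eq_zero (s := closedBall z (r + 1))]
  · rw [← Real.norm_eq_abs]
    apply norm_setIntegral_le_of_norm_le_const measure_closedBall_lt_top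
    intro x hx
    have hx : ‖x - z‖ ≤ r + 1 := by simpa [dist_eq_norm] using hx
    have := taylor_int hm z x r δ hr h1 hx
    rw [show v x * (∫ y in ball (0 : E) δ, (X z r x ^ 3 - X z r (x + y) ^ 3))
      - Q E δ * (v x * W z r x) = v x * ((∫ y in ball (0 : E) δ, (X z r x ^ 3 - X z r (x + y) ^ 3))
        - Q E δ * W z r x) by ring, norm_mul]
    exact mul_le_mul (hM x) this (abs_nonneg _) hM0
  · intro x hx
    have hx : r + 1 < ‖x - z‖ := by simpa [dist_eq_norm] using hx
    rw [hzero x hx, W_zero hr.le (by linarith)]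
    simp

lemma positivity_lemma (hm : 0 < Module.finrank ℝ E) (v : E → ℝ) (hv : Continuous v) (M : ℝ)
    (hM : ∀ x, |v x| ≤ M)
    (hsup : ∀ x δ, 0 < δ → 0 ≤ ∫ y in ball (0 : E) δ, (v x - v (x - y)))
    {ι : Type*} (s : Finset ι) (c : ι → ℝ) (z : ι → E) (r : ι → ℝ) (hr : ∀ i ∈ s, 0 < r i)
    (hK : ∀ x, 0 ≤ ∑ i ∈ s, c i * X (z i) (r i) x ^ 3) :
    0 ≤ ∑ i ∈ s, c i * J v (z i) (r i) := by
  set C : ℝ := ∑ i ∈ s, |c i| * (M * Cst (r i) * volume.real (ball (0 : E) 1) *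
    volume.real (closedBall (z i) (r i + 1))) with hC
  set S := ∑ i ∈ s, c i * J v (z i) (r i) with hS
  have key : ∀ δ : ℝ, 0 < δ → δ ≤ 1 → 0 ≤ Q E 1 * S + C * δ := by
    intro δ hδ h1
    have hG : Continuous fun x => ∫ y in ball (0 : E) δ, (v x - v (x - y)) := by
      have : IsFiniteMeasure ((volume : Measure E).restrict (ball (0 : E) δ)) :=
        ⟨by simpa using measure_ball_lt_top⟩
      apply continuous_of_dominated (bound := fun _ => M + M)
      · intro x; exact Continuous.aestronglyMeasurable (by fun_prop)
      · intro x
        refine Filter.Eventually.of_forall fun y => ?_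
        exact (norm_sub_le _ _).trans (add_le_add (hM _) (hM _))
      · exact integrable_const _
      · refine Filter.Eventually.of_forall fun y => ?_
        fun_prop
    set G := fun x => ∫ y in ball (0 : E) δ, (v x - v (x - y)) with hGdef
    have p1 : 0 ≤ ∑ i ∈ s, c i * ∫ x, X (z i) (r i) x ^ 3 * G x := by
      simp_rw [← integral_const_mul]
      rw [← integral_finsetSum]
      · apply integral_nonneg
        intro x
        have : ∑ i ∈ s, c i * (X (z i) (r i) x ^ 3 * G x)
          = (∑ i ∈ s, c i * X (z i) (r i) x ^ 3) * G x := by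
          rw [Finset.sum_mul]; apply Finset.sum_congr rfl; intros; ring
        simp only [Pi.zero_apply]
        rw [this]
        exact mul_nonneg (hK x) (hsup x δ hδ)
      · intro i hi
        have := X_cont (z i) (r i)
        apply int_cpt (by fun_prop) (z i) (r i)
        intro x hx
        rw [X_zero (hr i hi).le hx.le]; simp
    have p2 : ∑ i ∈ s, c i * ∫ x, X (z i) (r i) x ^ 3 * G x
        ≤ δ ^ (Module.finrank ℝ E + 2) * (Q E 1 * S + C * δ) := by
      rw [hS, hC, mul_add, Finset.mul_sum, Finset.sum_mul, Finset.mul_sum, Finset.mul_sum,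
        ← Finset.sum_add_distrib]
      apply Finset.sum_le_sum
      intro i hi
      have h := est hm v hv M hM (z i) (r i) δ (hr i hi) h1 hδ
      rw [Q_scale δ hδ, V_scale δ hδ] at h
      set A := ∫ x, X (z i) (r i) x ^ 3 * G x
      have h2 : c i * (A - δ ^ (Module.finrank ℝ E + 2) * Q E 1 * J v (z i) (r i)) ≤
        |c i| * (M * (Cst (r i) * δ ^ 3 * (δ ^ Module.finrank ℝ E * volume.real (ball (0 : E) 1))) *
        volume.real (closedBall (z i) (r i + 1))) := by
        refine (le_abs_self _).trans ?_
        rw [abs_mul]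
        exact mul_le_mul_of_nonneg_left h (abs_nonneg _)
      calc c i * A = c i * (A - δ ^ (Module.finrank ℝ E + 2) * Q E 1 * J v (z i) (r i))
            + c i * (δ ^ (Module.finrank ℝ E + 2) * Q E 1 * J v (z i) (r i)) := by ring
        _ ≤ _ := add_le_add_left h2 _
        _ = _ := by ring
    have p3 := p1.trans p2
    exact nonneg_of_mul_nonneg_right p3 (by positivity)
  have h0 : 0 ≤ Q E 1 * S := by
    have ht : Filter.Tendsto (fun δ : ℝ => Q E 1 * S + C * δ) (nhdsWithin 0 (Set.Ioi 0))
        (nhds (Q E 1 * S + C * 0)) := by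
      apply Filter.Tendsto.mono_left _ nhdsWithin_le_nhds
      exact Continuous.tendsto (by fun_prop) 0
    rw [mul_zero, add_zero] at ht
    apply ge_of_tendsto ht
    filter_upwards [Ioc_mem_nhdsGT (zero_lt_one : (0:ℝ) < 1)] with δ hδ
    exact key δ hδ.1 hδ.2
  exact nonneg_of_mul_nonneg_right h0 (Q_pos hm)

/-- Weighted integral over a ball. -/
def P (v : E → ℝ) (z : E) (r : ℝ) : ℝ := ∫ x, v x * X z r x ^ 2

/-- Normalised weighted mean. -/
def Mn (v : E → ℝ) (z : E) (r : ℝ) : ℝ := P v z r / r ^ (Module.finrank ℝ E + 4)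

/-- The normalising constant. -/
def c0 (E : Type*) [NormedAddCommGroup E] [InnerProductSpace ℝ E] [FiniteDimensional ℝ E]
  [MeasurableSpace E] [BorelSpace E] : ℝ := ∫ y : E, X 0 1 y ^ 2

lemma intX (v : E → ℝ) (hv : Continuous v) (z : E) (r : ℝ) (hr : 0 ≤ r) (k : ℕ) (hk : k ≠ 0) :
    Integrable (fun x => v x * X z r x ^ k) := by
  have := X_cont z r
  apply int_cpt (by fun_prop) z r
  intro x hx
  rw [X_zero hr hx.le]; simp [hk]

lemma c0_pos : 0 < c0 E := by
  unfold c0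
  have hc := X_cont (0 : E) 1
  have := intX (fun _ : E => (1:ℝ)) continuous_const 0 1 zero_le_one 2 (by norm_num)
  simp only [one_mul] at this
  apply (hc.pow 2).integral_pos_of_hasCompactSupport_nonneg_nonzero (x := 0)
  · apply HasCompactSupport.intro (isCompact_closedBall (0 : E) 1)
    intro x hx
    have hx : (1 : ℝ) ≤ ‖x - 0‖ := by simp at hx ⊢; linarith
    simp only [Pi.pow_apply]
    rw [X_zero zero_le_one hx]; simp
  · intro x; exact sq_nonneg _
  · simp [X]

lemma deriv_posPart_sq (x : ℝ) : HasDerivAt (fun s : ℝ => (max s 0) ^ 2) (2 * max x 0) x := by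
  rcases lt_trichotomy x 0 with h | h | h
  · have : (fun s : ℝ => (max s 0) ^ 2) =ᶠ[nhds x] fun _ => 0 := by
      filter_upwards [Iio_mem_nhds h] with s hs
      rw [max_eq_right (le_of_lt hs)]; simp
    rw [max_eq_right h.le, mul_zero]
    exact (hasDerivAt_const x (0:ℝ)).congr_of_eventuallyEq this
  · subst h
    rw [hasDerivAt_iff_isLittleO]
    simp only [max_self, mul_zero, sub_zero, smul_zero]
    have : (fun s : ℝ => (max s 0) ^ 2 - 0 ^ 2) =O[nhds 0] fun s => s ^ 2 := by
      apply Asymptotics.IsBigO.of_bound 1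
      refine Filter.Eventually.of_forall fun s => ?_
      simp only [Real.norm_eq_abs]
      rw [one_mul]
      rcases le_total 0 s with h | h
      · rw [max_eq_left h]; simp
      · rw [max_eq_right h]; simp [sq_nonneg]
    refine this.trans_isLittleO ?_
    exact Asymptotics.isLittleO_pow_id (by norm_num)
  · have : (fun s : ℝ => (max s 0) ^ 2) =ᶠ[nhds x] fun s => s ^ 2 := by
      filter_upwards [Ioi_mem_nhds h] with s hs
      rw [max_eq_left (le_of_lt hs)]
    rw [max_eq_left h.le]
    have h2 := hasDerivAt_pow 2 x
    simp at h2
    exact h2.congr_of_eventuallyEq this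

lemma deriv_Xsq (z x : E) (r : ℝ) : HasDerivAt (fun r => X z r x ^ 2) (4 * r * X z r x) r := by
  have h1 : HasDerivAt (fun r : ℝ => r ^ 2 - ‖x - z‖ ^ 2) (2 * r) r := by
    have := (hasDerivAt_pow 2 r).sub_const (‖x - z‖ ^ 2)
    simpa using this
  have := (deriv_posPart_sq (r ^ 2 - ‖x - z‖ ^ 2)).comp r h1
  refine HasDerivAt.congr_deriv (f := fun r => X z r x ^ 2) this ?_
  unfold X
  ring

lemma deriv_P (v : E → ℝ) (hv : Continuous v) (M : ℝ) (hM : ∀ x, |v x| ≤ M) (z : E) (r : ℝ)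
    (hr : 0 < r) : HasDerivAt (P v z) (4 * r * ∫ x, v x * X z r x) r := by
  have hM0 : 0 ≤ M := (abs_nonneg _).trans (hM 0)
  have hX : ∀ r, Continuous (X z r) := X_cont z
  have := hasDerivAt_integral_of_dominated_loc_of_deriv_le (μ := (volume : Measure E))
    (F := fun r x => v x * X z r x ^ 2) (F' := fun r x => v x * (4 * r * X z r x)) (x₀ := r)
    (s := Set.Ioo 0 (r + 1)) (bound := (closedBall z (r + 1)).indicator fun _ => M * (4 * (r + 1) * (r + 1) ^ 2))
    (Ioo_mem_nhds hr (by linarith)) ?_ (intX v hv z r hr.le 2 (by norm_num)) ?_ ?_ ?_ ?_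
  · have h2 := this.2
    rw [← integral_const_mul]
    refine HasDerivAt.congr_deriv (f := P v z) h2 ?_
    congr 1
    ext x
    ring
  · refine Filter.Eventually.of_forall fun r => ?_
    have := hX r
    exact Continuous.aestronglyMeasurable (by fun_prop)
  · have := hX r
    exact Continuous.aestronglyMeasurable (by fun_prop)
  · refine Filter.Eventually.of_forall fun x s hs => ?_
    by_cases hx : x ∈ closedBall z (r + 1)
    · rw [Set.indicator_of_mem hx, norm_mul]
      apply mul_le_mul (hM x) _ (norm_nonneg _) hM0
      rw [Real.norm_eq_abs, abs_of_nonneg (mul_nonneg (by linarith [hs.1]) (X_nonneg _ _ _))]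
      have h1 : X z s x ≤ (r + 1) ^ 2 :=
        (X_le z s x).trans (pow_le_pow_left₀ hs.1.le hs.2.le 2)
      exact mul_le_mul (by linarith [hs.2]) h1 (X_nonneg _ _ _) (by linarith)
    · rw [Set.indicator_of_notMem hx]
      have hx : r + 1 < ‖x - z‖ := by simpa [dist_eq_norm] using hx
      rw [X_zero hs.1.le (by linarith [hs.2])]
      simp
  · rw [integrable_indicator_iff measurableSet_closedBall]
    exact integrableOn_const measure_closedBall_lt_top.ne
  · refine Filter.Eventually.of_forall fun x s hs => ?_
    exact (deriv_Xsq z x s).const_mul (v x)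

lemma J_eq (v : E → ℝ) (hv : Continuous v) (z : E) (r : ℝ) (hr : 0 < r) :
    J v z r = (3 + 12 / (Module.finrank ℝ E : ℝ)) * P v z r
      - (12 / (Module.finrank ℝ E : ℝ)) * r ^ 2 * ∫ x, v x * X z r x := by
  unfold J P
  have i1 := intX v hv z r hr.le 1 (by norm_num)
  have i2 := intX v hv z r hr.le 2 (by norm_num)
  simp only [pow_one] at i1
  rw [← integral_const_mul, ← integral_const_mul, ← integral_sub (i2.const_mul _) (i1.const_mul _)]
  congr 1
  ext x
  unfold W
  have : X z r x * ‖x - z‖ ^ 2 = r ^ 2 * X z r x - X z r x ^ 2 := by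
    unfold X
    rcases le_total 0 (r ^ 2 - ‖x - z‖ ^ 2) with h | h
    · rw [max_eq_left h]; ring
    · rw [max_eq_right h]; ring
  rw [this]; ring

lemma deriv_Mn (hm : 0 < Module.finrank ℝ E) (v : E → ℝ) (hv : Continuous v) (M : ℝ)
    (hM : ∀ x, |v x| ≤ M) (z : E) (r : ℝ) (hr : 0 < r) :
    HasDerivAt (Mn v z)
      (-((Module.finrank ℝ E : ℝ) / 3 * J v z r / r ^ (Module.finrank ℝ E + 5))) r := by
  have h := (deriv_P v hv M hM z r hr).div (hasDerivAt_pow (Module.finrank ℝ E + 4) r)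
    (by positivity)
  refine HasDerivAt.congr_deriv (f := Mn v z) h ?_
  rw [J_eq v hv z r hr]
  have : (Module.finrank ℝ E : ℝ) ≠ 0 := by positivity
  simp only [Nat.add_succ_sub_one]
  push_cast
  field_simp
  ring

lemma Mn_eq (v : E → ℝ) (z : E) (r : ℝ) (hr : 0 < r) :
    Mn v z r = ∫ y, v (z + r • y) * X 0 1 y ^ 2 := by
  unfold Mn P
  have h1 := Measure.integral_comp_smul (volume : Measure E)
    (fun x => v (z + x) * X z r (z + x) ^ 2) r
  have h2 := integral_add_left_eq_self (μ := (volume : Measure E)) (fun x => v x * X z r x ^ 2) z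
  rw [h2] at h1
  have e : ∀ y : E, X z r (z + r • y) = r ^ 2 * X 0 1 y := by
    intro y
    unfold X
    rw [add_sub_cancel_left, norm_smul, sub_zero, mul_max_of_nonneg _ _ (sq_nonneg r),
      Real.norm_eq_abs, abs_of_pos hr]
    congr 1 <;> ring
  simp only [e] at h1
  have e2 : ∫ y, v (z + r • y) * (r ^ 2 * X 0 1 y) ^ 2
      = r ^ 4 * ∫ y, v (z + r • y) * X 0 1 y ^ 2 := by
    rw [← integral_const_mul]; congr 1; ext y; ring
  rw [e2, abs_of_pos (by positivity), smul_eq_mul] at h1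
  rw [pow_add]
  field_simp
  field_simp at h1
  linarith

lemma Mn_tendsto (v : E → ℝ) (hv : Continuous v) (M : ℝ) (hM : ∀ x, |v x| ≤ M) (z : E) :
    Filter.Tendsto (Mn v z) (nhdsWithin 0 (Set.Ioi 0)) (nhds (v z * c0 E)) := by
  have hX := X_cont (0 : E) 1
  have hc : Continuous fun r : ℝ => ∫ y, v (z + r • y) * X (0 : E) 1 y ^ 2 := by
    apply continuous_of_dominated (bound := fun y => M * X (0 : E) 1 y ^ 2)
    · intro r; exact Continuous.aestronglyMeasurable (by fun_prop)
    · intro r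
      refine Filter.Eventually.of_forall fun y => ?_
      rw [norm_mul, Real.norm_eq_abs, Real.norm_eq_abs, abs_of_nonneg (sq_nonneg (X (0:E) 1 y))]
      exact mul_le_mul_of_nonneg_right (hM _) (sq_nonneg _)
    · exact intX (fun _ => M) continuous_const 0 1 zero_le_one 2 (by norm_num)
    · refine Filter.Eventually.of_forall fun y => ?_
      fun_prop
  have h0 := hc.tendsto 0
  simp only [zero_smul, add_zero, integral_const_mul] at h0
  refine (h0.mono_left nhdsWithin_le_nhds).congr' ?_
  filter_upwards [self_mem_nhdsWithin] with r hr
  exact (Mn_eq v z r hr).symm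

/-- If the density is small at all scales then `v z` is small. -/
lemma good_point (hm : 0 < Module.finrank ℝ E) (v : E → ℝ) (hv : Continuous v) (M : ℝ)
    (hM : ∀ x, |v x| ≤ M) (z : E) (L η β : ℝ) (hL : 0 < L) (hη : 0 ≤ η) (hβ : 0 < β)
    (hgood : ∀ r, 0 < r → r ≤ L → (Module.finrank ℝ E : ℝ) / 3 * J v z r
      ≤ η * (r / L) ^ β * r ^ (Module.finrank ℝ E + 4)) :
    v z * c0 E ≤ Mn v z L + η / β := by
  have hH : ∀ r, 0 < r → HasDerivAt (fun r => Mn v z r + η / β * (r / L) ^ β)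
      (-((Module.finrank ℝ E : ℝ) / 3 * J v z r / r ^ (Module.finrank ℝ E + 5))
        + η / β * (β * (r / L) ^ (β - 1) * (1 / L))) r := by
    intro r hr
    apply (deriv_Mn hm v hv M hM z r hr).add
    apply HasDerivAt.const_mul
    have := ((hasDerivAt_id r).div_const L).rpow_const (p := β) (Or.inl (by simp; constructor <;> positivity))
    refine HasDerivAt.congr_deriv (f := fun r => (r / L) ^ β) this ?_
    simp only [id]
    ring
  have hmono : MonotoneOn (fun r => Mn v z r + η / β * (r / L) ^ β) (Set.Ioc 0 L) := by
    apply monotoneOn_of_deriv_nonneg (convex_Ioc 0 L)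
    · intro r hr
      exact (hH r hr.1).continuousAt.continuousWithinAt
    · intro r hr
      rw [interior_Ioc] at hr
      exact (hH r hr.1).differentiableAt.differentiableWithinAt
    · intro r hr
      rw [interior_Ioc] at hr
      rw [(hH r hr.1).deriv]
      have hr0 : 0 < r := hr.1
      have h1 := hgood r hr0 hr.2.le
      have h2 : (Module.finrank ℝ E : ℝ) / 3 * J v z r / r ^ (Module.finrank ℝ E + 5)
        ≤ η * (r / L) ^ β / r := by
        rw [div_le_div_iff₀ (by positivity) hr0]
        calc _ ≤ η * (r / L) ^ β * r ^ (Module.finrank ℝ E + 4) * r := by gcongr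
          _ = _ := by ring
      have h3 : η / β * (β * (r / L) ^ (β - 1) * (1 / L)) = η * (r / L) ^ β / r := by
        rw [Real.rpow_sub_one (by positivity)]
        field_simp
      rw [h3]; linarith
  apply le_of_tendsto (Mn_tendsto v hv M hM z)
  filter_upwards [Ioc_mem_nhdsGT hL] with r hr
  have := hmono hr ⟨hL, le_rfl⟩ hr.2
  simp only [div_self hL.ne', Real.one_rpow, mul_one] at this
  have : 0 ≤ η / β * (r / L) ^ β := by
    have := hr.1
    positivity
  linarith

lemma Mn_anti (hm : 0 < Module.finrank ℝ E) (v : E → ℝ) (hv : Continuous v) (M : ℝ)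
    (hM : ∀ x, |v x| ≤ M) (hJ : ∀ z r, 0 < r → 0 ≤ J v z r) (z : E) :
    AntitoneOn (Mn v z) (Set.Ioi 0) := by
  apply antitoneOn_of_deriv_nonpos (convex_Ioi 0)
  · intro r hr
    exact (deriv_Mn hm v hv M hM z r hr).continuousAt.continuousWithinAt
  · intro r hr
    rw [interior_Ioi] at hr
    exact (deriv_Mn hm v hv M hM z r hr).differentiableAt.differentiableWithinAt
  · intro r hr
    rw [interior_Ioi] at hr
    rw [(deriv_Mn hm v hv M hM z r hr).deriv]
    have := hJ z r hr
    have hr : 0 < r := hr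
    have : 0 ≤ (Module.finrank ℝ E : ℝ) / 3 * J v z r / r ^ (Module.finrank ℝ E + 5) := by positivity
    linarith

lemma Mn_le (hm : 0 < Module.finrank ℝ E) (v : E → ℝ) (hv : Continuous v) (M : ℝ)
    (hM : ∀ x, |v x| ≤ M) (hJ : ∀ z r, 0 < r → 0 ≤ J v z r) (z : E) (R : ℝ) (hR : 0 < R) :
    Mn v z R ≤ v z * c0 E := by
  apply ge_of_tendsto (Mn_tendsto v hv M hM z)
  filter_upwards [Ioc_mem_nhdsGT hR] with r hr
  exact Mn_anti hm v hv M hM hJ z hr.1 hR hr.2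

lemma Mn_nonneg (v : E → ℝ) (hv0 : ∀ x, 0 ≤ v x) (z : E) (R : ℝ) (hR : 0 < R) :
    0 ≤ Mn v z R := by
  unfold Mn P
  apply div_nonneg _ (by positivity)
  apply integral_nonneg
  intro x
  exact mul_nonneg (hv0 x) (sq_nonneg _)

/-- Comparison of means at different centres. -/
lemma Mn_comp (hm : 0 < Module.finrank ℝ E) (v : E → ℝ) (hv : Continuous v) (M : ℝ)
    (hM : ∀ x, |v x| ≤ M) (hv0 : ∀ x, 0 ≤ v x) (hJ : ∀ z r, 0 < r → 0 ≤ J v z r) (z z0 : E) (R : ℝ)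
    (hR : 0 < R) (hz : ‖z - z0‖ ≤ 3 * R) :
    Mn v z R ≤ 8 ^ (Module.finrank ℝ E + 4) * (v z0 * c0 E) := by
  have h1 : P v z R ≤ P v z0 (8 * R) := by
    unfold P
    apply integral_mono (intX v hv z R hR.le 2 (by norm_num))
      (intX v hv z0 (8 * R) (by positivity) 2 (by norm_num))
    intro x
    apply mul_le_mul_of_nonneg_left _ (hv0 x)
    apply pow_le_pow_left₀ (X_nonneg _ _ _)
    rcases le_total R ‖x - z‖ with h | h
    · rw [X_zero hR.le h]; exact X_nonneg _ _ _
    · refine (X_le _ _ _).trans ?_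
      unfold X
      refine le_trans ?_ (le_max_left _ _)
      have : ‖x - z0‖ ≤ 4 * R := by
        have := norm_add_le (x - z) (z - z0)
        rw [sub_add_sub_cancel] at this
        linarith
      have := pow_le_pow_left₀ (norm_nonneg _) this 2
      nlinarith
  have h2 := Mn_le hm v hv M hM hJ z0 (8 * R) (by positivity)
  have h3 : Mn v z R ≤ 8 ^ (Module.finrank ℝ E + 4) * Mn v z0 (8 * R) := by
    unfold Mn
    rw [mul_pow, mul_div_assoc', mul_div_mul_left _ _ (by positivity)]
    gcongr
  refine h3.trans ?_
  gcongr

lemma kernel_compare (F : Finset (E × ℝ)) (L ρ : ℝ) (hL : 0 < L) (hρ : 6 * L ≤ ρ)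
    (hF : ∀ p ∈ F, ‖p.1‖ < 2 * L ∧ 0 < p.2 ∧ p.2 ≤ L)
    (hdisj : (F : Set (E × ℝ)).PairwiseDisjoint fun p => closedBall p.1 p.2) (x : E) :
    ∑ p ∈ F, (p.2 ^ 6)⁻¹ * X p.1 p.2 x ^ 3 ≤ 64 / 27 * (ρ ^ 6)⁻¹ * X 0 ρ x ^ 3 := by
  have hρ0 : 0 < ρ := by linarith
  have hrhs : 0 ≤ 64 / 27 * (ρ ^ 6)⁻¹ * X 0 ρ x ^ 3 := by
    have := X_nonneg 0 ρ x
    positivity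
  by_cases h : ∃ p ∈ F, x ∈ closedBall p.1 p.2
  · obtain ⟨p, hp, hx⟩ := h
    obtain ⟨h1, h2, h3⟩ := hF p hp
    rw [Finset.sum_eq_single_of_mem p hp]
    · have a1 : X p.1 p.2 x ^ 3 ≤ p.2 ^ 6 := by
        have := pow_le_pow_left₀ (X_nonneg p.1 p.2 x) (X_le p.1 p.2 x) 3
        calc _ ≤ _ := this
          _ = _ := by ring
      have a2 : (p.2 ^ 6)⁻¹ * X p.1 p.2 x ^ 3 ≤ 1 := by
        rw [inv_mul_le_iff₀ (by positivity)]; linarith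
      have hxn : ‖x‖ ≤ 3 * L := by
        have hx : ‖x - p.1‖ ≤ p.2 := by simpa [dist_eq_norm] using hx
        have := norm_add_le (x - p.1) p.1
        rw [sub_add_cancel] at this
        linarith
      have a3 : 3 / 4 * ρ ^ 2 ≤ X 0 ρ x := by
        unfold X
        refine le_trans ?_ (le_max_left _ _)
        rw [sub_zero]
        have := pow_le_pow_left₀ (norm_nonneg x) (show ‖x‖ ≤ ρ / 2 by linarith) 2
        nlinarith
      have a4 := pow_le_pow_left₀ (by positivity) a3 3
      refine a2.trans ?_
      calc (1 : ℝ) = 64 / 27 * (ρ ^ 6)⁻¹ * (3 / 4 * ρ ^ 2) ^ 3 := by field_simp; norm_num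
        _ ≤ _ := by gcongr
    · intro p' hp' hne
      have hd := hdisj hp' hp hne
      have hx' : x ∉ closedBall p'.1 p'.2 := fun hx' => Set.disjoint_left.1 hd hx' hx
      have hx' : p'.2 < ‖x - p'.1‖ := by simpa [dist_eq_norm] using hx'
      rw [X_zero (hF p' hp').2.1.le hx'.le]; simp
  · push Not at h
    rw [Finset.sum_eq_zero]
    · exact hrhs
    · intro p' hp'
      have hx' := h p' hp'
      have hx' : p'.2 < ‖x - p'.1‖ := by simpa [dist_eq_norm] using hx'
      rw [X_zero (hF p' hp').2.1.le hx'.le]; simp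

/-- Constant in the packing estimate. -/
def Cd (d : ℕ) : ℝ := 64 / 27 * 16 ^ (d + 1) / 8

lemma packing (d : ℕ) (hd : Module.finrank ℝ E = d + 2) (v : E → ℝ) (hv : Continuous v) (M : ℝ)
    (hM : ∀ x, |v x| ≤ M)
    (hsup : ∀ x δ, 0 < δ → 0 ≤ ∫ y in ball (0 : E) δ, (v x - v (x - y)))
    (L η β : ℝ) (hL : 0 < L) (hη : 0 < η)
    (F : Finset (E × ℝ))
    (hF : ∀ p ∈ F, ‖p.1‖ < 2 * L ∧ 0 < p.2 ∧ p.2 ≤ L)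
    (hbad : ∀ p ∈ F, η * (p.2 / L) ^ β * p.2 ^ (Module.finrank ℝ E + 4)
      < (Module.finrank ℝ E : ℝ) / 3 * J v p.1 p.2)
    (hdisj : (F : Set (E × ℝ)).PairwiseDisjoint fun p => closedBall p.1 p.2) :
    ∑ p ∈ F, (p.2 / L) ^ (d + β) ≤ Cd d * ((Mn v 0 (8 * L) - Mn v 0 (16 * L)) / η) := by
  have hm : 0 < Module.finrank ℝ E := by omega
  obtain ⟨ρ, hρ, hslope⟩ := exists_hasDerivAt_eq_slope (Mn v 0)
    (fun r => (-((Module.finrank ℝ E : ℝ) / 3 * J v 0 r / r ^ (Module.finrank ℝ E + 5))))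
    (show 8 * L < 16 * L by linarith)
    (fun r hr => (deriv_Mn hm v hv M hM 0 r (by linarith [hr.1])).continuousAt.continuousWithinAt)
    (fun r hr => deriv_Mn hm v hv M hM 0 r (by linarith [hr.1]))
  have hρ0 : 0 < ρ := by linarith [hρ.1]
  have hpos := positivity_lemma hm v hv M hM hsup (Finset.insertNone F)
    (fun o => Option.elim o (64 / 27 * (ρ ^ 6)⁻¹) fun p => -(p.2 ^ 6)⁻¹)
    (fun o => Option.elim o 0 fun p => p.1)
    (fun o => Option.elim o ρ fun p => p.2) ?_ ?_
  rotate_left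
  · intro o ho
    cases o with
    | none => simpa using hρ0
    | some p => exact (hF p (by simpa using ho)).2.1
  · intro x
    rw [Finset.sum_insertNone]
    simp only [Option.elim, neg_mul, Finset.sum_neg_distrib]
    have := kernel_compare F L ρ hL (by linarith [hρ.1]) hF hdisj x
    linarith
  rw [Finset.sum_insertNone] at hpos
  simp only [Option.elim, neg_mul, Finset.sum_neg_distrib] at hpos
  set m : ℝ := (Module.finrank ℝ E : ℝ) with hmdef
  have hm0 : 0 < m := by positivity
  set Δ := Mn v 0 (8 * L) - Mn v 0 (16 * L) with hΔ
  have s1 : m / 3 * J v 0 ρ = Δ / (8 * L) * ρ ^ (d + 7) := by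
    rw [hd] at hslope
    have : (Mn v 0 (16 * L) - Mn v 0 (8 * L)) / (16 * L - 8 * L) = -(Δ / (8 * L)) := by
      rw [hΔ]; ring
    rw [this, neg_inj, div_eq_iff (by positivity)] at hslope
    exact hslope
  have s2 : ∑ p ∈ F, η * L ^ d * (p.2 / L) ^ (d + β) ≤ ∑ p ∈ F, m / 3 * ((p.2 ^ 6)⁻¹ * J v p.1 p.2) := by
    apply Finset.sum_le_sum
    intro p hp
    obtain ⟨-, hp0, -⟩ := hF p hp
    have hb := hbad p hp
    rw [hd] at hb
    rw [Real.rpow_add (by positivity), Real.rpow_natCast]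
    calc η * L ^ d * ((p.2 / L) ^ d * (p.2 / L) ^ β)
        = (p.2 ^ 6)⁻¹ * (η * (p.2 / L) ^ β * p.2 ^ (d + 2 + 4)) := by
          rw [div_pow]; field_simp; ring
      _ ≤ (p.2 ^ 6)⁻¹ * (m / 3 * J v p.1 p.2) := by gcongr
      _ = _ := by ring
  have s3 : ∑ p ∈ F, m / 3 * ((p.2 ^ 6)⁻¹ * J v p.1 p.2) ≤ 64 / 27 * (ρ ^ 6)⁻¹ * (m / 3 * J v 0 ρ) := by
    rw [← Finset.mul_sum]
    calc _ ≤ m / 3 * (64 / 27 * (ρ ^ 6)⁻¹ * J v 0 ρ) := by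
          apply mul_le_mul_of_nonneg_left _ (by positivity); linarith
      _ = _ := by ring
  have hJ0 : 0 ≤ J v 0 ρ := by
    have := positivity_lemma hm v hv M hM hsup ({()} : Finset Unit) (fun _ => 1) (fun _ => 0)
      (fun _ => ρ) (by simpa using hρ0) (by intro x; simp; exact pow_nonneg (X_nonneg _ _ _) _)
    simpa using this
  have hΔ0 : 0 ≤ Δ := by
    have h1 : 0 ≤ Δ / (8 * L) * ρ ^ (d + 7) := by rw [← s1]; positivity
    have h2 := nonneg_of_mul_nonneg_left h1 (by positivity)
    have h3 : Δ = Δ / (8 * L) * (8 * L) := by field_simp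
    rw [h3]; positivity
  have s4 : 64 / 27 * (ρ ^ 6)⁻¹ * (m / 3 * J v 0 ρ) ≤ Cd d * L ^ d * Δ := by
    rw [s1]
    calc 64 / 27 * (ρ ^ 6)⁻¹ * (Δ / (8 * L) * ρ ^ (d + 7))
        = 64 / 27 * (Δ / (8 * L) * ρ ^ (d + 1)) := by
          rw [show d + 7 = 6 + (d + 1) by ring, pow_add]; field_simp
      _ ≤ 64 / 27 * (Δ / (8 * L) * (16 * L) ^ (d + 1)) := by
          have := hρ.2.le
          gcongr
      _ = _ := by unfold Cd; rw [mul_pow]; field_simp; ring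
  have s5 := s2.trans (s3.trans s4)
  rw [← Finset.mul_sum] at s5
  rw [mul_div_assoc', le_div_iff₀ hη]
  have hLd : 0 < L ^ d := by positivity
  apply le_of_mul_le_mul_left _ hLd
  nlinarith

/-- Covering of the bad set in one annulus. -/
lemma annulus (d : ℕ) (hd : Module.finrank ℝ E = d + 2) (v : E → ℝ) (hv : Continuous v) (M : ℝ)
    (hM : ∀ x, |v x| ≤ M)
    (hsup : ∀ x δ, 0 < δ → 0 ≤ ∫ y in ball (0 : E) δ, (v x - v (x - y)))
    (L η β : ℝ) (hL : 0 < L) (hη : 0 < η) (hβ : 0 < β) :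
    ∃ t : Set (E × ℝ), (∀ p ∈ t, L ≤ ‖p.1‖ ∧ 0 < p.2) ∧
      (∀ F : Finset (E × ℝ), (F : Set (E × ℝ)) ⊆ t →
        ∑ p ∈ F, (p.2 / L) ^ (d + β) ≤ Cd d * ((Mn v 0 (8 * L) - Mn v 0 (16 * L)) / η)) ∧
      ∀ z, L ≤ ‖z‖ → ‖z‖ < 2 * L → (∀ p ∈ t, z ∉ ball p.1 (6 * p.2)) →
        v z * c0 E ≤ Mn v z L + η / β := by
  have hm : 0 < Module.finrank ℝ E := by omega
  set T : Set (E × ℝ) := {p | L ≤ ‖p.1‖ ∧ ‖p.1‖ < 2 * L ∧ 0 < p.2 ∧ p.2 ≤ L ∧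
    η * (p.2 / L) ^ β * p.2 ^ (Module.finrank ℝ E + 4)
      < (Module.finrank ℝ E : ℝ) / 3 * J v p.1 p.2} with hT
  obtain ⟨t, htT, hdisj, hcov⟩ := Vitali.exists_disjoint_subfamily_covering_enlargement_closedBall
    T (fun p => p.1) (fun p => p.2) L (fun p hp => hp.2.2.2.1) 5 (by norm_num)
  refine ⟨t, fun p hp => ⟨(htT hp).1, (htT hp).2.2.1⟩, ?_, ?_⟩
  · intro F hF
    apply packing d hd v hv M hM hsup L η β hL hη F
    · intro p hp
      have := htT (hF hp)
      exact ⟨this.2.1, this.2.2.1, this.2.2.2.1⟩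
    · intro p hp
      exact (htT (hF hp)).2.2.2.2
    · exact hdisj.subset hF
  · intro z h1 h2 hz
    apply good_point hm v hv M hM z L η β hL hη.le hβ
    intro r hr hrL
    by_contra hcon
    push Not at hcon
    obtain ⟨p, hp, hsub⟩ := hcov (z, r) ⟨h1, h2, hr, hrL, hcon⟩
    have hzz : z ∈ closedBall p.1 (5 * p.2) := hsub (mem_closedBall_self hr.le)
    apply hz p hp
    have hp0 := (htT hp).2.2.1
    rw [mem_closedBall] at hzz
    rw [mem_ball]
    linarith

theorem main (d : ℕ) (hd : Module.finrank ℝ E = d + 2) (v : E → ℝ) (hv : Continuous v) (M : ℝ)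
    (hM : ∀ x, |v x| ≤ M) (hv0 : ∀ x, 0 ≤ v x)
    (hsup : ∀ x δ, 0 < δ → 0 ≤ ∫ y in ball (0 : E) δ, (v x - v (x - y)))
    (hinf : ∀ ε > 0, ∃ z, v z < ε) (q : ℝ) (hq : (d : ℝ) < q) :
    ∃ (x : ℕ → E) (r : ℕ → ℝ), (∀ k, x k ≠ 0) ∧ (∀ k, 0 < r k) ∧
      Summable (fun k => (r k / ‖x k‖) ^ q) ∧
      ∀ ε > (0 : ℝ), ∃ R > (0 : ℝ), ∀ z, R < ‖z‖ →
        (∀ k, z ∉ ball (x k) (r k)) → v z < ε := by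
  have hm : 0 < Module.finrank ℝ E := by omega
  have hnt : Nontrivial E := Module.nontrivial_of_finrank_pos hm
  set β := q - d with hβdef
  have hβ : 0 < β := by linarith
  have hqβ : (d : ℝ) + β = q := by ring
  have hq0 : 0 < q := lt_of_le_of_lt (Nat.cast_nonneg d) hq
  have hJ : ∀ z r, 0 < r → 0 ≤ J v z r := by
    intro z r hr
    have := positivity_lemma hm v hv M hM hsup ({()} : Finset Unit) (fun _ => 1) (fun _ => z)
      (fun _ => r) (by simpa using hr) (by intro x; simp; exact pow_nonneg (X_nonneg _ _ _) _)
    simpa using this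
  have hc0 : 0 < c0 E := c0_pos
  set b : ℕ → ℝ := fun j => Mn v 0 (8 * 2 ^ j) with hb
  have hb0 : ∀ j, 0 ≤ b j := fun j => Mn_nonneg v hv0 0 _ (by positivity)
  have hbs : ∀ j, Mn v 0 (16 * 2 ^ j) = b (j + 1) := by
    intro j; simp only [hb]; congr 1; ring
  have hbanti : ∀ j, b (j + 1) ≤ b j := by
    intro j
    apply Mn_anti hm v hv M hM hJ 0
    · simp
    · simp
    · rw [pow_succ]; have : (0:ℝ) < 2 ^ j := by positivity
      linarith
  have h2t : Filter.Tendsto (fun j : ℕ => (2 : ℝ) ^ j) Filter.atTop Filter.atTop :=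
    tendsto_pow_atTop_atTop_of_one_lt (by norm_num)
  have hbt : Filter.Tendsto b Filter.atTop (nhds 0) := by
    rw [Metric.tendsto_atTop']
    intro ε hε
    obtain ⟨z0, hz0⟩ := hinf (ε / (8 ^ (Module.finrank ℝ E + 4) * c0 E)) (by positivity)
    obtain ⟨N, hN⟩ := Filter.eventually_atTop.1 (h2t.eventually_ge_atTop ‖z0‖)
    refine ⟨N, fun j hj => ?_⟩
    rw [Real.dist_eq, sub_zero, abs_of_nonneg (hb0 j)]
    have h2j : (0:ℝ) < 2 ^ j := by positivity
    have := Mn_comp hm v hv M hM hv0 hJ 0 z0 (8 * 2 ^ j) (by positivity) (by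
      rw [zero_sub, norm_neg]; linarith [hN j hj.le])
    refine lt_of_le_of_lt this ?_
    rw [lt_div_iff₀ (by positivity)] at hz0
    linarith
  set η : ℕ → ℝ := fun j => √(b j) + (1 / 2) ^ j with hηdef
  have hη : ∀ j, 0 < η j := fun j => by positivity
  have hηt : Filter.Tendsto η Filter.atTop (nhds 0) := by
    have h1 := (Real.continuous_sqrt.tendsto 0).comp hbt
    rw [Real.sqrt_zero] at h1
    have h2 : Filter.Tendsto (fun j : ℕ => ((1:ℝ) / 2) ^ j) Filter.atTop (nhds 0) :=
      tendsto_pow_atTop_nhds_zero_of_lt_one (by norm_num) (by norm_num)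
    have := h1.add h2
    rw [add_zero] at this
    exact this
  choose t ht1 ht2 ht3 using fun j : ℕ => annulus d hd v hv M hM hsup (2 ^ j) (η j) β
    (by positivity) (hη j) hβ
  -- bounds
  set B : ℕ → ℝ := fun j => Cd d * (2 * (√(b j) - √(b (j + 1)))) with hB
  have hCd : 0 < Cd d := by unfold Cd; positivity
  have hsum : ∀ j, ∀ F : Finset (E × ℝ), (F : Set (E × ℝ)) ⊆ t j →
      ∑ p ∈ F, (p.2 / 2 ^ j) ^ q ≤ B j := by
    intro j F hF
    have := ht2 j F hF
    rw [hqβ] at this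
    refine this.trans ?_
    apply mul_le_mul_of_nonneg_left _ hCd.le
    rw [hbs, div_le_iff₀ (hη j)]
    change b j - b (j + 1) ≤ _
    have e1 := Real.sq_sqrt (hb0 j)
    have e2 := Real.sq_sqrt (hb0 (j + 1))
    have e3 := Real.sqrt_le_sqrt (hbanti j)
    have e4 := Real.sqrt_nonneg (b (j + 1))
    have e5 : √(b j) ≤ η j := by simp [hηdef]
    nlinarith [mul_nonneg (sub_nonneg.2 e3) (sub_nonneg.2 e5), mul_nonneg (sub_nonneg.2 e3) (sub_nonneg.2 e3)]
  have hBsum : Summable B := by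
    apply Summable.mul_left
    apply Summable.mul_left
    apply summable_of_sum_range_le (c := √(b 0))
    · intro j; exact sub_nonneg.2 (Real.sqrt_le_sqrt (hbanti j))
    · intro n
      rw [Finset.sum_range_sub']
      linarith [Real.sqrt_nonneg (b n)]
  obtain ⟨e, he⟩ := exists_norm_eq E (c := 1) zero_le_one
  -- index type
  let ι := (Σ j, t j) ⊕ ℕ
  let xx : ι → E := Sum.elim (fun s => s.2.1.1) (fun _ => e)
  let rr : ι → ℝ := Sum.elim (fun s => 6 * s.2.1.2) (fun k => (1 / 2) ^ k)
  have hxx : ∀ i, 0 < ‖xx i‖ := by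
    rintro (s | k)
    · have := (ht1 s.1 s.2.1 s.2.2).1
      exact lt_of_lt_of_le (by positivity) this
    · simp [xx, he]
  have hrr : ∀ i, 0 < rr i := by
    rintro (s | k)
    · have := (ht1 s.1 s.2.1 s.2.2).2
      simp only [rr, Sum.elim_inl]; positivity
    · simp only [rr, Sum.elim_inr]; positivity
  have hfib : ∀ j, ∀ F : Finset (t j), ∑ p ∈ F, (p.1.2 / 2 ^ j) ^ q ≤ B j := by
    intro j F
    have := hsum j (F.map (Function.Embedding.subtype _)) (by
      intro p hp
      simp only [Finset.coe_map, Function.Embedding.subtype_apply, Set.mem_image] at hp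
      obtain ⟨p', -, rfl⟩ := hp
      exact p'.2)
    rwa [Finset.sum_map] at this
  have hnn : ∀ j, ∀ p : t j, 0 ≤ (p.1.2 / 2 ^ j) ^ q := by
    intro j p
    have := (ht1 j p.1 p.2).2
    positivity
  have hsig : Summable (fun s : Σ j, t j => (s.2.1.2 / 2 ^ s.1) ^ q) := by
    refine (summable_sigma_of_nonneg (f := fun s : Σ j, t j => (s.2.1.2 / 2 ^ s.1) ^ q)
      (fun s => hnn s.1 s.2)).2 ?_
    have hs : ∀ j, Summable fun p : t j => (p.1.2 / 2 ^ j) ^ q := fun j =>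
      summable_of_sum_le (hnn j) (hfib j)
    refine ⟨hs, ?_⟩
    apply Summable.of_nonneg_of_le _ _ hBsum
    · intro j; exact tsum_nonneg (hnn j)
    · intro j; exact (hs j).tsum_le_of_sum_le (hfib j)
  have hS : Summable (fun i : ι => (rr i / ‖xx i‖) ^ q) := by
    apply Summable.sum
    · apply Summable.of_nonneg_of_le _ _ (hsig.mul_left (6 ^ q))
      · intro s
        have := hxx (Sum.inl s)
        have := hrr (Sum.inl s)
        simp only [Function.comp]
        positivity
      · intro s
        have h1 := (ht1 s.1 s.2.1 s.2.2).1
        have h2 := (ht1 s.1 s.2.1 s.2.2).2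
        simp only [Function.comp, xx, rr, Sum.elim_inl]
        rw [← Real.mul_rpow (by norm_num) (by positivity), ← mul_div_assoc]
        gcongr
    · have : ((fun i : ι => (rr i / ‖xx i‖) ^ q) ∘ Sum.inr) = fun k : ℕ => (((1:ℝ) / 2) ^ q) ^ k := by
        ext k
        simp only [Function.comp, xx, rr, Sum.elim_inr, he, div_one]
        rw [← Real.rpow_natCast, ← Real.rpow_natCast, ← Real.rpow_mul (by norm_num),
          ← Real.rpow_mul (by norm_num), mul_comm]
      rw [this]
      apply summable_geometric_of_lt_one (by positivity)
      exact Real.rpow_lt_one (by norm_num) (by norm_num) hq0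
  have hcount : Countable ι := by
    have := hS.countable_support
    have hu : Function.support (fun i : ι => (rr i / ‖xx i‖) ^ q) = Set.univ := by
      ext i
      have := hxx i
      have := hrr i
      have : 0 < (rr i / ‖xx i‖) ^ q := by positivity
      simp [this.ne']
    rw [hu] at this
    exact Set.countable_univ_iff.1 this
  have hinfin : Infinite ι := inferInstanceAs (Infinite ((Σ j, t j) ⊕ ℕ))
  obtain ⟨hden⟩ := nonempty_denumerable_iff.2 ⟨hcount, hinfin⟩
  let φ : ι ≃ ℕ := Denumerable.eqv ι
  refine ⟨xx ∘ φ.symm, rr ∘ φ.symm, fun k => norm_pos_iff.1 (hxx _), fun k => hrr _, ?_, ?_⟩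
  · exact (φ.symm.summable_iff (f := fun i : ι => (rr i / ‖xx i‖) ^ q)).2 hS
  · intro ε hε
    obtain ⟨z0, hz0⟩ := hinf (ε / 2 / 8 ^ (Module.finrank ℝ E + 4)) (by positivity)
    obtain ⟨N1, hN1⟩ := Filter.eventually_atTop.1 (h2t.eventually_ge_atTop ‖z0‖)
    obtain ⟨N2, hN2⟩ := Filter.eventually_atTop.1
      (hηt.eventually_lt_const (show 0 < ε / 2 * c0 E * β by positivity))
    refine ⟨2 ^ (max N1 N2), by positivity, fun z hz hout => ?_⟩
    have hz1 : 1 ≤ ‖z‖ := (one_le_pow₀ (by norm_num)).trans hz.le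
    obtain ⟨j, hj1, hj2⟩ := exists_nat_pow_near hz1 (show (1:ℝ) < 2 by norm_num)
    have hjN : max N1 N2 ≤ j := by
      have := (pow_lt_pow_iff_right₀ (show (1:ℝ) < 2 by norm_num)).1 (hz.trans hj2)
      omega
    have h1 := ht3 j z hj1 (by rw [pow_succ] at hj2; linarith) (by
      intro p hp hmem
      have := hout (φ (Sum.inl ⟨j, ⟨p, hp⟩⟩))
      simp only [Function.comp, Equiv.symm_apply_apply] at this
      exact this hmem)
    have h2 := Mn_comp hm v hv M hM hv0 hJ z z0 (2 ^ j) (by positivity) (by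
      have a := norm_sub_le z z0
      have b := hN1 j (le_of_max_le_left hjN)
      rw [pow_succ] at hj2
      linarith)
    have h3 := hN2 j (le_of_max_le_right hjN)
    rw [← div_lt_iff₀ hβ] at h3
    rw [lt_div_iff₀ (by positivity)] at hz0
    have h4 : v z * c0 E < ε * c0 E := by
      have := mul_lt_mul_of_pos_right hz0 hc0
      linarith
    exact lt_of_mul_lt_mul_right h4 hc0.le

lemma sup_of_mean (u : E → ℝ) (hu : Continuous u) (a : ℝ)
    (hsh : ∀ z r, 0 < r → u z ≤ ⨍ w in ball z r, u w) (x : E) (δ : ℝ) (hδ : 0 < δ) :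
    0 ≤ ∫ y in ball (0 : E) δ, ((a - u x) - (a - u (x - y))) := by
  have h := hsh x δ hδ
  rw [setAverage_eq, smul_eq_mul] at h
  have hV : 0 < volume.real (ball x δ) :=
    ENNReal.toReal_pos (measure_ball_pos _ _ hδ).ne' measure_ball_lt_top.ne
  rw [← div_eq_inv_mul, le_div_iff₀ hV] at h
  have e : ∫ w in ball x δ, u w = ∫ y in ball (0 : E) δ, u (x - y) := by
    have hp := (Measure.measurePreserving_sub_left (volume : Measure E) x).setIntegral_preimage_emb
      (MeasurableEquiv.subLeft x).measurableEmbedding u (ball x δ)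
    rw [← hp]
    congr 2
    ext y
    simp [dist_eq_norm]
  have hV2 : volume.real (ball x δ) = volume.real (ball (0 : E) δ) := by
    unfold Measure.real
    rw [Measure.addHaar_ball_center]
  have e2 : ∫ y in ball (0 : E) δ, ((a - u x) - (a - u (x - y)))
      = ∫ y in ball (0 : E) δ, (u (x - y) - u x) := by congr 1; ext y; ring
  rw [e2, integral_sub (intOn (by fun_prop) _ _) (intOn (by fun_prop) _ _), ← e,
    setIntegral_const, smul_eq_mul, ← hV2]
  linarith

end CartanAux

/-- **Cartan's lemma.** A bounded continuous subharmonic function `u` on `ℂⁿ` (`n ≥ 2`) with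
`a = sup u` tends to `a` at infinity outside a countable union of balls `B(x_k, r_k)` with
`Σ (r_k/‖x_k‖)^q < ∞`, for any fixed `q > 2n - 2`. -/
theorem cartan_lemma
    (n : ℕ) (hn : 2 ≤ n)
    (u : EuclideanSpace ℂ (Fin n) → ℝ) (a q : ℝ)
    (hq : (2 * n : ℝ) - 2 < q)
    (hcont : Continuous u)
    (hbounded : ∃ M : ℝ, ∀ z, |u z| ≤ M)
    (hsh : ∀ z r, 0 < r → u z ≤ ⨍ w in ball z r, u w)
    (hsup : IsLUB (Set.range u) a) :
    ∃ (x : ℕ → EuclideanSpace ℂ (Fin n)) (r : ℕ → ℝ),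
      (∀ k, x k ≠ 0) ∧ (∀ k, 0 < r k) ∧
      Summable (fun k => (r k / ‖x k‖) ^ q) ∧
      ∀ ε > (0 : ℝ), ∃ R > (0 : ℝ), ∀ z, R < ‖z‖ →
        (∀ k, z ∉ ball (x k) (r k)) → a - ε < u z := by
  obtain ⟨M, hM⟩ := hbounded
  have hfin : Module.finrank ℝ (EuclideanSpace ℂ (Fin n)) = (2 * n - 2) + 2 := by
    have h := Module.finrank_mul_finrank ℝ ℂ (EuclideanSpace ℂ (Fin n))
    rw [Complex.finrank_real_complex, finrank_euclideanSpace_fin] at h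
    rw [← h]
    omega
  have hq2 : ((2 * n - 2 : ℕ) : ℝ) < q := by
    rw [Nat.cast_sub (by omega)]
    push_cast
    exact hq
  obtain ⟨x, r, h1, h2, h3, h4⟩ := CartanAux.main (2 * n - 2) hfin (fun z => a - u z)
    (by fun_prop) (|a| + M)
    (fun z => (abs_sub a (u z)).trans (by have := hM z; linarith))
    (fun z => sub_nonneg.2 (hsup.1 ⟨z, rfl⟩))
    (fun z δ hδ => CartanAux.sup_of_mean u hcont a hsh z δ hδ)
    (by
      intro ε hε
      obtain ⟨_, ⟨z, rfl⟩, hz⟩ := (lt_isLUB_iff hsup).1 (show a - ε < a by linarith)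
      exact ⟨z, by linarith⟩) q hq2
  refine ⟨x, r, h1, h2, h3, ?_⟩
  intro ε hε
  obtain ⟨R, hR, h⟩ := h4 ε hε
  refine ⟨R, hR, fun z hz hk => ?_⟩
  have := h z hz hk
  linarith
end
end
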